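/- Suppose n is even. Fix an integer m ≥ 2, a real α with 1/(n−Δ) < α < 1/(n−1), ε > 0, and S > 0. Define I(s) = (1/(2π))·lim_{R→∞} ∫_{−R}^{R} e(y^n)·sin(2πsy)·(dy/y) (the integrand being extended by its limiting value 2πs·e(0) at y = 0). Then there exist C > 0 and t₁ > 0 such that for every t ∈ (0, t₁] which either (i) is irrational and lies in ℬ_{m,α}, or (ii) is a rational with reduced form u/q satisfying t ≤ m·q^{−1/(α(n−Δ))}, for every s ∈ [−S, S] and each sign σ ∈ {+1, −1}, the limit I(s) exists, the limit defining U(t, σγ + s·t^{1/n}) exists, and |U(t, σγ + s·t^{1/n}) − (1/2 − σ·I(s))| ≤ C·( t^{αΔ/2^{n−1} − ε} + t^{αn−1} ). -/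

import Mathlib

open Filter Finset MeasureTheory

/-- An approximant to a real number `t`: a reduced fraction `u/q` with `q ≥ 1`
and `|t - u/q| < 1/q²`. -/
def IsApproximant (t : ℝ) (u q : ℤ) : Prop :=
  1 ≤ q ∧ Int.gcd u q = 1 ∧ |t - (u : ℝ) / (q : ℝ)| < 1 / (q : ℝ) ^ 2

/-- The set `𝒜_m`: `t ∈ [0,1]` such that for every real `M ≥ m` there is an
approximant `u/q` to `t` with `M^Δ < q ≤ M^(n-Δ)`. -/
def Aset (n : ℕ) (Δ : ℝ) (m : ℤ) : Set ℝ :=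
  {t | t ∈ Set.Icc (0 : ℝ) 1 ∧ ∀ M : ℝ, (m : ℝ) ≤ M →
    ∃ u q : ℤ, IsApproximant t u q ∧ M ^ Δ < (q : ℝ) ∧ (q : ℝ) ≤ M ^ ((n : ℝ) - Δ)}

/-- The set `𝒜`: `t ∈ [0,1]` such that for all sufficiently large `M` there is an
approximant `u/q` to `t` with `M^Δ < q ≤ M^(n-Δ)`. -/
def Aall (n : ℕ) (Δ : ℝ) : Set ℝ :=
  {t | t ∈ Set.Icc (0 : ℝ) 1 ∧ ∃ M₀ : ℝ, ∀ M : ℝ, M₀ ≤ M →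
    ∃ u q : ℤ, IsApproximant t u q ∧ M ^ Δ < (q : ℝ) ∧ (q : ℝ) ≤ M ^ ((n : ℝ) - Δ)}

/-- The set `ℬ_{m,α}`: `t ∈ (0,1]` such that for every real `M ≥ m·t^(-α)` there is an
approximant `u/q` to `t` with `M^Δ < q ≤ M^(n-Δ)`. -/
def Bset (n : ℕ) (Δ : ℝ) (m : ℤ) (α : ℝ) : Set ℝ :=
  {t | t ∈ Set.Ioc (0 : ℝ) 1 ∧ ∀ M : ℝ, (m : ℝ) * t ^ (-α) ≤ M →
    ∃ u q : ℤ, IsApproximant t u q ∧ M ^ Δ < (q : ℝ) ∧ (q : ℝ) ≤ M ^ ((n : ℝ) - Δ)}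

/-- `e(ξ) = exp(2πiξ)`. -/
noncomputable def ee (ξ : ℝ) : ℂ := Complex.exp (2 * Real.pi * Complex.I * ξ)

/-- The partial sum defining `U(t,x)`:
`2γ + Σ_{0<|k|≤K} (sin(2πγk)/(πk))·e(t·k^n + x·k)`. -/
noncomputable def Upartial (n : ℕ) (γ t x : ℝ) (K : ℕ) : ℂ :=
  Complex.ofReal (2 * γ) +
    ∑ k ∈ (Finset.Icc (-(K : ℤ)) (K : ℤ)).filter (· ≠ 0),
      Complex.ofReal (Real.sin (2 * Real.pi * γ * (k : ℝ)) / (Real.pi * (k : ℝ))) *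
        ee (t * (k : ℝ) ^ n + x * (k : ℝ))

/-- The truncated integral `∫_{−R}^{R} e(y^n)·sin(2πsy)·dy/y`, the integrand extended by its
limiting value `2πs·e(0) = 2πs` at `y = 0`. -/
noncomputable def Iint (n : ℕ) (s R : ℝ) : ℂ :=
  ∫ y in (-R)..R,
    (if y = 0 then Complex.ofReal (2 * Real.pi * s)
      else ee (y ^ n) * Complex.ofReal (Real.sin (2 * Real.pi * s * y)) / Complex.ofReal y)

open scoped Real ComplexConjugate

/-!
Let `V(ω) = ∑_{k ≥ 1} e(t k ^ n) sin(2πωk) / (πk)`, a sawtooth series twisted by a degree `n`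
phase. For even `n`, pairing `k` with `-k` gives
`U(t, σγ + s t^{1/n}) = 2γ + V(2γ + σ s t^{1/n}) - V(σ s t^{1/n})`.
Cut both series at `N ≈ m t^{-α}`. Beyond `N` the Diophantine hypothesis on `t`, Weyl's inequality
and summation by parts bound the tail by `t^{αΔ/2^{n-1} - ε}`; for rational `t = u/q` and sums
longer than `q^{1/Δ}`, Weyl's inequality is replaced by periodicity modulo `q` and evenness. Up to
`N` the phase has slope `t n N^{n-1} ≪ 1` since `α < 1/(n-1)`. Hence the first sum is within
`O(t^{1/n})` of the untwisted sawtooth, by summation by parts, and the second one within the same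
error of the integral `I(s)` truncated at `N t^{1/n}`, by the van der Corput comparison of sums with
integrals. Completing that integral costs `t^{αn - 1}`.
-/

/-! ### The character `ee` -/

lemma ee_eq_exp_mul_I (a : ℝ) : ee a = Complex.exp ((2 * π * a : ℝ) * Complex.I) := by
  unfold ee; push_cast; ring_nf

lemma ee_add (a b : ℝ) : ee (a + b) = ee a * ee b := by
  unfold ee; rw [← Complex.exp_add]; push_cast; ring_nf

lemma ee_zero : ee 0 = 1 := by simp [ee]

lemma norm_ee (a : ℝ) : ‖ee a‖ = 1 := by
  rw [ee_eq_exp_mul_I]; exact Complex.norm_exp_ofReal_mul_I _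

lemma ee_neg (a : ℝ) : ee (-a) = conj (ee a) := by
  rw [ee_eq_exp_mul_I, ee_eq_exp_mul_I, ← Complex.exp_conj]; simp [-Complex.ofReal_mul]

lemma ee_intCast (k : ℤ) : ee k = 1 := by
  unfold ee
  rw [Complex.exp_eq_one_iff]
  exact ⟨k, by push_cast; ring⟩

lemma ee_eq_cos_add_sin_mul_I (a : ℝ) :
    ee a = (Real.cos (2 * π * a) : ℂ) + (Real.sin (2 * π * a) : ℂ) * Complex.I := by
  rw [ee_eq_exp_mul_I, Complex.exp_mul_I]; simp

lemma im_ee (a : ℝ) : (ee a).im = Real.sin (2 * π * a) := by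
  rw [ee_eq_exp_mul_I, Complex.exp_ofReal_mul_I_im]

lemma re_ee (a : ℝ) : (ee a).re = Real.cos (2 * π * a) := by
  rw [ee_eq_exp_mul_I, Complex.exp_ofReal_mul_I_re]

lemma ofReal_sin_eq_ee_sub (a : ℝ) :
    (Real.sin (2 * π * a) : ℂ) = (ee a - ee (-a)) / (2 * Complex.I) := by
  rw [ee_eq_cos_add_sin_mul_I, ee_eq_cos_add_sin_mul_I, mul_neg, Real.cos_neg, Real.sin_neg]
  field_simp; push_cast; ring

lemma norm_ee_sub_one (a : ℝ) : ‖ee a - 1‖ = 2 * |Real.sin (π * a)| := by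
  rw [ee_eq_exp_mul_I, mul_comm _ Complex.I, Complex.norm_exp_I_mul_ofReal_sub_one, norm_mul,
    Real.norm_two, Real.norm_eq_abs]
  congr 3; ring

lemma norm_ee_sub_ee_le (a b : ℝ) : ‖ee a - ee b‖ ≤ 2 * π * |a - b| := by
  have hfactor : ee a - ee b = (ee (a - b) - 1) * ee b := by
    rw [sub_mul, ← ee_add, sub_add_cancel, one_mul]
  have hsin : |Real.sin (π * (a - b))| ≤ |π * (a - b)| := Real.abs_sin_le_abs
  rw [abs_mul, abs_of_pos Real.pi_pos] at hsin
  rw [hfactor, norm_mul, norm_ee, mul_one, norm_ee_sub_one]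
  linarith

lemma continuous_ee : Continuous ee := by
  unfold ee; fun_prop

lemma hasDerivAt_ee (a : ℝ) : HasDerivAt ee (2 * π * Complex.I * ee a) a := by
  have hlin : HasDerivAt (fun x : ℝ => 2 * π * Complex.I * (x : ℂ)) (2 * π * Complex.I) a := by
    simpa using (Complex.ofRealCLM.hasDerivAt (x := a)).const_mul (2 * π * Complex.I)
  exact hlin.cexp.congr_deriv (mul_comm _ _)

/-! ### Abel summation -/

lemma sum_Ico_mul_eq_sub {R : Type*} [CommRing R] (a w : ℕ → R) {M K : ℕ} (hMK : M ≤ K) :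
    ∑ k ∈ Ico M K, a k * w k = (∑ k ∈ Ico M K, a k) * w K -
      ∑ k ∈ Ico M K, (∑ j ∈ Ico M (k + 1), a j) * (w (k + 1) - w k) := by
  induction K, hMK using Nat.le_induction with
  | base => simp
  | succ K hK ih =>
    rw [sum_Ico_succ_top hK, sum_Ico_succ_top hK (f := fun k => (∑ j ∈ Ico M (k + 1), a j) * _), ih,
      sum_Ico_succ_top hK]
    ring

lemma norm_sum_Ico_mul_le_of_norm_sum_le {a w : ℕ → ℂ} {M K : ℕ} (hMK : M ≤ K) {B : ℝ}
    (hB : ∀ j, M ≤ j → j ≤ K → ‖∑ k ∈ Ico M j, a k‖ ≤ B) :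
    ‖∑ k ∈ Ico M K, a k * w k‖ ≤ B * (‖w K‖ + ∑ k ∈ Ico M K, ‖w (k + 1) - w k‖) := by
  rw [sum_Ico_mul_eq_sub a w hMK, mul_add, mul_sum]
  refine (norm_sub_le _ _).trans (add_le_add ?_ ((norm_sum_le _ _).trans (sum_le_sum ?_)))
  · rw [norm_mul]
    gcongr
    exact hB K hMK le_rfl
  · intro k hk
    rw [mem_Ico] at hk
    rw [norm_mul]
    gcongr
    exact hB _ (by lia) (by lia)

lemma norm_sum_Ico_mul_inv_le_of_norm_sum_le {a : ℕ → ℂ} {M K : ℕ} (hM : 1 ≤ M) (hMK : M ≤ K)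
    {B : ℝ} (hB : ∀ j, M ≤ j → j ≤ K → ‖∑ k ∈ Ico M j, a k‖ ≤ B) :
    ‖∑ k ∈ Ico M K, a k * (k : ℂ)⁻¹‖ ≤ B / M := by
  have hvar : ∀ k ∈ Ico M K, ‖((k + 1 : ℕ) : ℂ)⁻¹ - (k : ℂ)⁻¹‖ =
      -((k + 1 : ℕ) : ℝ)⁻¹ - -(k : ℝ)⁻¹ := by
    intro k hk
    have hk0 : (0 : ℝ) < k := by exact_mod_cast hM.trans (mem_Ico.mp hk).1
    rw [show ((k + 1 : ℕ) : ℂ)⁻¹ - (k : ℂ)⁻¹ = ((((k + 1 : ℕ) : ℝ)⁻¹ - (k : ℝ)⁻¹ : ℝ) : ℂ) by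
      push_cast; ring, Complex.norm_real, Real.norm_eq_abs, abs_sub_comm, abs_of_nonneg]
    · ring
    · exact sub_nonneg.mpr (inv_anti₀ hk0 (by push_cast; linarith))
  refine (norm_sum_Ico_mul_le_of_norm_sum_le hMK hB).trans (le_of_eq ?_)
  rw [sum_congr rfl hvar, sum_Ico_sub (fun k : ℕ => -(k : ℝ)⁻¹) hMK]
  simp only [norm_inv, RCLike.norm_natCast]
  ring

/-! ### Weyl differencing -/

/-- A majorant of `min N (1 / |sin (π * x)|)`, hence of every geometric sum of ratio `ee x` with at
most `N` terms; unlike `1 / |sin (π * x)|` it is meaningful where the sine vanishes. -/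
noncomputable def geomMajorant (N : ℕ) (x : ℝ) : ℝ := 2 * N / (1 + N * |Real.sin (π * x)|)

lemma geomMajorant_nonneg (N : ℕ) (x : ℝ) : 0 ≤ geomMajorant N x := by
  unfold geomMajorant; positivity

lemma geomMajorant_neg (N : ℕ) (x : ℝ) : geomMajorant N (-x) = geomMajorant N x := by
  simp only [geomMajorant, mul_neg, Real.sin_neg, abs_neg]

lemma geomMajorant_le_two_mul (N : ℕ) (x : ℝ) : geomMajorant N x ≤ 2 * N :=
  div_le_self (by positivity) (le_add_of_nonneg_right (by positivity))

lemma geomMajorant_le_two_div (N : ℕ) {x v : ℝ} (hv : 0 < v) (h : v ≤ |Real.sin (π * x)|) :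
    geomMajorant N x ≤ 2 / v := by
  unfold geomMajorant
  rw [div_le_div_iff₀ (by positivity) hv]
  have : (N : ℝ) * v ≤ N * |Real.sin (π * x)| := by gcongr
  linarith

lemma le_geomMajorant {N : ℕ} {x b : ℝ} (hN : b ≤ N) (hx : b * |Real.sin (π * x)| ≤ 1) :
    b ≤ geomMajorant N x := by
  unfold geomMajorant
  rw [le_div_iff₀ (by positivity)]
  have : (N : ℝ) * (b * |Real.sin (π * x)|) ≤ N * 1 := by gcongr
  linarith

lemma sum_Ico_ee_linear_mul (A c : ℝ) {a b : ℤ} (hab : a ≤ b) :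
    (∑ k ∈ Ico a b, ee (A * k + c)) * (ee A - 1) = ee (A * b + c) - ee (A * a + c) := by
  induction b, hab using Int.leInduction with
  | base => simp
  | succ b hb ih =>
    have hsucc : ee (A * ((b + 1 : ℤ) : ℝ) + c) = ee (A * b + c) * ee A := by
      rw [← ee_add]; push_cast; ring_nf
    rw [← insert_Ico_right_eq_Ico_add_one hb, sum_insert right_notMem_Ico, add_mul, ih, hsucc]
    ring

lemma norm_sum_Ico_ee_linear_le (A c : ℝ) {a b : ℤ} {N : ℕ} (hab : b - a ≤ N) :
    ‖∑ k ∈ Ico a b, ee (A * k + c)‖ ≤ geomMajorant N A := by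
  apply le_geomMajorant
  · refine (norm_sum_le _ _).trans ?_
    simp only [norm_ee, sum_const, Int.card_Ico, nsmul_eq_mul, mul_one]
    exact_mod_cast (by lia : (b - a).toNat ≤ N)
  · rcases le_total b a with h | h
    · simp [Ico_eq_empty_of_le h]
    have htwo : ‖∑ k ∈ Ico a b, ee (A * k + c)‖ * (2 * |Real.sin (π * A)|) ≤ 1 + 1 := by
      rw [← norm_ee_sub_one, ← norm_mul, sum_Ico_ee_linear_mul A c h]
      refine (norm_sub_le _ _).trans ?_
      rw [norm_ee, norm_ee]
    linarith

lemma norm_sum_Ico_ee_sq_le (f : ℤ → ℝ) {a b : ℤ} {N : ℕ} (hab : b - a ≤ N) :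
    ‖∑ k ∈ Ico a b, ee (f k)‖ ^ 2 ≤ ∑ h ∈ Ioo (-(N : ℤ)) N,
      ‖∑ k ∈ Ico (max a (a - h)) (min b (b - h)), ee (f (k + h) - f k)‖ := by
  have hexpand : (∑ k ∈ Ico a b, ee (f k)) * conj (∑ k ∈ Ico a b, ee (f k)) =
      ∑ h ∈ Ioo (-(N : ℤ)) N,
        ∑ k ∈ Ico (max a (a - h)) (min b (b - h)), ee (f (k + h) - f k) := by
    have hshift : ∀ h, Ico (max a (a - h)) (min b (b - h)) = {k ∈ Ico a b | k + h ∈ Ico a b} := by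
      intro h; ext k; simp only [mem_Ico, mem_filter]; lia
    simp only [hshift, sum_filter]
    rw [map_sum, mul_comm, sum_mul_sum, sum_comm (s := Ioo (-(N : ℤ)) N)]
    refine sum_congr rfl fun k hk => ?_
    rw [← sum_filter]
    refine sum_nbij' (fun l => l - k) (fun h => k + h) ?_ (by simp) (by simp) (by simp) ?_
    · intro l hl
      simp only [mem_filter, mem_Ioo, mem_Ico] at hl hk ⊢
      lia
    · intro l _
      rw [add_sub_cancel, ← ee_neg, ← ee_add, neg_add_eq_sub]
  calc ‖∑ k ∈ Ico a b, ee (f k)‖ ^ 2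
      = ‖(∑ k ∈ Ico a b, ee (f k)) * conj (∑ k ∈ Ico a b, ee (f k))‖ := by
        rw [norm_mul, RCLike.norm_conj, sq]
    _ ≤ _ := by rw [hexpand]; exact norm_sum_le _ _

lemma sum_pow_mul_le_pow_mul_sum_pow {ι : Type*} {s : Finset ι} {f : ι → ℝ} {c : ℝ} {p : ℕ}
    (hp : p ≠ 0) (hf : ∀ i ∈ s, 0 ≤ f i) (hc : (#s : ℝ) ≤ c) :
    (∑ i ∈ s, f i) ^ p * c ≤ c ^ p * ∑ i ∈ s, f i ^ p := by
  obtain ⟨p, rfl⟩ := Nat.exists_eq_succ_of_ne_zero hp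
  have hc0 : 0 ≤ c := (Nat.cast_nonneg _).trans hc
  have hsum : 0 ≤ ∑ i ∈ s, f i ^ (p + 1) := sum_nonneg fun i hi => pow_nonneg (hf i hi) _
  calc (∑ i ∈ s, f i) ^ (p + 1) * c
      ≤ ((#s : ℝ) ^ p * ∑ i ∈ s, f i ^ (p + 1)) * c := by
        gcongr; exact pow_sum_le_card_mul_sum_pow hf p
    _ ≤ (c ^ p * ∑ i ∈ s, f i ^ (p + 1)) * c := by gcongr
    _ = c ^ (p + 1) * ∑ i ∈ s, f i ^ (p + 1) := by ring

/-- The sum of `geomMajorant N ((d + 1)! * h₁ ⋯ h_d * A)` over `|hᵢ| < N`: what is left of an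
exponential sum of length `N` over a polynomial of degree `d + 1` with leading coefficient `A`
after `d` Weyl differencings. -/
noncomputable def weylMajorant (N : ℕ) : ℕ → ℝ → ℝ
  | 0, A => geomMajorant N A
  | d + 1, A => ∑ h ∈ Ioo (-(N : ℤ)) N, weylMajorant N d ((d + 2) * h * A)

section Polynomial

open Polynomial

lemma natDegree_taylor_sub_le {d : ℕ} {p : ℝ[X]} (hp : p.natDegree ≤ d + 1) (h : ℝ) :
    (taylor h p - p).natDegree ≤ d := by
  rw [natDegree_le_iff_coeff_eq_zero]
  intro j hj
  have hdeg := natDegree_hasseDeriv_le p j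
  rw [coeff_sub, taylor_coeff, eval_eq_sum_range' (n := 1) (by lia)]
  simp [hasseDeriv_coeff]

lemma coeff_taylor_sub {d : ℕ} {p : ℝ[X]} (hp : p.natDegree ≤ d + 1) (h : ℝ) :
    (taylor h p - p).coeff d = (d + 1) * h * p.coeff (d + 1) := by
  have hdeg := natDegree_hasseDeriv_le p d
  rw [coeff_sub, taylor_coeff, eval_eq_sum_range' (n := 2) (by lia)]
  simp only [hasseDeriv_coeff, sum_range_succ, add_comm 1 d]
  simp
  ring

theorem norm_sum_ee_eval_pow_le (N d : ℕ) {p : ℝ[X]} (hp : p.natDegree ≤ d + 1) {a b : ℤ}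
    (hab : b - a ≤ N) :
    ‖∑ k ∈ Ico a b, ee (p.eval (k : ℝ))‖ ^ 2 ^ d * (2 * N : ℝ) ^ (d + 1) ≤
      (2 * N : ℝ) ^ 2 ^ d * weylMajorant N d (p.coeff (d + 1)) := by
  induction d generalizing p a b with
  | zero =>
    have hlin : ∀ k : ℤ, p.eval (k : ℝ) = p.coeff 1 * k + p.coeff 0 := by
      intro k
      rw [eval_eq_sum_range' (p := p) (n := 2) (by lia)]
      simp [sum_range_succ, add_comm]
    simp only [hlin, weylMajorant, pow_zero, pow_one, zero_add]
    rw [mul_comm]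
    gcongr
    exact norm_sum_Ico_ee_linear_le _ _ hab
  | succ d ih =>
    set T : ℤ → ℝ := fun h =>
      ‖∑ k ∈ Ico (max a (a - h)) (min b (b - h)), ee ((taylor (h : ℝ) p - p).eval (k : ℝ))‖
    have hsq : ‖∑ k ∈ Ico a b, ee (p.eval (k : ℝ))‖ ^ 2 ≤ ∑ h ∈ Ioo (-(N : ℤ)) N, T h := by
      simpa [T, taylor_eval] using norm_sum_Ico_ee_sq_le (fun k : ℤ => p.eval (k : ℝ)) hab
    have hcard : ((#(Ioo (-(N : ℤ)) N) : ℕ) : ℝ) ≤ 2 * N := by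
      rw [Int.card_Ioo]
      exact_mod_cast (by lia : ((N : ℤ) - -N - 1).toNat ≤ 2 * N)
    have hT : ∀ h ∈ Ioo (-(N : ℤ)) N, T h ^ 2 ^ d * (2 * N : ℝ) ^ (d + 1) ≤
        (2 * N : ℝ) ^ 2 ^ d * weylMajorant N d ((d + 2) * h * p.coeff (d + 2)) := by
      intro h _
      have := ih (natDegree_taylor_sub_le hp h) (a := max a (a - h)) (b := min b (b - h)) (by lia)
      rw [coeff_taylor_sub hp h] at this
      convert! this using 3
      push_cast; ring
    calc ‖∑ k ∈ Ico a b, ee (p.eval (k : ℝ))‖ ^ 2 ^ (d + 1) * (2 * N : ℝ) ^ (d + 1 + 1)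
        = (‖∑ k ∈ Ico a b, ee (p.eval (k : ℝ))‖ ^ 2) ^ 2 ^ d * (2 * N) * (2 * N : ℝ) ^ (d + 1) := by
          rw [← pow_mul, pow_succ' 2 d]; ring
      _ ≤ (∑ h ∈ Ioo (-(N : ℤ)) N, T h) ^ 2 ^ d * (2 * N) * (2 * N : ℝ) ^ (d + 1) := by gcongr
      _ ≤ (2 * N : ℝ) ^ 2 ^ d * (∑ h ∈ Ioo (-(N : ℤ)) N, T h ^ 2 ^ d) * (2 * N : ℝ) ^ (d + 1) := by
          exact mul_le_mul_of_nonneg_right (sum_pow_mul_le_pow_mul_sum_pow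
            (pow_ne_zero _ two_ne_zero) (fun _ _ => norm_nonneg _) hcard) (by positivity)
      _ = (2 * N : ℝ) ^ 2 ^ d * ∑ h ∈ Ioo (-(N : ℤ)) N, (T h ^ 2 ^ d * (2 * N : ℝ) ^ (d + 1)) := by
          rw [← sum_mul]; ring
      _ ≤ (2 * N : ℝ) ^ 2 ^ d * ∑ h ∈ Ioo (-(N : ℤ)) N,
            ((2 * N : ℝ) ^ 2 ^ d * weylMajorant N d ((d + 2) * h * p.coeff (d + 2))) := by
          exact mul_le_mul_of_nonneg_left (sum_le_sum hT) (by positivity)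
      _ = _ := by rw [← mul_sum, weylMajorant]; ring

end Polynomial

/-! ### The divisor bound -/

lemma add_one_le_const_mul_rpow {η : ℝ} (hη : 0 < η) {x : ℝ} (hx : 2 ≤ x) (e : ℕ) :
    (e : ℝ) + 1 ≤ (1 + 1 / (η * Real.log 2)) * (x ^ e) ^ η := by
  have : 0 < Real.log 2 := Real.log_pos (by norm_num)
  have hexp : Real.log 2 * (η * e) + 1 ≤ (x ^ e) ^ η :=
    calc Real.log 2 * (η * e) + 1 ≤ (2 : ℝ) ^ (η * e) := by
          rw [Real.rpow_def_of_pos (by norm_num)]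
          exact Real.add_one_le_exp _
      _ = ((2 : ℝ) ^ e) ^ η := by
          rw [mul_comm, Real.rpow_mul (by norm_num), Real.rpow_natCast]
      _ ≤ (x ^ e) ^ η := by gcongr
  calc (e : ℝ) + 1
      ≤ Real.log 2 * (η * e) + 1 / (η * Real.log 2) + (e + 1) := by
        have : 0 ≤ Real.log 2 * (η * e) + 1 / (η * Real.log 2) := by positivity
        linarith
    _ = (1 + 1 / (η * Real.log 2)) * (Real.log 2 * (η * e) + 1) := by field_simp; ring
    _ ≤ _ := by gcongr

lemma add_one_le_rpow_of_rpow_inv_le {η : ℝ} (hη : 0 < η) {x : ℝ} (hx : (2 : ℝ) ^ η⁻¹ ≤ x)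
    (e : ℕ) : (e : ℝ) + 1 ≤ (x ^ e) ^ η := by
  have hx0 : 0 ≤ x := (by positivity : (0 : ℝ) ≤ 2 ^ η⁻¹).trans hx
  have htwo : 2 ≤ x ^ η := (Real.rpow_inv_le_iff_of_pos (by norm_num) hx0 hη).mp hx
  calc (e : ℝ) + 1 ≤ (2 : ℝ) ^ e := by exact_mod_cast Nat.lt_two_pow_self
    _ ≤ (x ^ η) ^ e := by gcongr
    _ = (x ^ e) ^ η := by rw [Real.rpow_pow_comm hx0]

theorem exists_card_divisors_le_mul_rpow {η : ℝ} (hη : 0 < η) :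
    ∃ C : ℝ, 1 ≤ C ∧ ∀ l : ℕ, l ≠ 0 → (#l.divisors : ℝ) ≤ C * (l : ℝ) ^ η := by
  set c : ℝ := 1 + 1 / (η * Real.log 2)
  set P : ℕ := ⌈(2 : ℝ) ^ η⁻¹⌉₊
  have hc : 1 ≤ c := le_add_of_nonneg_right (by positivity)
  refine ⟨c ^ P, one_le_pow₀ hc, fun l hl => ?_⟩
  have hrpow : (l : ℝ) ^ η = ∏ p ∈ l.primeFactors, ((p : ℝ) ^ l.factorization p) ^ η := by
    rw [Real.finsetProd_rpow _ _ (fun i _ => by positivity)]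
    conv_lhs => rw [← Nat.prod_factorization_pow_eq_self hl]
    simp [Finsupp.prod]
  have hsmall : ∏ p ∈ l.primeFactors, (if p < P then c else 1) ≤ c ^ P := by
    rw [← prod_filter, prod_const]
    refine pow_le_pow_right₀ hc ?_
    simpa using card_le_card (by intro p; simp : {p ∈ l.primeFactors | p < P} ⊆ range P)
  calc (#l.divisors : ℝ) = ∏ p ∈ l.primeFactors, ((l.factorization p : ℝ) + 1) := by
        rw [Nat.card_divisors hl]; push_cast; rfl
    _ ≤ ∏ p ∈ l.primeFactors,
          ((if p < P then c else 1) * ((p : ℝ) ^ l.factorization p) ^ η) := by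
        refine prod_le_prod (fun i _ => by positivity) fun p hp => ?_
        split_ifs with h
        · exact add_one_le_const_mul_rpow hη
            (by exact_mod_cast (Nat.prime_of_mem_primeFactors hp).two_le) _
        · rw [one_mul]
          exact add_one_le_rpow_of_rpow_inv_le hη
            ((Nat.le_ceil _).trans (by exact_mod_cast not_lt.mp h)) _
    _ ≤ c ^ P * (l : ℝ) ^ η := by
        rw [prod_mul_distrib, ← hrpow]
        gcongr

/-! ### Sums of the geometric majorant over a well-approximated progression -/

lemma two_mul_le_abs_sin_pi_mul {y v : ℝ} (hv : 0 ≤ v) (hy : v ≤ y) (hy' : v ≤ 1 - y) :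
    2 * v ≤ |Real.sin (π * y)| := by
  have hpi := Real.pi_pos
  have hhalf : ∀ y : ℝ, v ≤ y → y ≤ 1 / 2 → 2 * v ≤ Real.sin (π * y) := by
    intro y h1 h2
    have hjordan := Real.mul_le_sin (x := π * y) (by nlinarith) (by nlinarith)
    have : 2 / π * (π * y) = 2 * y := by field_simp
    linarith
  refine le_trans ?_ (le_abs_self _)
  rcases le_total y (1 / 2) with h | h
  · exact hhalf y hy h
  · have := hhalf (1 - y) hy' (by linarith)
    rwa [mul_sub, mul_one, Real.sin_pi_sub] at this

/-- Bound for the geometric majorant at a point whose distance to the nearest integer on its left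
is about `r / q`. -/
noncomputable def residueMajorant (N q r : ℕ) : ℝ := if r < 2 then 2 * N else q / (r - 1)

lemma residueMajorant_of_lt {N q r : ℕ} (hr : r < 2) : residueMajorant N q r = 2 * N := if_pos hr

lemma residueMajorant_of_le {N q r : ℕ} (hr : 2 ≤ r) : residueMajorant N q r = q / (r - 1) :=
  if_neg hr.not_gt

lemma residueMajorant_nonneg (N q r : ℕ) : 0 ≤ residueMajorant N q r := by
  rcases lt_or_ge r 2 with hr | hr
  · rw [residueMajorant_of_lt hr]; positivity
  · have : (2 : ℝ) ≤ r := by exact_mod_cast hr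
    rw [residueMajorant_of_le hr]
    exact div_nonneg (by positivity) (by linarith)

lemma sum_residueMajorant_le (N q : ℕ) :
    ∑ r ∈ range q, residueMajorant N q r ≤ 4 * N + q * (1 + Real.log q) := by
  have hharmonic : ∑ k ∈ range q, residueMajorant N q (k + 1 + 1) = q * (harmonic q : ℝ) := by
    rw [harmonic]
    push_cast
    rw [mul_sum]
    refine sum_congr rfl fun k _ => ?_
    rw [residueMajorant_of_le (by lia)]
    push_cast
    rw [div_eq_mul_inv]
    ring_nf
  calc ∑ r ∈ range q, residueMajorant N q r ≤ ∑ r ∈ range (q + 2), residueMajorant N q r :=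
        sum_le_sum_of_subset_of_nonneg (range_subset_range.mpr (by lia))
          fun _ _ _ => residueMajorant_nonneg _ _ _
    _ = q * (harmonic q : ℝ) + 2 * N + 2 * N := by
        rw [sum_range_succ', sum_range_succ', hharmonic, residueMajorant_of_lt (by lia),
          residueMajorant_of_lt (by lia)]
    _ ≤ q * (1 + Real.log q) + 2 * N + 2 * N := by gcongr; exact harmonic_le_one_add_log q
    _ = _ := by ring

lemma geomMajorant_le_residueMajorant (N : ℕ) {q r : ℕ} (hr : r < q) {x : ℝ} {D : ℤ}
    (hlow : (r : ℝ) - 1 ≤ q * (x - D)) (hupp : q * (x - D) ≤ r + 2) :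
    geomMajorant N x ≤ residueMajorant N q r + residueMajorant N q (q - 1 - r) := by
  rcases lt_or_ge r 2 with hr2 | hr2
  · rw [residueMajorant_of_lt hr2]
    linarith [geomMajorant_le_two_mul N x, residueMajorant_nonneg N q (q - 1 - r)]
  rcases lt_or_ge (q - 1 - r) 2 with hr3 | hr3
  · rw [residueMajorant_of_lt hr3]
    linarith [geomMajorant_le_two_mul N x, residueMajorant_nonneg N q r]
  have hq0 : (0 : ℝ) < q := by exact_mod_cast (by lia : 0 < q)
  have hleft : (1 : ℝ) ≤ r - 1 := by
    have : (2 : ℝ) ≤ r := by exact_mod_cast hr2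
    linarith
  have hright : (1 : ℝ) ≤ q - 2 - r := by
    have : (r : ℝ) + 3 ≤ q := by exact_mod_cast (by lia : r + 3 ≤ q)
    linarith
  rw [residueMajorant_of_le hr2, residueMajorant_of_le hr3,
    show ((q - 1 - r : ℕ) : ℝ) - 1 = q - 2 - r by
      rw [Nat.sub_sub, Nat.cast_sub (by lia)]; push_cast; ring]
  have hv : ∀ v : ℝ, 1 ≤ v → v ≤ r - 1 → v ≤ q - 2 - r → geomMajorant N x ≤ q / v := by
    intro v hv1 hvr hvq
    have hsin : 2 * (v / q) ≤ |Real.sin (π * (x - D))| := by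
      refine two_mul_le_abs_sin_pi_mul (by positivity) ?_ ?_ <;> rw [div_le_iff₀ hq0] <;> linarith
    rw [mul_sub, mul_comm π (D : ℝ), Real.sin_sub_int_mul_pi, abs_mul, abs_zpow, abs_neg, abs_one,
      one_zpow, one_mul] at hsin
    refine (geomMajorant_le_two_div N (by positivity) hsin).trans (le_of_eq ?_)
    field_simp
  rcases le_total ((r : ℝ) - 1) (q - 2 - r) with h | h
  · exact (hv _ hleft le_rfl h).trans (le_add_of_nonneg_right (by positivity))
  · exact (hv _ hright h le_rfl).trans (le_add_of_nonneg_left (by positivity))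

lemma sum_range_emod_affine {M : Type*} [AddCommMonoid M] (F : ℕ → M) {u : ℤ} {q : ℕ} (hq : 1 ≤ q)
    (hu : Int.gcd u q = 1) (z : ℤ) :
    ∑ j ∈ range q, F ((j * u + z) % q).toNat = ∑ r ∈ range q, F r := by
  have hcast : ∀ j : ℕ, ((((j * u + z) % q).toNat : ℕ) : ℤ) = (j * u + z) % q := fun j =>
    Int.toNat_of_nonneg (Int.emod_nonneg _ (by lia))
  have hinj : Set.InjOn (fun j : ℕ => ((j * u + z) % q).toNat) (range q) := by
    intro i hi j hj hij
    simp only [coe_range, Set.mem_Iio] at hi hj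
    have hmod : (i * u + z) % (q : ℤ) = (j * u + z) % q :=
      (hcast i).symm.trans ((congrArg _ hij).trans (hcast j))
    have hdvd : (q : ℤ) ∣ (i - j) * u := by
      convert! Int.ModEq.dvd (Int.ModEq.symm hmod) using 1; ring
    have hdvd' : (q : ℤ) ∣ i - j :=
      (Int.isCoprime_iff_gcd_eq_one.mpr hu).symm.dvd_of_dvd_mul_right hdvd
    have := Int.eq_zero_of_abs_lt_dvd hdvd' (by rw [abs_lt]; constructor <;> lia)
    lia
  have himage : (range q).image (fun j : ℕ => ((j * u + z) % q).toNat) = range q := by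
    refine eq_of_subset_of_card_le (image_subset_iff.mpr fun j _ => ?_)
      (card_image_of_injOn hinj).ge
    have := Int.emod_lt_of_pos (j * u + z) (by lia : (0 : ℤ) < q)
    rw [mem_range]
    lia
  conv_rhs => rw [← himage]
  rw [sum_image hinj]

lemma sum_range_geomMajorant_le (N : ℕ) {t : ℝ} (c : ℝ) {u : ℤ} {q : ℕ} (hq : 1 ≤ q)
    (hu : Int.gcd u q = 1) (ht : |t - u / q| < 1 / (q : ℝ) ^ 2) :
    ∑ j ∈ range q, geomMajorant N (c + j * t) ≤ 8 * N + 2 * q * (1 + Real.log q) := by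
  have : (0 : ℝ) < q := by exact_mod_cast hq
  set z : ℤ := ⌊q * c⌋
  set r : ℕ → ℕ := fun j => ((j * u + z) % q).toNat
  have hterm : ∀ j ∈ range q, geomMajorant N (c + j * t) ≤
      residueMajorant N q (r j) + residueMajorant N q (q - 1 - r j) := by
    intro j hj
    rw [mem_range] at hj
    have hcast : ((r j : ℕ) : ℤ) = (j * u + z) % q :=
      Int.toNat_of_nonneg (Int.emod_nonneg _ (by lia))
    have hdrift : |(j : ℝ) * (q * t - u)| ≤ 1 := by
      have hjq : (j : ℝ) ≤ q := by exact_mod_cast hj.le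
      rw [show q * t - u = q * (t - u / q) by field_simp, abs_mul, abs_mul, Nat.abs_cast,
        Nat.abs_cast]
      calc (j : ℝ) * (q * |t - u / q|) ≤ q * (q * (1 / (q : ℝ) ^ 2)) := by gcongr
        _ = 1 := by field_simp
    have hposition : q * (c + j * t - ((j * u + z) / q : ℤ)) =
        r j + (q * c - z) + j * (q * t - u) := by
      have hdiv : (j : ℝ) * u + z = q * ((j * u + z) / q : ℤ) + r j := by
        have := Int.mul_ediv_add_emod (j * u + z) q
        rw [← hcast] at this
        exact_mod_cast this.symm
      linear_combination hdiv
    have hfloor : (z : ℝ) ≤ q * c := Int.floor_le _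
    have hfloor' : q * c < z + 1 := Int.lt_floor_add_one _
    rw [abs_le] at hdrift
    have hlt : r j < q := by
      have := Int.emod_lt_of_pos (j * u + z) (by lia : (0 : ℤ) < q)
      lia
    exact geomMajorant_le_residueMajorant N hlt (D := (j * u + z) / q)
      (by linarith) (by linarith)
  calc ∑ j ∈ range q, geomMajorant N (c + j * t)
      ≤ ∑ j ∈ range q, (residueMajorant N q (r j) + residueMajorant N q (q - 1 - r j)) :=
        sum_le_sum hterm
    _ = ∑ j ∈ range q, (residueMajorant N q j + residueMajorant N q (q - 1 - j)) :=
        sum_range_emod_affine (fun r => residueMajorant N q r + residueMajorant N q (q - 1 - r))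
          hq hu z
    _ = 2 * ∑ j ∈ range q, residueMajorant N q j := by
        rw [sum_add_distrib, sum_range_reflect, two_mul]
    _ ≤ 2 * (4 * N + q * (1 + Real.log q)) := by gcongr; exact sum_residueMajorant_le N q
    _ = _ := by ring

lemma sum_Ioc_geomMajorant_le (N L : ℕ) {t : ℝ} {u : ℤ} {q : ℕ} (hq : 1 ≤ q)
    (hu : Int.gcd u q = 1) (ht : |t - u / q| < 1 / (q : ℝ) ^ 2) :
    ∑ l ∈ Ioc 0 L, geomMajorant N (l * t) ≤
      ((L : ℝ) / q + 1) * (8 * N + 2 * q * (1 + Real.log q)) := by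
  have hblocks : ∀ B : ℕ, ∑ l ∈ range (B * q), geomMajorant N (l * t) ≤
      B * (8 * N + 2 * q * (1 + Real.log q)) := by
    intro B
    induction B with
    | zero => simp
    | succ B ih =>
      have hblock := sum_range_geomMajorant_le N (B * q * t) hq hu ht
      rw [add_mul, one_mul, sum_range_add]
      push_cast
      simp only [add_mul (_ * _ : ℝ)]
      linarith
  have hcover : Ioc 0 L ⊆ range ((L / q + 1) * q) := by
    intro l hl
    rw [mem_Ioc] at hl
    rw [mem_range, add_mul, one_mul]
    exact hl.2.trans_lt (Nat.lt_div_mul_add (by lia))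
  have : 0 ≤ Real.log q := Real.log_natCast_nonneg q
  refine (sum_le_sum_of_subset_of_nonneg hcover fun _ _ _ => geomMajorant_nonneg _ _).trans
    ((hblocks _).trans ?_)
  gcongr
  push_cast
  gcongr
  exact Nat.cast_div_le

/-! ### Weyl's inequality -/

lemma weylMajorant_nonneg (N d : ℕ) (A : ℝ) : 0 ≤ weylMajorant N d A := by
  induction d generalizing A with
  | zero => exact geomMajorant_nonneg _ _
  | succ d ih => exact sum_nonneg fun _ _ => ih _

lemma weylMajorant_neg (N d : ℕ) (A : ℝ) : weylMajorant N d (-A) = weylMajorant N d A := by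
  induction d generalizing A with
  | zero => exact geomMajorant_neg _ _
  | succ d ih => simp only [weylMajorant, mul_neg, ih]

lemma weylMajorant_zero_right_le (N d : ℕ) : weylMajorant N d 0 ≤ (2 * N : ℝ) ^ (d + 1) := by
  induction d with
  | zero => simpa [weylMajorant] using geomMajorant_le_two_mul N 0
  | succ d ih =>
    simp only [weylMajorant, mul_zero, sum_const, nsmul_eq_mul]
    rw [pow_succ' _ (d + 1)]
    refine mul_le_mul ?_ ih (weylMajorant_nonneg _ _ _) (by positivity)
    rw [Int.card_Ioo]
    exact_mod_cast (by lia : ((N : ℤ) - -N - 1).toNat ≤ 2 * N)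

lemma sum_Ioo_neg_self_of_even {R : Type*} [CommRing R] {F : ℤ → R} (hF : ∀ h, F (-h) = F h)
    {N : ℕ} (hN : 1 ≤ N) :
    ∑ h ∈ Ioo (-(N : ℤ)) N, F h = F 0 + 2 * ∑ h ∈ Ioo 0 N, F (h : ℕ) := by
  induction N, hN using Nat.le_induction with
  | base => simp [show Ioo (-1 : ℤ) 1 = {0} from rfl, show Ioo 0 1 = (∅ : Finset ℕ) from rfl]
  | succ N hN ih =>
    have hint : Ioo (-((N + 1 : ℕ) : ℤ)) (N + 1 : ℕ) =
        insert (N : ℤ) (insert (-N : ℤ) (Ioo (-(N : ℤ)) N)) := by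
      ext h; simp only [mem_Ioo, mem_insert]; lia
    have hnat : Ioo 0 (N + 1) = insert N (Ioo 0 N) := by
      ext h; simp only [mem_Ioo, mem_insert]; lia
    rw [hint, hnat, sum_insert (by simp; lia), sum_insert (by simp), sum_insert (by simp), ih, hF]
    ring

lemma card_mul_eq_le_card_divisors {m : ℕ} (hm : m ≠ 0) (s t : Finset ℕ) :
    #{p ∈ s ×ˢ t | p.1 * p.2 = m} ≤ #m.divisors := by
  calc _ ≤ #m.divisorsAntidiagonal := card_le_card fun p hp => by
        rw [Nat.mem_divisorsAntidiagonal]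
        exact ⟨(mem_filter.mp hp).2, hm⟩
    _ = #m.divisors := by rw [← Nat.map_div_right_divisors, card_map]

lemma sum_Ioo_sum_Ioc_card_divisors_pow_mul_le (N L d : ℕ) {G : ℕ → ℝ} (hG : ∀ l, 0 ≤ G l) :
    ∑ h ∈ Ioo 0 N, ∑ l ∈ Ioc 0 L, (#l.divisors : ℝ) ^ d * G (h * l) ≤
      ∑ l ∈ Ioc 0 (N * L), (#l.divisors : ℝ) ^ (d + 1) * G l := by
  rw [← sum_product', ← sum_fiberwise_of_maps_to (t := Ioc 0 (N * L)) (g := fun p => p.1 * p.2)]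
  swap
  · intro p hp
    simp only [mem_product, mem_Ioo, mem_Ioc] at hp ⊢
    exact ⟨Nat.mul_pos hp.1.1 hp.2.1, Nat.mul_le_mul hp.1.2.le hp.2.2⟩
  refine sum_le_sum fun m hm => ?_
  have hm0 : m ≠ 0 := (mem_Ioc.mp hm).1.ne'
  have hterm : ∀ p ∈ ({p ∈ Ioo 0 N ×ˢ Ioc 0 L | p.1 * p.2 = m} : Finset (ℕ × ℕ)),
      (#p.2.divisors : ℝ) ^ d * G (p.1 * p.2) ≤ (#m.divisors : ℝ) ^ d * G m := by
    intro p hp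
    obtain ⟨-, rfl⟩ := mem_filter.mp hp
    have := hG (p.1 * p.2)
    gcongr
    exact Nat.dvd_mul_left _ _
  refine (sum_le_card_nsmul _ _ _ hterm).trans ?_
  rw [nsmul_eq_mul, pow_succ', mul_assoc]
  have := hG m
  gcongr
  exact card_mul_eq_le_card_divisors hm0 _ _

open Nat in
lemma weylMajorant_le {N : ℕ} (hN : 1 ≤ N) (d : ℕ) (A : ℝ) :
    weylMajorant N d A ≤ d * (2 * N : ℝ) ^ d + 2 ^ d * ∑ l ∈ Ioc 0 (N ^ d),
      (#l.divisors : ℝ) ^ d * geomMajorant N (((d + 1)! * l : ℕ) * A) := by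
  induction d generalizing A with
  | zero => simp [weylMajorant, show Ioc 0 1 = {1} from rfl]
  | succ d ih =>
    set G : ℕ → ℝ := fun l => geomMajorant N (((d + 2)! * l : ℕ) * A)
    have hh : ∀ h ∈ Ioo 0 N, weylMajorant N d ((d + 2) * (h : ℤ) * A) ≤ d * (2 * N : ℝ) ^ d +
        2 ^ d * ∑ l ∈ Ioc 0 (N ^ d), (#l.divisors : ℝ) ^ d * G (h * l) := by
      intro h _
      refine (ih _).trans_eq ?_
      congr! 5 with l
      rw [factorial_succ (d + 1)]
      push_cast
      ring_nf
    have hsum : ∑ h ∈ Ioo 0 N, weylMajorant N d ((d + 2) * (h : ℤ) * A) ≤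
        N * (d * (2 * N : ℝ) ^ d) +
          2 ^ d * ∑ l ∈ Ioc 0 (N * N ^ d), (#l.divisors : ℝ) ^ (d + 1) * G l := by
      refine (sum_le_sum hh).trans ?_
      rw [sum_add_distrib, sum_const, nsmul_eq_mul, ← mul_sum, card_Ioo]
      gcongr
      · lia
      · exact sum_Ioo_sum_Ioc_card_divisors_pow_mul_le N _ d fun _ => geomMajorant_nonneg _ _
    have hzero := weylMajorant_zero_right_le N d
    rw [weylMajorant, sum_Ioo_neg_self_of_even (fun h => ?_) hN]
    · rw [Int.cast_zero, mul_zero, zero_mul, pow_succ' N]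
      calc _ ≤ (2 * N : ℝ) ^ (d + 1) + 2 * (N * (d * (2 * N : ℝ) ^ d) +
            2 ^ d * ∑ l ∈ Ioc 0 (N * N ^ d), (#l.divisors : ℝ) ^ (d + 1) * G l) := by
            linarith
        _ = ((d + 1 : ℕ) : ℝ) * (2 * N) ^ (d + 1) + 2 ^ (d + 1) *
            ∑ l ∈ Ioc 0 (N * N ^ d), (#l.divisors : ℝ) ^ (d + 1) * G l := by
            push_cast; ring
    · rw [← weylMajorant_neg]; push_cast; ring_nf

lemma sum_Ioc_comp_mul_le {G : ℕ → ℝ} (hG : ∀ l, 0 ≤ G l) {f : ℕ} (hf : 0 < f) (L : ℕ) :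
    ∑ l ∈ Ioc 0 L, G (f * l) ≤ ∑ l ∈ Ioc 0 (f * L), G l := by
  rw [← sum_image (f := G) (g := fun l => f * l)
    fun a _ b _ h => Nat.eq_of_mul_eq_mul_left hf h]
  refine sum_le_sum_of_subset_of_nonneg (image_subset_iff.mpr fun l hl => ?_) fun _ _ _ => hG _
  rw [mem_Ioc] at hl ⊢
  exact ⟨Nat.mul_pos hf hl.1, Nat.mul_le_mul_left _ hl.2⟩

lemma exists_sum_card_divisors_pow_mul_le {d : ℕ} (hd : d ≠ 0) {η : ℝ} (hη : 0 < η) :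
    ∃ C : ℝ, 0 < C ∧ ∀ (N : ℕ) (G : ℕ → ℝ), (∀ l, 0 ≤ G l) →
      ∑ l ∈ Ioc 0 (N ^ d), (#l.divisors : ℝ) ^ d * G l ≤
        C * (N : ℝ) ^ η * ∑ l ∈ Ioc 0 (N ^ d), G l := by
  obtain ⟨C, hC, hdiv⟩ := exists_card_divisors_le_mul_rpow (η := η / d ^ 2) (by positivity)
  refine ⟨C ^ d, by positivity, fun N G hG => ?_⟩
  rw [mul_sum]
  refine sum_le_sum fun l hl => mul_le_mul_of_nonneg_right ?_ (hG l)
  rw [mem_Ioc] at hl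
  calc (#l.divisors : ℝ) ^ d ≤ (C * ((N : ℝ) ^ d) ^ (η / d ^ 2)) ^ d := by
        refine pow_le_pow_left₀ (by positivity) ((hdiv l hl.1.ne').trans ?_) d
        gcongr
        exact_mod_cast hl.2
    _ = C ^ d * (N : ℝ) ^ η := by
        rw [mul_pow, ← Real.rpow_natCast (N : ℝ), ← Real.rpow_mul (by positivity),
          ← Real.rpow_mul_natCast (by positivity)]
        congr 2
        field_simp

lemma exists_one_add_log_le_mul_rpow {a η : ℝ} (ha : 0 ≤ a) (hη : 0 < η) :
    ∃ C : ℝ, 0 < C ∧ ∀ x y : ℝ, 0 < x → 1 ≤ y → x ≤ y ^ a → 1 + Real.log x ≤ C * y ^ η := by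
  refine ⟨1 + a / η, by positivity, fun x y hx hy hxy => ?_⟩
  have hy0 : 0 < y := by linarith
  calc 1 + Real.log x ≤ 1 + a * Real.log y := by
        rw [← Real.log_rpow hy0]; gcongr
    _ ≤ y ^ η + a * (y ^ η / η) := by
        gcongr
        exacts [Real.one_le_rpow hy hη.le, Real.log_le_rpow_div hy0.le hη]
    _ = (1 + a / η) * y ^ η := by ring

lemma div_add_one_mul_add_le {N Z κ q E : ℝ} {d : ℕ} (hq : 0 < q) (hκ : 1 ≤ κ) (hE : 1 ≤ E)
    (hN0 : 0 ≤ N) (hN : N ≤ Z) (hNd : N ^ d ≤ Z) (hq_le : q ≤ Z) (hNq : N ^ (d + 1) / q ≤ Z) :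
    (κ * N ^ d / q + 1) * (8 * N + 2 * q * E) ≤ 20 * κ * E * Z := by
  have hZ : 0 ≤ Z := hN0.trans hN
  calc (κ * N ^ d / q + 1) * (8 * N + 2 * q * E)
      = 8 * κ * (N ^ (d + 1) / q) + 2 * κ * N ^ d * E + 8 * N + 2 * q * E := by
        field_simp; ring
    _ ≤ 8 * κ * Z * E + 2 * κ * Z * E + 8 * (κ * Z * E) + 2 * (κ * Z * E) := by
        have hZE : Z ≤ Z * E := le_mul_of_one_le_right hZ hE
        have hκZE : Z * E ≤ κ * Z * E := by
          rw [mul_assoc]; exact le_mul_of_one_le_left (by positivity) hκ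
        have h₁ : 8 * κ * (N ^ (d + 1) / q) ≤ 8 * κ * Z * E := by
          rw [mul_assoc _ Z]; gcongr; exact hNq.trans hZE
        have h₂ : 2 * κ * N ^ d * E ≤ 2 * κ * Z * E := by gcongr
        have h₃ : q * E ≤ Z * E := by gcongr
        linarith
    _ = 20 * κ * E * Z := by ring

lemma exists_sum_geomMajorant_le {d : ℕ} (hd : d ≠ 0) {η Δ : ℝ} (hη : 0 < η) (hΔ : Δ ≤ 1) :
    ∃ C : ℝ, 0 < C ∧ ∀ (t : ℝ) (u q : ℤ) (N f : ℕ), IsApproximant t u q → 1 ≤ N → 1 ≤ f →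
      (N : ℝ) ^ Δ ≤ q → (q : ℝ) ≤ (N : ℝ) ^ ((d + 1 : ℝ) - Δ) →
        ∑ l ∈ Ioc 0 (N ^ d), geomMajorant N ((f * l : ℕ) * t) ≤
          C * f * (N : ℝ) ^ ((d + 1 : ℝ) - Δ + η) := by
  obtain ⟨C, hC, hlog⟩ := exists_one_add_log_le_mul_rpow (a := (d + 1 : ℝ) - Δ)
    (by linarith [(Nat.cast_nonneg d : (0 : ℝ) ≤ d)]) hη
  refine ⟨20 * C, by positivity, ?_⟩
  rintro t u q N f ⟨hq, hu, ht⟩ hN hf hNq hqN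
  lift q to ℕ using by lia
  rw [Int.cast_natCast] at ht hNq hqN
  have hN1 : (1 : ℝ) ≤ N := by exact_mod_cast hN
  have hN0 : (0 : ℝ) < N := by linarith
  have hq0 : (0 : ℝ) < q := by exact_mod_cast hq
  set Z : ℝ := (N : ℝ) ^ ((d + 1 : ℝ) - Δ) with hZ
  have hNd : (N : ℝ) ^ d ≤ Z := by
    rw [hZ, ← Real.rpow_natCast]
    exact Real.rpow_le_rpow_of_exponent_le hN1 (by linarith)
  have hNdq : (N : ℝ) ^ (d + 1) / q ≤ Z := by
    rw [div_le_iff₀ hq0, show (N : ℝ) ^ (d + 1) = Z * (N : ℝ) ^ Δ by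
      rw [hZ, ← Real.rpow_add hN0, sub_add_cancel]; exact_mod_cast rfl]
    gcongr
  have hlogq : 1 + Real.log q ≤ C * (N : ℝ) ^ η := hlog q N hq0 hN1 hqN
  calc ∑ l ∈ Ioc 0 (N ^ d), geomMajorant N ((f * l : ℕ) * t)
      ≤ ∑ l ∈ Ioc 0 (f * N ^ d), geomMajorant N (l * t) :=
        sum_Ioc_comp_mul_le (G := fun l => geomMajorant N (l * t))
          (fun _ => geomMajorant_nonneg _ _) hf _
    _ ≤ (f * (N : ℝ) ^ d / q + 1) * (8 * N + 2 * q * (1 + Real.log q)) := by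
        simpa using sum_Ioc_geomMajorant_le N (f * N ^ d) (by lia) hu ht
    _ ≤ (f * (N : ℝ) ^ d / q + 1) * (8 * N + 2 * q * (C * (N : ℝ) ^ η)) := by gcongr
    _ ≤ 20 * f * (C * (N : ℝ) ^ η) * Z :=
        div_add_one_mul_add_le hq0 (by exact_mod_cast hf)
          (by linarith [Real.log_natCast_nonneg q]) hN0.le
          ((le_self_pow₀ hN1 hd).trans hNd) hNd hqN hNdq
    _ = 20 * C * f * (N : ℝ) ^ ((d + 1 : ℝ) - Δ + η) := by
        rw [Real.rpow_add hN0, ← hZ]; ring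

open Nat in
lemma exists_weylMajorant_le {d : ℕ} (hd : d ≠ 0) {η Δ : ℝ} (hη : 0 < η) (hΔ : Δ ≤ 1) :
    ∃ C : ℝ, 0 < C ∧ ∀ (t : ℝ) (u q : ℤ) (N : ℕ), IsApproximant t u q → 1 ≤ N →
      (N : ℝ) ^ Δ ≤ q → (q : ℝ) ≤ (N : ℝ) ^ ((d + 1 : ℝ) - Δ) →
        weylMajorant N d t ≤ C * (N : ℝ) ^ ((d + 1 : ℝ) - Δ + η) := by
  obtain ⟨C₁, hC₁, hdiv⟩ := exists_sum_card_divisors_pow_mul_le hd (half_pos hη)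
  obtain ⟨C₂, hC₂, hgeom⟩ := exists_sum_geomMajorant_le hd (half_pos hη) hΔ
  refine ⟨d * 2 ^ d + 2 ^ d * (C₁ * (C₂ * (d + 1)!)), by positivity, ?_⟩
  intro t u q N htq hN hNq hqN
  have hN1 : (1 : ℝ) ≤ N := by exact_mod_cast hN
  have hN0 : (0 : ℝ) < N := by linarith
  have hNd : (N : ℝ) ^ d ≤ (N : ℝ) ^ ((d + 1 : ℝ) - Δ + η) := by
    rw [← Real.rpow_natCast]
    exact Real.rpow_le_rpow_of_exponent_le hN1 (by linarith)
  have hsum := (hdiv N _ fun _ => geomMajorant_nonneg N _).trans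
    (mul_le_mul_of_nonneg_left (hgeom t u q N (d + 1)! htq hN (factorial_pos _) hNq hqN)
      (by positivity))
  have hsplit : (N : ℝ) ^ ((d + 1 : ℝ) - Δ + η) =
      (N : ℝ) ^ (η / 2) * (N : ℝ) ^ ((d + 1 : ℝ) - Δ + η / 2) := by
    rw [← Real.rpow_add hN0]; ring_nf
  calc weylMajorant N d t
      ≤ d * (2 * N : ℝ) ^ d + 2 ^ d * (C₁ * (N : ℝ) ^ (η / 2) *
          (C₂ * (d + 1)! * (N : ℝ) ^ ((d + 1 : ℝ) - Δ + η / 2))) :=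
        (weylMajorant_le hN d t).trans (by gcongr)
    _ ≤ d * (2 ^ d * (N : ℝ) ^ ((d + 1 : ℝ) - Δ + η)) + 2 ^ d * (C₁ * (N : ℝ) ^ (η / 2) *
          (C₂ * (d + 1)! * (N : ℝ) ^ ((d + 1 : ℝ) - Δ + η / 2))) := by
        rw [mul_pow]; gcongr
    _ = _ := by rw [hsplit]; ring

open Polynomial in
theorem exists_norm_sum_ee_eval_le {n : ℕ} (hn : 2 ≤ n) {η Δ : ℝ} (hη : 0 < η) (hΔ : Δ ≤ 1) :
    ∃ C : ℝ, 0 < C ∧ ∀ (p : ℝ[X]) (u q : ℤ) (N : ℕ), p.natDegree ≤ n →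
      IsApproximant (p.coeff n) u q → 1 ≤ N → (N : ℝ) ^ Δ ≤ q → (q : ℝ) ≤ (N : ℝ) ^ ((n : ℝ) - Δ) →
        ‖∑ k ∈ range N, ee (p.eval (k : ℝ))‖ ≤ C * (N : ℝ) ^ (1 - Δ / 2 ^ (n - 1) + η) := by
  obtain ⟨d, rfl⟩ : ∃ d, n = d + 1 := ⟨n - 1, by lia⟩
  rw [add_tsub_cancel_right]
  push_cast
  obtain ⟨C, hC, hweyl⟩ := exists_weylMajorant_le (d := d) (by lia) hη hΔ
  set P : ℝ := 2 ^ d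
  have hP1 : 1 ≤ P := one_le_pow₀ one_le_two
  have hP : ((2 ^ d : ℕ) : ℝ) = P := by push_cast; rfl
  refine ⟨2 * C ^ (1 / P), by positivity, fun p u q N hp hpq hN hNq hqN => ?_⟩
  have hN1 : (1 : ℝ) ≤ N := by exact_mod_cast hN
  have hN0 : (0 : ℝ) < N := by linarith
  have hcast : ∑ k ∈ range N, ee (p.eval (k : ℝ)) = ∑ k ∈ Ico (0 : ℤ) N, ee (p.eval (k : ℝ)) := by
    simp [Int.Ico_eq_finset_map]
  set X : ℝ := ‖∑ k ∈ range N, ee (p.eval (k : ℝ))‖ with hX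
  have hpow : X ^ 2 ^ d ≤ (2 * N : ℝ) ^ 2 ^ d * (C * (N : ℝ) ^ (η - Δ)) := by
    have hdiff := norm_sum_ee_eval_pow_le N d hp (a := 0) (b := N) (by simp)
    rw [← hcast, ← hX] at hdiff
    have hsplit : (N : ℝ) ^ ((d + 1 : ℝ) - Δ + η) = (N : ℝ) ^ (d + 1) * (N : ℝ) ^ (η - Δ) := by
      rw [← Real.rpow_natCast, ← Real.rpow_add hN0]; push_cast; ring_nf
    refine le_of_mul_le_mul_right ?_ (by positivity : (0 : ℝ) < (N : ℝ) ^ (d + 1))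
    calc X ^ 2 ^ d * (N : ℝ) ^ (d + 1) ≤ X ^ 2 ^ d * (2 * N : ℝ) ^ (d + 1) := by gcongr; linarith
      _ ≤ (2 * N : ℝ) ^ 2 ^ d * (C * (N : ℝ) ^ ((d + 1 : ℝ) - Δ + η)) :=
          hdiff.trans (by gcongr; exact hweyl _ u q N hpq hN hNq hqN)
      _ = _ := by rw [hsplit]; ring
  calc X = (X ^ 2 ^ d) ^ (1 / P) := by
        rw [← Real.rpow_natCast_mul (norm_nonneg _), hP, mul_one_div_cancel (by positivity),
          Real.rpow_one]
    _ ≤ ((2 * N : ℝ) ^ 2 ^ d * (C * (N : ℝ) ^ (η - Δ))) ^ (1 / P) := by gcongr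
    _ = 2 * C ^ (1 / P) * (N : ℝ) ^ (1 + (η - Δ) * (1 / P)) := by
        rw [Real.mul_rpow (by positivity) (by positivity), Real.mul_rpow hC.le (by positivity),
          ← Real.rpow_natCast_mul (by positivity), hP, mul_one_div_cancel (by positivity),
          ← Real.rpow_mul hN0.le, Real.rpow_add hN0, Real.rpow_one, Real.rpow_one]
        ring
    _ ≤ _ := by
        have hηP : η / P ≤ η := div_le_self hη.le hP1
        have hexp : 1 + (η - Δ) * (1 / P) ≤ 1 - Δ / P + η := by
          rw [sub_mul, mul_one_div, mul_one_div]; linarith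
        gcongr

/-! ### Twisted sawtooth series -/

/-- Partial sums of the Fourier series of the sawtooth `1 / 2 - ω`, twisted by the phase
`t * k ^ n`. The index `0` contributes nothing, by the convention `x / 0 = 0`. -/
noncomputable def twistedSawtooth (n : ℕ) (t ω : ℝ) (K : ℕ) : ℂ :=
  ∑ k ∈ range K, ee (t * (k : ℝ) ^ n) * (Real.sin (2 * π * ω * k) / (π * k) : ℝ)

lemma twistedSawtooth_succ (n : ℕ) (t ω : ℝ) (K : ℕ) :
    twistedSawtooth n t ω (K + 1) = twistedSawtooth n t ω K +
      ee (t * (K : ℝ) ^ n) * (Real.sin (2 * π * ω * K) / (π * K) : ℝ) :=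
  sum_range_succ _ K

lemma twistedSawtooth_sub (n : ℕ) (t ω : ℝ) {M K : ℕ} (h : M ≤ K) :
    twistedSawtooth n t ω K - twistedSawtooth n t ω M =
      ∑ k ∈ Ico M K, ee (t * (k : ℝ) ^ n) * (Real.sin (2 * π * ω * k) / (π * k) : ℝ) := by
  rw [twistedSawtooth, twistedSawtooth, sum_Ico_eq_sub _ h]

lemma ee_mul_ofReal_sin_div (a ω : ℝ) (k : ℕ) :
    ee a * (Real.sin (2 * π * ω * k) / (π * k) : ℝ) = (2 * π * Complex.I)⁻¹ *
      (ee (a + ω * k) * (k : ℂ)⁻¹ - ee (a + -ω * k) * (k : ℂ)⁻¹) := by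
  rw [show 2 * π * ω * k = 2 * π * (ω * k) by ring, Complex.ofReal_div, ofReal_sin_eq_ee_sub,
    ee_add, ee_add, neg_mul]
  push_cast
  ring

lemma rpow_neg_div_le_sub {ρ : ℝ} (hρ : 0 < ρ) {k : ℕ} (hk : 1 ≤ k) :
    ((k : ℝ) + 1) ^ (-ρ) / k ≤ 2 / ρ * ((k : ℝ) ^ (-ρ) - ((k : ℝ) + 1) ^ (-ρ)) := by
  have hk1 : (1 : ℝ) ≤ k := by exact_mod_cast hk
  have hbernoulli : 1 + ρ * (1 / (k + 1)) ≤ ((k : ℝ) / (k + 1)) ^ (-ρ) := by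
    rw [Real.rpow_def_of_pos (by positivity)]
    have hexp := Real.add_one_le_exp (Real.log ((k : ℝ) / (k + 1)) * -ρ)
    have hlog := Real.log_le_sub_one_of_pos (show 0 < (k : ℝ) / (k + 1) by positivity)
    rw [show (k : ℝ) / (k + 1) - 1 = -(1 / (k + 1)) by field_simp; ring] at hlog
    nlinarith
  have hsplit : (k : ℝ) ^ (-ρ) = ((k : ℝ) / (k + 1)) ^ (-ρ) * ((k : ℝ) + 1) ^ (-ρ) := by
    rw [← Real.mul_rpow (by positivity) (by positivity), div_mul_cancel₀ _ (by positivity)]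
  have hdrop : ρ * (1 / (k + 1)) * ((k : ℝ) + 1) ^ (-ρ) ≤
      (k : ℝ) ^ (-ρ) - ((k : ℝ) + 1) ^ (-ρ) := by
    rw [hsplit, le_sub_iff_add_le, ← add_one_mul, add_comm _ (1 : ℝ)]
    gcongr
  calc ((k : ℝ) + 1) ^ (-ρ) / k ≤ ((k : ℝ) + 1) ^ (-ρ) * (2 / (k + 1)) := by
        rw [div_eq_mul_one_div]
        gcongr ?_ * ?_
        rw [div_le_div_iff₀ (by positivity) (by positivity)]; linarith
    _ = 2 / ρ * (ρ * (1 / (k + 1)) * ((k : ℝ) + 1) ^ (-ρ)) := by field_simp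
    _ ≤ _ := by gcongr

lemma norm_sum_Ico_mul_inv_le_rpow {a : ℕ → ℂ} {M K : ℕ} (hM : 1 ≤ M) (hMK : M ≤ K) {C ρ : ℝ}
    (hρ : 0 < ρ)
    (ha : ∀ j, M ≤ j → j ≤ K → ‖∑ k ∈ Ico M j, a k‖ ≤ C * (j : ℝ) ^ (1 - ρ)) :
    ‖∑ k ∈ Ico M K, a k * (k : ℂ)⁻¹‖ ≤ C * (1 + 2 / ρ) * (M : ℝ) ^ (-ρ) := by
  have hM0 : (0 : ℝ) < M := by exact_mod_cast hM
  have hC : 0 ≤ C := nonneg_of_mul_nonneg_left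
    ((norm_nonneg _).trans (ha M le_rfl hMK)) (by positivity)
  have hdiv : ∀ j, M ≤ j → j ≤ K →
      ‖∑ k ∈ Ico M j, a k‖ * (j : ℝ)⁻¹ ≤ C * (j : ℝ) ^ (-ρ) := by
    intro j hMj hjK
    have hj : (0 : ℝ) < j := by exact_mod_cast hM.trans hMj
    calc _ ≤ C * (j : ℝ) ^ (1 - ρ) * (j : ℝ)⁻¹ := by gcongr; exact ha j hMj hjK
      _ = C * (j : ℝ) ^ (-ρ) := by
        rw [mul_assoc, ← Real.rpow_neg_one, ← Real.rpow_add hj]; congr 2; ring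
  have hstep : ∀ k ∈ Ico M K,
      ‖(∑ j ∈ Ico M (k + 1), a j) * (((k + 1 : ℕ) : ℂ)⁻¹ - (k : ℂ)⁻¹)‖ ≤
        C * (2 / ρ) * (-((k + 1 : ℕ) : ℝ) ^ (-ρ) - -(k : ℝ) ^ (-ρ)) := by
    intro k hk
    rw [mem_Ico] at hk
    have hk0 : k ≠ 0 := by lia
    have hinv : ((k + 1 : ℕ) : ℂ)⁻¹ - (k : ℂ)⁻¹ = ((k + 1 : ℕ) : ℂ)⁻¹ * -(k : ℂ)⁻¹ := by
      have : (k : ℂ) ≠ 0 := by exact_mod_cast hk0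
      have : ((k + 1 : ℕ) : ℂ) ≠ 0 := by exact_mod_cast k.succ_ne_zero
      field_simp; push_cast; ring
    rw [hinv, ← mul_assoc, norm_mul, norm_mul, norm_neg, norm_inv, norm_inv, Complex.norm_natCast,
      Complex.norm_natCast]
    calc _ ≤ C * ((k + 1 : ℕ) : ℝ) ^ (-ρ) * (k : ℝ)⁻¹ := by
          gcongr ?_ * _; exact hdiv (k + 1) (by lia) (by lia)
      _ = C * (((k : ℝ) + 1) ^ (-ρ) / k) := by push_cast; ring
      _ ≤ C * (2 / ρ * ((k : ℝ) ^ (-ρ) - ((k : ℝ) + 1) ^ (-ρ))) := by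
          gcongr; exact rpow_neg_div_le_sub hρ (by lia)
      _ = _ := by push_cast; ring
  have hK0 : C * (K : ℝ) ^ (-ρ) ≤ C * (M : ℝ) ^ (-ρ) := by
    gcongr ?_ * ?_
    exact Real.rpow_le_rpow_of_nonpos hM0 (by exact_mod_cast hMK) (by linarith)
  have htail : 0 ≤ C * (2 / ρ) * (K : ℝ) ^ (-ρ) := by positivity
  rw [sum_Ico_mul_eq_sub a (fun k => (k : ℂ)⁻¹) hMK]
  refine (norm_sub_le _ _).trans ?_
  have hsum := (norm_sum_le _ _).trans (sum_le_sum hstep)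
  rw [← mul_sum, sum_Ico_sub (fun k : ℕ => -(k : ℝ) ^ (-ρ)) hMK] at hsum
  have hlast := hdiv K hMK le_rfl
  rw [norm_mul, norm_inv, Complex.norm_natCast]
  linarith

lemma norm_inv_two_pi_mul_I_le : ‖(2 * π * Complex.I)⁻¹‖ ≤ 1 / 2 := by
  have hnorm : ‖(2 * π * Complex.I)⁻¹‖ = (2 * π)⁻¹ := by simp [abs_of_pos Real.pi_pos]
  rw [hnorm, inv_le_comm₀ (by positivity) (by norm_num)]
  linarith [Real.pi_gt_three]

lemma norm_twistedSawtooth_sub_le {n : ℕ} {t : ℝ} (ω : ℝ) {M K : ℕ} (hM : 1 ≤ M) (hMK : M ≤ K)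
    {C ρ : ℝ} (hρ : 0 < ρ) (hρ1 : ρ ≤ 1)
    (hsum : ∀ (x : ℝ) (j : ℕ), M ≤ j → j ≤ K →
      ‖∑ k ∈ range j, ee (t * (k : ℝ) ^ n + x * k)‖ ≤ C * (j : ℝ) ^ (1 - ρ)) :
    ‖twistedSawtooth n t ω K - twistedSawtooth n t ω M‖ ≤
      2 * C * (1 + 2 / ρ) * (M : ℝ) ^ (-ρ) := by
  have hC : 0 ≤ C := nonneg_of_mul_nonneg_left
    ((norm_nonneg _).trans (hsum 0 M le_rfl hMK)) (by positivity)
  have htail : ∀ x : ℝ, ‖∑ k ∈ Ico M K, ee (t * (k : ℝ) ^ n + x * k) * (k : ℂ)⁻¹‖ ≤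
      2 * C * (1 + 2 / ρ) * (M : ℝ) ^ (-ρ) := by
    refine fun x => norm_sum_Ico_mul_inv_le_rpow hM hMK hρ fun j hMj hjK => ?_
    rw [sum_Ico_eq_sub _ hMj]
    calc _ ≤ C * (j : ℝ) ^ (1 - ρ) + C * (M : ℝ) ^ (1 - ρ) :=
          (norm_sub_le _ _).trans (add_le_add (hsum x j hMj hjK) (hsum x M le_rfl hMK))
      _ ≤ C * (j : ℝ) ^ (1 - ρ) + C * (j : ℝ) ^ (1 - ρ) := by gcongr
      _ = _ := by ring
  rw [twistedSawtooth_sub _ _ _ hMK]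
  simp only [ee_mul_ofReal_sin_div]
  rw [← mul_sum, sum_sub_distrib, norm_mul]
  calc _ ≤ 1 / 2 * (2 * C * (1 + 2 / ρ) * (M : ℝ) ^ (-ρ) +
        2 * C * (1 + 2 / ρ) * (M : ℝ) ^ (-ρ)) := by
        gcongr
        · exact norm_inv_two_pi_mul_I_le
        · exact (norm_sub_le _ _).trans (add_le_add (htail ω) (htail (-ω)))
    _ = _ := by ring

/-! ### Tails of the sine series -/

/-- The block `M ≤ k < K` of the series `∑ sin (2 * π * θ * k) / k`. -/
noncomputable def sineBlock (θ : ℝ) (M K : ℕ) : ℂ :=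
  ∑ k ∈ Ico M K, (Real.sin (2 * π * θ * k) : ℂ) * (k : ℂ)⁻¹

lemma norm_sum_Ico_ofReal_sin_le {θ : ℝ} (hθ : Real.sin (π * θ) ≠ 0) (M K : ℕ) :
    ‖∑ k ∈ Ico M K, (Real.sin (2 * π * θ * k) : ℂ)‖ ≤ 2 / |Real.sin (π * θ)| := by
  have him : ∑ k ∈ Ico M K, Real.sin (2 * π * θ * k) =
      (∑ k ∈ Ico (M : ℤ) K, ee (θ * k + 0)).im := by
    simp [Int.Ico_eq_finset_map, sum_Ico_eq_sum_range, im_ee, mul_assoc]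
  rw [← Complex.ofReal_sum, Complex.norm_real, him]
  exact (Complex.abs_im_le_norm _).trans
    ((norm_sum_Ico_ee_linear_le θ 0 (show (K : ℤ) - M ≤ (K - M : ℕ) by lia)).trans
      (geomMajorant_le_two_div _ (abs_pos.mpr hθ) le_rfl))

lemma norm_ee_natCast_mul_sub_one_le (a : ℝ) (k : ℕ) : ‖ee (k * a) - 1‖ ≤ k * ‖ee a - 1‖ := by
  induction k with
  | zero => simp [ee_zero]
  | succ k ih =>
    have hsplit : ee ((k + 1 : ℕ) * a) - 1 = (ee (k * a) - 1) * ee a + (ee a - 1) := by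
      rw [Nat.cast_succ, add_one_mul, ee_add]; ring
    rw [hsplit]
    refine (norm_add_le _ _).trans ?_
    rw [norm_mul, norm_ee, mul_one, Nat.cast_succ, add_one_mul]
    gcongr

lemma abs_sin_two_pi_mul_le (θ : ℝ) (k : ℕ) :
    |Real.sin (2 * π * θ * k)| ≤ 2 * |Real.sin (π * θ)| * k := by
  have him : Real.sin (2 * π * θ * k) = (ee (k * θ) - 1).im := by
    rw [Complex.sub_im, im_ee, Complex.one_im, sub_zero]; ring_nf
  rw [him, ← norm_ee_sub_one, mul_comm _ (k : ℝ)]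
  exact (Complex.abs_im_le_norm _).trans (norm_ee_natCast_mul_sub_one_le θ k)

lemma norm_sineBlock_le_mul (θ : ℝ) {M : ℕ} (hM : 1 ≤ M) (K : ℕ) :
    ‖sineBlock θ M K‖ ≤ (K - M : ℕ) * (2 * |Real.sin (π * θ)|) := by
  have hterm : ∀ k ∈ Ico M K,
      ‖(Real.sin (2 * π * θ * k) : ℂ) * (k : ℂ)⁻¹‖ ≤ 2 * |Real.sin (π * θ)| := by
    intro k hk
    have hk0 : (0 : ℝ) < k := by exact_mod_cast hM.trans (mem_Ico.mp hk).1
    rw [norm_mul, norm_inv, Complex.norm_natCast, Complex.norm_real, Real.norm_eq_abs,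
      ← div_eq_mul_inv, div_le_iff₀ hk0]
    exact abs_sin_two_pi_mul_le θ k
  refine (norm_sum_le_of_le _ hterm).trans (le_of_eq ?_)
  rw [sum_const, Nat.card_Ico, nsmul_eq_mul]

-- When the sine vanishes both sides are `0`.
lemma norm_sineBlock_le_div (θ : ℝ) {M K : ℕ} (hM : 1 ≤ M) (hMK : M ≤ K) :
    ‖sineBlock θ M K‖ ≤ 2 / |Real.sin (π * θ)| / M := by
  by_cases hθ : Real.sin (π * θ) = 0
  · simpa [hθ] using norm_sineBlock_le_mul θ hM K
  · exact norm_sum_Ico_mul_inv_le_of_norm_sum_le hM hMK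
      fun j _ _ => norm_sum_Ico_ofReal_sin_le hθ M j

lemma norm_sineBlock_le_four {θ : ℝ} {M K : ℕ} (hM : 1 ≤ M)
    (hθ : M * |Real.sin (π * θ)| ≤ 1) : ‖sineBlock θ M K‖ ≤ 4 := by
  by_cases h0 : Real.sin (π * θ) = 0
  · refine (norm_sineBlock_le_mul θ hM K).trans ?_
    simp [h0]
  set w := |Real.sin (π * θ)|
  have hw : 0 < w := abs_pos.mpr h0
  set P := ⌈1 / w⌉₊
  have hMP : M ≤ P := by
    exact_mod_cast ((le_div_iff₀ hw).mpr hθ).trans (Nat.le_ceil (1 / w))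
  have hhead : ∀ J ≤ P, ‖sineBlock θ M J‖ ≤ 2 := by
    intro J hJ
    have hlen : ((J - M : ℕ) : ℝ) ≤ 1 / w := by
      have hPw : (P : ℝ) < 1 / w + 1 := Nat.ceil_lt_add_one (by positivity)
      have hJM : ((J - M : ℕ) : ℝ) + 1 ≤ P := by
        exact_mod_cast (by lia : J - M + 1 ≤ P)
      linarith
    calc _ ≤ (J - M : ℕ) * (2 * w) := norm_sineBlock_le_mul θ hM J
      _ ≤ 1 / w * (2 * w) := by gcongr
      _ = 2 := by field_simp
  rcases le_total K P with hK | hK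
  · linarith [hhead K hK]
  have htail : ‖sineBlock θ P K‖ ≤ 2 := by
    refine (norm_sineBlock_le_div θ (hM.trans hMP) hK).trans ?_
    rw [div_le_iff₀ (by exact_mod_cast hM.trans hMP), ← mul_one_div]
    gcongr
    exact Nat.le_ceil _
  have hsplit : sineBlock θ M K = sineBlock θ M P + sineBlock θ P K :=
    (sum_Ico_consecutive _ hMP hK).symm
  rw [hsplit]
  linarith [norm_add_le (sineBlock θ M P) (sineBlock θ P K), hhead P le_rfl]

lemma norm_sineBlock_le_geomMajorant (θ : ℝ) {M K : ℕ} (hM : 1 ≤ M) (hMK : M ≤ K) :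
    ‖sineBlock θ M K‖ ≤ 4 * geomMajorant M θ / M := by
  have : (0 : ℝ) < M := by exact_mod_cast hM
  have hmajorant : 4 * geomMajorant M θ / M = 8 / (1 + M * |Real.sin (π * θ)|) := by
    unfold geomMajorant; field_simp; norm_num
  rw [hmajorant, le_div_iff₀ (by positivity)]
  rcases le_total (M * |Real.sin (π * θ)|) 1 with h | h
  · nlinarith [norm_sineBlock_le_four (K := K) hM h, norm_nonneg (sineBlock θ M K)]
  · have hw : 0 < |Real.sin (π * θ)| := by
      by_contra! hneg
      nlinarith
    have hdecay := norm_sineBlock_le_div θ hM hMK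
    rw [div_div, le_div_iff₀ (by positivity), mul_comm |_|] at hdecay
    nlinarith [norm_nonneg (sineBlock θ M K)]

/-! ### Rational times -/

lemma ee_natCast_mul (k : ℕ) (a : ℝ) : ee (k * a) = ee a ^ k := by
  unfold ee
  rw [← Complex.exp_nat_mul]; push_cast; ring_nf

lemma ee_eq_one_iff {a : ℝ} : ee a = 1 ↔ ∃ k : ℤ, a = k := by
  refine ⟨fun h => ?_, fun ⟨k, hk⟩ => hk ▸ ee_intCast k⟩
  obtain ⟨k, hk⟩ := Complex.exp_eq_one_iff.mp h
  rw [mul_comm] at hk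
  exact ⟨k, by exact_mod_cast mul_right_cancel₀ Complex.two_pi_I_ne_zero hk⟩

lemma sum_range_ee_mul_div {q : ℕ} (hq : q ≠ 0) (d : ℤ) :
    ∑ b ∈ range q, ee (b * (d / q)) = if (q : ℤ) ∣ d then (q : ℂ) else 0 := by
  have hq0 : (q : ℝ) ≠ 0 := by exact_mod_cast hq
  have hdvd : ee (d / q) = 1 ↔ (q : ℤ) ∣ d := by
    rw [ee_eq_one_iff]
    refine exists_congr fun k => ?_
    rw [div_eq_iff hq0, mul_comm]
    exact_mod_cast Iff.rfl
  simp only [ee_natCast_mul]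
  split_ifs with h
  · simp [hdvd.mpr h]
  · rw [geom_sum_eq (mt hdvd.mp h), ← ee_natCast_mul, mul_div_cancel₀ _ hq0, ee_intCast, sub_self,
      zero_div]

/-- The Fourier coefficient of index `b` of a function on `ℤ` of period `q`. -/
noncomputable def cyclicFourierCoeff (f : ℤ → ℂ) (q b : ℕ) : ℂ :=
  (q : ℂ)⁻¹ * ∑ j ∈ range q, f j * ee (-(b / q) * j)

lemma sum_cyclicFourierCoeff_mul_ee {f : ℤ → ℂ} {q : ℕ} (hq : q ≠ 0)
    (hf : Function.Periodic f q) (k : ℤ) :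
    ∑ b ∈ range q, cyclicFourierCoeff f q b * ee (b / q * k) = f k := by
  have hqc : (q : ℂ) ≠ 0 := by exact_mod_cast hq
  have hswap : ∑ b ∈ range q, cyclicFourierCoeff f q b * ee (b / q * k) =
      (q : ℂ)⁻¹ * ∑ j ∈ range q, f j * (if (q : ℤ) ∣ k - j then (q : ℂ) else 0) := by
    simp_rw [cyclicFourierCoeff, ← sum_range_ee_mul_div hq, mul_assoc, ← mul_sum, sum_mul, mul_sum]
    rw [sum_comm]
    refine sum_congr rfl fun j _ => sum_congr rfl fun b _ => ?_
    rw [mul_assoc, ← ee_add]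
    congr 3
    push_cast; ring
  have hmem : (k % q).toNat ∈ range q := by
    have := Int.emod_lt_of_pos k (by lia : (0 : ℤ) < q)
    rw [mem_range]; lia
  have hcast : ((k % q).toNat : ℤ) = k % q := Int.toNat_of_nonneg (Int.emod_nonneg _ (by lia))
  have hmod : f (k % q) = f k := by
    have := hf.sub_zsmul_eq (x := k) (k / q)
    rwa [smul_eq_mul, mul_comm, ← Int.emod_def] at this
  rw [hswap, sum_eq_single_of_mem _ hmem]
  · rw [hcast, hmod, if_pos Int.dvd_self_sub_emod]
    field_simp
  · intro j hj hne
    rw [if_neg, mul_zero]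
    intro hdvd
    rw [mem_range] at hj
    refine hne ?_
    rw [Int.emod_eq_emod_iff_emod_sub_eq_zero.mpr (Int.emod_eq_zero_of_dvd hdvd),
      Int.emod_eq_of_lt (by lia) (by lia), Int.toNat_natCast]

lemma sum_cyclicFourierCoeff_mul_cos {f : ℤ → ℂ} {q : ℕ} (hq : q ≠ 0)
    (hf : Function.Periodic f q) (heven : Function.Even f) (k : ℤ) :
    ∑ b ∈ range q, cyclicFourierCoeff f q b * Real.cos (2 * π * (b / q * k)) = f k := by
  have hpos := sum_cyclicFourierCoeff_mul_ee hq hf k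
  have hneg := sum_cyclicFourierCoeff_mul_ee hq hf (-k)
  rw [heven] at hneg
  have hcos : ∀ a : ℝ, (Real.cos (2 * π * a) : ℂ) = (ee a + ee (-a)) / 2 := by
    intro a
    rw [ee_eq_cos_add_sin_mul_I, ee_eq_cos_add_sin_mul_I, mul_neg, Real.cos_neg, Real.sin_neg]
    push_cast; ring
  calc _ = (∑ b ∈ range q, cyclicFourierCoeff f q b * ee (b / q * k) +
        ∑ b ∈ range q, cyclicFourierCoeff f q b * ee (b / q * (-k : ℤ))) / 2 := by
        rw [← sum_add_distrib, sum_div]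
        refine sum_congr rfl fun b _ => ?_
        rw [hcos, Int.cast_neg, mul_neg]; ring
    _ = f k := by rw [hpos, hneg, add_self_div_two]

lemma sum_Ico_mul_sin_div_eq {f : ℤ → ℂ} {q : ℕ} (hq : q ≠ 0) (hf : Function.Periodic f q)
    (heven : Function.Even f) (ω : ℝ) (M K : ℕ) :
    ∑ k ∈ Ico M K, f k * (Real.sin (2 * π * ω * k) / (π * k) : ℝ) =
      (2 * π : ℂ)⁻¹ * ∑ b ∈ range q, cyclicFourierCoeff f q b *
        (sineBlock (ω + b / q) M K + sineBlock (ω - b / q) M K) := by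
  have hterm : ∀ k ∈ Ico M K, f k * (Real.sin (2 * π * ω * k) / (π * k) : ℝ) =
      (2 * π : ℂ)⁻¹ * ∑ b ∈ range q, cyclicFourierCoeff f q b *
        ((Real.sin (2 * π * (ω + b / q) * k) : ℂ) * (k : ℂ)⁻¹ +
          (Real.sin (2 * π * (ω - b / q) * k) : ℂ) * (k : ℂ)⁻¹) := by
    intro k _
    have hprod : ∀ b : ℕ, (Real.sin (2 * π * (ω + b / q) * k) : ℂ) * (k : ℂ)⁻¹ +
        (Real.sin (2 * π * (ω - b / q) * k) : ℂ) * (k : ℂ)⁻¹ =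
          Real.cos (2 * π * (b / q * k)) * (2 * (Real.sin (2 * π * ω * k) : ℂ) * (k : ℂ)⁻¹) := by
      intro b
      have := Real.two_mul_sin_mul_cos (2 * π * ω * k) (2 * π * (b / q * k))
      rw [← add_mul, ← Complex.ofReal_add,
        show 2 * π * (ω + b / q) * k = 2 * π * ω * k + 2 * π * (b / q * k) by ring,
        show 2 * π * (ω - b / q) * k = 2 * π * ω * k - 2 * π * (b / q * k) by ring,
        add_comm (Real.sin _), ← this]
      push_cast; ring
    have hf_cos := sum_cyclicFourierCoeff_mul_cos hq hf heven k
    rw [Int.cast_natCast] at hf_cos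
    simp_rw [hprod, ← mul_assoc (cyclicFourierCoeff f q _), ← sum_mul, hf_cos]
    push_cast
    field_simp
  rw [sum_congr rfl hterm, ← mul_sum, sum_comm]
  simp only [← mul_sum, sum_add_distrib, sineBlock]

lemma isApproximant_div_self {u q : ℤ} (hq : 1 ≤ q) (hu : Int.gcd u q = 1) :
    IsApproximant (u / q) u q := by
  have : (0 : ℝ) < q := by exact_mod_cast hq
  exact ⟨hq, hu, by rw [sub_self, abs_zero]; positivity⟩

lemma sum_norm_sineBlock_le {q M K : ℕ} {u : ℤ} (hq : 1 ≤ q) (hu : Int.gcd u q = 1) (ω : ℝ)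
    (hqM : q ≤ M) (hMK : M ≤ K) :
    ∑ b ∈ range q, ‖sineBlock (ω + b * (u / q)) M K‖ ≤ 40 + 8 * Real.log q := by
  have hM0 : (0 : ℝ) < M := by exact_mod_cast hq.trans hqM
  have : 0 ≤ Real.log q := Real.log_natCast_nonneg q
  have hmajorant := sum_range_geomMajorant_le M ω hq hu (t := u / q)
    (isApproximant_div_self (by exact_mod_cast hq) hu).2.2
  calc _ ≤ ∑ b ∈ range q, 4 * geomMajorant M (ω + b * (u / q)) / M :=
        sum_le_sum fun b _ => norm_sineBlock_le_geomMajorant _ (hq.trans hqM) hMK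
    _ = 4 * (∑ b ∈ range q, geomMajorant M (ω + b * (u / q))) / M := by rw [← sum_div, ← mul_sum]
    _ ≤ 4 * (8 * M + 2 * M * (1 + Real.log q)) / M := by
        gcongr
        refine hmajorant.trans ?_
        gcongr
    _ = _ := by field_simp; ring

lemma norm_sum_Ico_mul_sin_div_le {f : ℤ → ℂ} {q : ℕ} (hq : 1 ≤ q) (hf : Function.Periodic f q)
    (heven : Function.Even f) {B : ℝ} (hB : ∀ b, ‖cyclicFourierCoeff f q b‖ ≤ B) (ω : ℝ)
    {M K : ℕ} (hqM : q ≤ M) (hMK : M ≤ K) :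
    ‖∑ k ∈ Ico M K, f k * (Real.sin (2 * π * ω * k) / (π * k) : ℝ)‖ ≤
      B * (40 + 8 * Real.log q) := by
  have hB0 : 0 ≤ B := (norm_nonneg _).trans (hB 0)
  have hplus := sum_norm_sineBlock_le hq (u := 1) (by simp) ω hqM hMK
  have hminus := sum_norm_sineBlock_le hq (u := -1) (by simp) ω hqM hMK
  simp only [Int.cast_one, Int.cast_neg, neg_div, mul_neg, ← sub_eq_add_neg, mul_one_div]
    at hplus hminus
  have hpi : ‖(2 * π : ℂ)⁻¹‖ ≤ 1 / 2 := by
    simpa using norm_inv_two_pi_mul_I_le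
  rw [sum_Ico_mul_sin_div_eq (by lia) hf heven, norm_mul]
  calc _ ≤ 1 / 2 * ∑ b ∈ range q,
        B * (‖sineBlock (ω + b / q) M K‖ + ‖sineBlock (ω - b / q) M K‖) := by
        gcongr
        refine norm_sum_le_of_le _ fun b _ => ?_
        rw [norm_mul]
        gcongr
        · exact hB b
        · exact norm_add_le _ _
    _ = 1 / 2 * (B * (∑ b ∈ range q, ‖sineBlock (ω + b / q) M K‖ +
        ∑ b ∈ range q, ‖sineBlock (ω - b / q) M K‖)) := by
        rw [← mul_sum, sum_add_distrib]
    _ ≤ 1 / 2 * (B * ((40 + 8 * Real.log q) + (40 + 8 * Real.log q))) := by gcongr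
    _ = _ := by ring

lemma periodic_ee_div_mul_pow (n : ℕ) (u : ℤ) {q : ℕ} (hq : q ≠ 0) :
    Function.Periodic (fun k : ℤ => ee (u / q * (k : ℝ) ^ n)) q := by
  intro k
  obtain ⟨e, he⟩ : (q : ℤ) ∣ (k + q) ^ n - k ^ n := by
    simpa using sub_dvd_pow_sub_pow (k + q) k n
  have hpow : ((k + q : ℤ) : ℝ) ^ n = (k : ℝ) ^ n + q * e := by
    rw [← sub_eq_iff_eq_add']; exact_mod_cast he
  have hphase : (u : ℝ) / q * ((k : ℝ) ^ n + q * e) = u / q * (k : ℝ) ^ n + (u * e : ℤ) := by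
    push_cast; field_simp
  simp only [hpow, hphase, ee_add, ee_intCast, mul_one]

lemma even_ee_mul_pow {n : ℕ} (hn : Even n) (t : ℝ) :
    Function.Even (fun k : ℤ => ee (t * (k : ℝ) ^ n)) := by
  intro k
  simp only [Int.cast_neg, hn.neg_pow]

lemma exists_norm_sum_ee_mul_pow_add_le {n : ℕ} (hn : 2 ≤ n) {η Δ : ℝ} (hη : 0 < η) (hΔ : Δ ≤ 1) :
    ∃ C > 0, ∀ (t x : ℝ) (u q : ℤ) (N : ℕ), IsApproximant t u q → 1 ≤ N → (N : ℝ) ^ Δ ≤ q →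
      (q : ℝ) ≤ (N : ℝ) ^ ((n : ℝ) - Δ) →
      ‖∑ k ∈ range N, ee (t * (k : ℝ) ^ n + x * k)‖ ≤
        C * (N : ℝ) ^ (1 - Δ / 2 ^ (n - 1) + η) := by
  obtain ⟨C, hC, hweyl⟩ := exists_norm_sum_ee_eval_le hn hη hΔ
  refine ⟨C, hC, fun t x u q N hap hN hlow hupp => ?_⟩
  set p : Polynomial ℝ := .C t * .X ^ n + .C x * .X
  have hdeg : p.natDegree ≤ n := by
    have : 1 ≤ n := by lia
    unfold p
    compute_degree!
  have hcoeff : p.coeff n = t := by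
    simp [p, Polynomial.coeff_X, (by lia : (1 : ℕ) ≠ n)]
  simpa [p] using hweyl p u q N hdeg (hcoeff.symm ▸ hap) hN hlow hupp

lemma exists_norm_cyclicFourierCoeff_le {n : ℕ} (hn : 2 ≤ n) {η : ℝ} (hη : 0 < η) :
    ∃ C > 0, ∀ (u : ℤ) (q b : ℕ), 1 ≤ q → Int.gcd u q = 1 →
      ‖cyclicFourierCoeff (fun k : ℤ => ee (u / q * (k : ℝ) ^ n)) q b‖ ≤
        C * (q : ℝ) ^ (-(1 / 2 ^ (n - 1)) + η) := by
  obtain ⟨C, hC, hweyl⟩ := exists_norm_sum_ee_mul_pow_add_le hn hη le_rfl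
  refine ⟨C, hC, fun u q b hq hu => ?_⟩
  have hq0 : (0 : ℝ) < q := by exact_mod_cast hq
  have hn2 : (2 : ℝ) ≤ n := by exact_mod_cast hn
  have hsum := hweyl (u / q) (-(b / q)) u q q (by
    exact_mod_cast isApproximant_div_self (by exact_mod_cast hq) hu) hq (by simp) (by
    simpa using Real.rpow_le_rpow_of_exponent_le (show (1 : ℝ) ≤ q by exact_mod_cast hq)
      (by linarith : (1 : ℝ) ≤ n - 1))
  simp only [cyclicFourierCoeff, Int.cast_natCast, ← ee_add]
  rw [norm_mul, norm_inv, Complex.norm_natCast, inv_mul_le_iff₀ hq0]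
  refine hsum.trans (le_of_eq ?_)
  rw [mul_left_comm]
  nth_rewrite 2 [← Real.rpow_one (q : ℝ)]
  rw [← Real.rpow_add hq0]
  ring_nf

lemma exists_norm_twistedSawtooth_div_sub_le {n : ℕ} (hn : 2 ≤ n) (hne : Even n) {η : ℝ}
    (hη : 0 < η) :
    ∃ C > 0, ∀ (u : ℤ) (q : ℕ), 1 ≤ q → Int.gcd u q = 1 → ∀ (ω : ℝ) (M K : ℕ), q ≤ M → M ≤ K →
      ‖twistedSawtooth n (u / q) ω K - twistedSawtooth n (u / q) ω M‖ ≤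
        C * (q : ℝ) ^ (-(1 / 2 ^ (n - 1)) + 2 * η) := by
  obtain ⟨C, hC, hcoeff⟩ := exists_norm_cyclicFourierCoeff_le hn hη
  refine ⟨C * (40 + 8 / η), by positivity, fun u q hq hu ω M K hqM hMK => ?_⟩
  have hq0 : (0 : ℝ) < q := by exact_mod_cast hq
  have hlog : 40 + 8 * Real.log q ≤ (40 + 8 / η) * (q : ℝ) ^ η := by
    have hpow : (1 : ℝ) ≤ (q : ℝ) ^ η := Real.one_le_rpow (by exact_mod_cast hq) hη.le
    have := Real.log_le_rpow_div hq0.le hη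
    calc _ ≤ 40 * (q : ℝ) ^ η + 8 * ((q : ℝ) ^ η / η) := by linarith
      _ = _ := by ring
  rw [twistedSawtooth_sub _ _ _ hMK]
  calc _ ≤ C * (q : ℝ) ^ (-(1 / 2 ^ (n - 1)) + η) * (40 + 8 * Real.log q) :=
        norm_sum_Ico_mul_sin_div_le hq (periodic_ee_div_mul_pow n u (by lia))
          (even_ee_mul_pow hne _) (fun b => hcoeff u q b hq hu) ω hqM hMK
    _ ≤ C * (q : ℝ) ^ (-(1 / 2 ^ (n - 1)) + η) * ((40 + 8 / η) * (q : ℝ) ^ η) := by gcongr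
    _ = C * (40 + 8 / η) * ((q : ℝ) ^ (-(1 / 2 ^ (n - 1)) + η) * (q : ℝ) ^ η) := by ring
    _ = _ := by rw [← Real.rpow_add hq0]; ring_nf

lemma exists_tendsto_of_norm_sub_le {ι E : Type*} [SemilatticeSup ι] [Nonempty ι]
    [NormedAddCommGroup E] [CompleteSpace E] {f : ι → E} {b : ι → ℝ} {N : ι}
    (hb : Tendsto b atTop (nhds 0)) (h : ∀ M K, N ≤ M → M ≤ K → ‖f K - f M‖ ≤ b M) :
    ∃ L, Tendsto f atTop (nhds L) ∧ ∀ M, N ≤ M → ‖L - f M‖ ≤ b M := by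
  have hcauchy : CauchySeq f := Metric.cauchySeq_iff'.mpr fun ε hε => by
    obtain ⟨M, hMε, hNM⟩ := ((hb.eventually (gt_mem_nhds hε)).and (eventually_ge_atTop N)).exists
    exact ⟨M, fun K hMK => (dist_eq_norm _ _).trans_lt ((h M K hNM hMK).trans_lt hMε)⟩
  obtain ⟨L, hL⟩ := cauchySeq_tendsto_of_complete hcauchy
  exact ⟨L, hL, fun M hNM => le_of_tendsto (hL.sub_const _).norm
    ((eventually_ge_atTop M).mono fun K hMK => h M K hNM hMK)⟩

lemma exists_tendsto_twistedSawtooth_div {n : ℕ} (hne : Even n) (u : ℤ) {q : ℕ} (hq : q ≠ 0)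
    (ω : ℝ) : ∃ L, Tendsto (twistedSawtooth n (u / q) ω) atTop (nhds L) := by
  set f : ℤ → ℂ := fun k => ee (u / q * (k : ℝ) ^ n)
  set D : ℝ := ‖(2 * π : ℂ)⁻¹‖ * ∑ b ∈ range q, ‖cyclicFourierCoeff f q b‖ *
    (2 / |Real.sin (π * (ω + b / q))| + 2 / |Real.sin (π * (ω - b / q))|)
  suffices h : ∀ M K, 1 ≤ M → M ≤ K →
      ‖twistedSawtooth n (u / q) ω K - twistedSawtooth n (u / q) ω M‖ ≤ D / M by
    obtain ⟨L, hL, -⟩ :=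
      exists_tendsto_of_norm_sub_le (tendsto_const_div_atTop_nhds_zero_nat D) h
    exact ⟨L, hL⟩
  intro M K hM hMK
  have hexpand := sum_Ico_mul_sin_div_eq hq (periodic_ee_div_mul_pow n u hq)
    (even_ee_mul_pow hne _) ω M K
  simp only [Int.cast_natCast] at hexpand
  rw [twistedSawtooth_sub _ _ _ hMK, hexpand, norm_mul, mul_div_assoc, sum_div]
  gcongr
  refine norm_sum_le_of_le _ fun b _ => ?_
  rw [norm_mul, mul_div_assoc, add_div]
  gcongr
  exact norm_add_le_of_le (norm_sineBlock_le_div _ hM hMK) (norm_sineBlock_le_div _ hM hMK)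

/-! ### The tail of the twisted sawtooth series -/

lemma exists_norm_twistedSawtooth_sub_le_of_isApproximant {n : ℕ} (hn : 2 ≤ n) {η Δ : ℝ}
    (hη : 0 < η) (hΔ : Δ ≤ 1) (hηΔ : η < Δ / 2 ^ (n - 1)) :
    ∃ C > 0, ∀ (t ω : ℝ) (M K : ℕ), 1 ≤ M → M ≤ K →
      (∀ j : ℕ, M ≤ j → j ≤ K → ∃ u q : ℤ, IsApproximant t u q ∧ (j : ℝ) ^ Δ ≤ q ∧
        (q : ℝ) ≤ (j : ℝ) ^ ((n : ℝ) - Δ)) →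
      ‖twistedSawtooth n t ω K - twistedSawtooth n t ω M‖ ≤
        C * (M : ℝ) ^ (-(Δ / 2 ^ (n - 1) - η)) := by
  obtain ⟨C, hC, hweyl⟩ := exists_norm_sum_ee_mul_pow_add_le hn hη hΔ
  have hρ : 0 < Δ / 2 ^ (n - 1) - η := sub_pos.mpr hηΔ
  have hρ1 : Δ / 2 ^ (n - 1) - η ≤ 1 := by
    have : Δ / 2 ^ (n - 1) ≤ 1 :=
      (div_le_one (by positivity)).mpr (hΔ.trans (one_le_pow₀ one_le_two))
    linarith
  refine ⟨2 * C * (1 + 2 / (Δ / 2 ^ (n - 1) - η)), by positivity, fun t ω M K hM hMK hap => ?_⟩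
  refine norm_twistedSawtooth_sub_le ω hM hMK hρ hρ1 fun x j hMj hjK => ?_
  obtain ⟨u, q, htuq, hlow, hupp⟩ := hap j hMj hjK
  rw [sub_sub_eq_add_sub, add_sub_right_comm]
  exact hweyl t x u q j htuq (hM.trans hMj) hlow hupp

lemma rpow_neg_le_rpow_of_mul_rpow_le {t α ρ N : ℝ} {m : ℝ} (ht : 0 < t) (hm : 1 ≤ m)
    (hρ : 0 ≤ ρ) (hN : m * t ^ (-α) ≤ N) : N ^ (-ρ) ≤ t ^ (α * ρ) := by
  have htN : t ^ (-α) ≤ N := (le_mul_of_one_le_left (by positivity) hm).trans hN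
  calc N ^ (-ρ) ≤ (t ^ (-α)) ^ (-ρ) :=
        Real.rpow_le_rpow_of_nonpos (by positivity) htN (by linarith)
    _ = t ^ (α * ρ) := by rw [← Real.rpow_mul ht.le, neg_mul_neg]

lemma le_rpow_of_le_mul_rpow_neg_inv {t α ν q m N : ℝ} (ht : 0 < t) (hα : 0 < α) (hα1 : α ≤ 1)
    (hν : 0 < ν) (hq : 0 < q) (hm : 1 ≤ m) (htq : t ≤ m * q ^ (-(1 / (α * ν))))
    (hN : m * t ^ (-α) ≤ N) : q ≤ N ^ ν := by
  have hαν : 0 < α * ν := by positivity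
  have hroot : q ^ (1 / (α * ν)) ≤ m / t := by
    rwa [le_div_iff₀' ht, ← le_div_iff₀ (by positivity), div_eq_mul_inv, ← Real.rpow_neg hq.le]
  calc q = (q ^ (1 / (α * ν))) ^ (α * ν) := by
        rw [← Real.rpow_mul hq.le, one_div_mul_cancel hαν.ne', Real.rpow_one]
    _ ≤ (m / t) ^ (α * ν) := by gcongr
    _ = (m ^ α * t ^ (-α)) ^ ν := by
        rw [Real.rpow_mul (by positivity), Real.div_rpow (by positivity) ht.le, Real.rpow_neg ht.le,
          div_eq_mul_inv]
    _ ≤ (m * t ^ (-α)) ^ ν := by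
        gcongr
        exact Real.rpow_le_self_of_one_le hm hα1
    _ ≤ N ^ ν := by gcongr

lemma natCast_rpow_neg_le_intCast_div_rpow {u : ℤ} {q : ℕ} (hq : 1 ≤ q) (hu : 0 < (u / q : ℝ))
    {κ : ℝ} (hκ : 0 ≤ κ) : (q : ℝ) ^ (-κ) ≤ (u / q : ℝ) ^ κ := by
  have hu1 : (1 : ℝ) ≤ u := by
    have : (0 : ℝ) < u := (div_pos_iff_of_pos_right (by positivity)).mp hu
    exact_mod_cast this
  rw [Real.rpow_neg_eq_inv_rpow, inv_eq_one_div]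
  gcongr

lemma exists_tendsto_twistedSawtooth_of_mem_Bset {n : ℕ} (hn : 2 ≤ n) {η Δ : ℝ}
    (hη : 0 < η) (hΔ : Δ ≤ 1) (hηΔ : η < Δ / 2 ^ (n - 1)) :
    ∃ C > 0, ∀ (m : ℤ) (α t ω : ℝ), 1 ≤ m → t ∈ Bset n Δ m α →
      ∃ L, Tendsto (twistedSawtooth n t ω) atTop (nhds L) ∧
        ‖L - twistedSawtooth n t ω ⌈m * t ^ (-α)⌉₊‖ ≤ C * t ^ (α * (Δ / 2 ^ (n - 1) - η)) := by
  obtain ⟨C, hC, hblock⟩ := exists_norm_twistedSawtooth_sub_le_of_isApproximant hn hη hΔ hηΔ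
  refine ⟨C, hC, fun m α t ω hm ht => ?_⟩
  have ht0 : 0 < t := ht.1.1
  have hm1 : (1 : ℝ) ≤ m := by exact_mod_cast hm
  set N := ⌈m * t ^ (-α)⌉₊
  have hN : 1 ≤ N := Nat.one_le_ceil_iff.mpr (by positivity)
  have hNt : m * t ^ (-α) ≤ N := Nat.le_ceil _
  have hcauchy : ∀ M K : ℕ, N ≤ M → M ≤ K →
      ‖twistedSawtooth n t ω K - twistedSawtooth n t ω M‖ ≤
        C * (M : ℝ) ^ (-(Δ / 2 ^ (n - 1) - η)) := by
    refine fun M K hNM hMK => hblock t ω M K (hN.trans hNM) hMK fun j hMj _ => ?_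
    obtain ⟨u, q, hap, hlow, hupp⟩ := ht.2 j (hNt.trans (by exact_mod_cast hNM.trans hMj))
    exact ⟨u, q, hap, hlow.le, hupp⟩
  have hdecay : Tendsto (fun M : ℕ => C * (M : ℝ) ^ (-(Δ / 2 ^ (n - 1) - η))) atTop (nhds 0) := by
    simpa using ((tendsto_rpow_neg_atTop (sub_pos.mpr hηΔ)).comp
      tendsto_natCast_atTop_atTop).const_mul C
  obtain ⟨L, hL, hbound⟩ := exists_tendsto_of_norm_sub_le hdecay hcauchy
  refine ⟨L, hL, (hbound N le_rfl).trans ?_⟩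
  gcongr
  exact rpow_neg_le_rpow_of_mul_rpow_le ht0 hm1 (sub_pos.mpr hηΔ).le hNt

lemma exists_tendsto_twistedSawtooth_div_norm_sub_le {n : ℕ} (hn : 2 ≤ n) (hne : Even n)
    {η Δ : ℝ} (hη : 0 < η) (hΔ0 : 0 < Δ) (hΔ : Δ ≤ 1) (hηΔ : η < Δ / 2 ^ (n - 1)) :
    ∃ C > 0, ∀ (u : ℤ) (q N : ℕ) (ω : ℝ), 1 ≤ q → Int.gcd u q = 1 → 1 ≤ N →
      (q : ℝ) ≤ (N : ℝ) ^ ((n : ℝ) - Δ) →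
      ∃ L, Tendsto (twistedSawtooth n (u / q) ω) atTop (nhds L) ∧
        ‖L - twistedSawtooth n (u / q) ω N‖ ≤
          C * ((N : ℝ) ^ (-(Δ / 2 ^ (n - 1) - η)) + (q : ℝ) ^ (-(1 / 2 ^ (n - 1)) + 2 * η)) := by
  obtain ⟨C₁, hC₁, hblock⟩ := exists_norm_twistedSawtooth_sub_le_of_isApproximant hn hη hΔ hηΔ
  obtain ⟨C₂, hC₂, hfar⟩ := exists_norm_twistedSawtooth_div_sub_le hn hne hη
  refine ⟨C₁ + C₂, by positivity, fun u q N ω hq hu hN hqN => ?_⟩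
  set V := twistedSawtooth n (u / q) ω
  have hn2 : (2 : ℝ) ≤ n := by exact_mod_cast hn
  have hq1 : (1 : ℝ) ≤ q := by exact_mod_cast hq
  set F := ⌊(q : ℝ) ^ (1 / Δ)⌋₊
  have hqF : q ≤ F :=
    Nat.le_floor (Real.self_le_rpow_of_one_le hq1 ((one_le_div hΔ0).mpr hΔ))
  have hnear : ‖V (max N F) - V N‖ ≤ C₁ * (N : ℝ) ^ (-(Δ / 2 ^ (n - 1) - η)) := by
    rcases le_total F N with h | h
    · rw [max_eq_left h, sub_self, norm_zero]; positivity
    rw [max_eq_right h]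
    refine hblock _ ω N F hN h fun j hNj hjF => ⟨u, q, ?_, ?_, ?_⟩
    · exact_mod_cast isApproximant_div_self (by exact_mod_cast hq) hu
    · rw [Int.cast_natCast, ← Real.le_rpow_inv_iff_of_pos (by positivity) (by positivity) hΔ0,
        ← one_div]
      exact (Nat.le_floor_iff (by positivity)).mp hjF
    · rw [Int.cast_natCast]
      exact hqN.trans (Real.rpow_le_rpow (by positivity) (by exact_mod_cast hNj) (by linarith))
  obtain ⟨L, hL⟩ := exists_tendsto_twistedSawtooth_div hne u (by lia : q ≠ 0) ω
  refine ⟨L, hL, le_of_tendsto (hL.sub_const _).norm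
    ((eventually_ge_atTop (max N F)).mono fun K hK => ?_)⟩
  have hpowN : 0 ≤ C₂ * (N : ℝ) ^ (-(Δ / 2 ^ (n - 1) - η)) := by positivity
  have hpowq : 0 ≤ C₁ * (q : ℝ) ^ (-(1 / 2 ^ (n - 1)) + 2 * η) := by positivity
  linarith [norm_sub_le_norm_sub_add_norm_sub (V K) (V (max N F)) (V N),
    hfar u q hq hu ω (max N F) K (hqF.trans (le_max_right _ _)) hK]

lemma exists_tendsto_twistedSawtooth_of_le_mul_rpow {n : ℕ} (hn : 2 ≤ n) (hne : Even n)
    {η Δ : ℝ} (hη : 0 < η) (hΔ0 : 0 < Δ) (hΔ : Δ ≤ 1) (hηΔ : 2 * η ≤ Δ / 2 ^ (n - 1)) :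
    ∃ C > 0, ∀ (m : ℤ) (α : ℝ) (u : ℤ) (q : ℕ) (ω : ℝ), 1 ≤ m → 0 < α → α ≤ 1 → 1 ≤ q →
      Int.gcd u q = 1 → 0 < (u / q : ℝ) →
      (u / q : ℝ) ≤ m * (q : ℝ) ^ (-(1 / (α * ((n : ℝ) - Δ)))) →
      ∃ L, Tendsto (twistedSawtooth n (u / q) ω) atTop (nhds L) ∧
        ‖L - twistedSawtooth n (u / q) ω ⌈m * (u / q : ℝ) ^ (-α)⌉₊‖ ≤
          C * ((u / q : ℝ) ^ (α * (Δ / 2 ^ (n - 1) - η)) +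
            (u / q : ℝ) ^ (1 / 2 ^ (n - 1) - 2 * η)) := by
  have hΔp : Δ / 2 ^ (n - 1) ≤ 1 / 2 ^ (n - 1) := by gcongr
  obtain ⟨C, hC, hdiv⟩ :=
    exists_tendsto_twistedSawtooth_div_norm_sub_le hn hne hη hΔ0 hΔ (by linarith)
  refine ⟨C, hC, fun m α u q ω hm hα0 hα1 hq hu hu0 htq => ?_⟩
  have hm1 : (1 : ℝ) ≤ m := by exact_mod_cast hm
  have hnΔ : 0 < (n : ℝ) - Δ := by
    have : (2 : ℝ) ≤ n := by exact_mod_cast hn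
    linarith
  set N := ⌈m * (u / q : ℝ) ^ (-α)⌉₊
  have hN : 1 ≤ N := Nat.one_le_ceil_iff.mpr (by positivity)
  have hNt : m * (u / q : ℝ) ^ (-α) ≤ N := Nat.le_ceil _
  obtain ⟨L, hL, hbound⟩ := hdiv u q N ω hq hu hN
    (le_rpow_of_le_mul_rpow_neg_inv hu0 hα0 hα1 hnΔ (by positivity) hm1 htq hNt)
  refine ⟨L, hL, hbound.trans ?_⟩
  gcongr
  · exact rpow_neg_le_rpow_of_mul_rpow_le hu0 hm1 (by linarith) hNt
  · rw [neg_add_eq_sub, ← neg_sub]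
    exact natCast_rpow_neg_le_intCast_div_rpow hq hu0 (by linarith)

theorem exists_tendsto_twistedSawtooth_norm_sub_le {n : ℕ} (hn : 2 ≤ n) (hne : Even n) {Δ : ℝ}
    (hΔ0 : 0 < Δ) (hΔ1 : Δ ≤ 1) {m : ℤ} (hm : 1 ≤ m) {α : ℝ} (hα0 : 0 < α) (hα1 : α ≤ 1) {ε : ℝ}
    (hε : 0 < ε) :
    ∃ C > 0, ∀ t ∈ Set.Ioc (0 : ℝ) 1,
      (t ∈ Bset n Δ m α ∨ ∃ u q : ℤ, 1 ≤ q ∧ Int.gcd u q = 1 ∧ t = (u : ℝ) / q ∧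
        t ≤ m * (q : ℝ) ^ (-(1 / (α * ((n : ℝ) - Δ))))) →
      ∀ ω : ℝ, ∃ L, Tendsto (twistedSawtooth n t ω) atTop (nhds L) ∧
        ‖L - twistedSawtooth n t ω ⌈m * t ^ (-α)⌉₊‖ ≤ C * t ^ (α * Δ / 2 ^ (n - 1) - ε) := by
  set δ := Δ / 2 ^ (n - 1) with hδ
  have hδ0 : 0 < δ := by positivity
  have hδ1 : δ ≤ 1 / 2 ^ (n - 1) := by rw [hδ]; gcongr
  obtain ⟨η, hη0, hηmin⟩ : ∃ η, 0 < η ∧ 2 * η = min δ ε :=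
    ⟨min δ ε / 2, by positivity, by ring⟩
  have hηδ : 2 * η ≤ δ := hηmin ▸ min_le_left δ ε
  have hηε : 2 * η ≤ ε := hηmin ▸ min_le_right δ ε
  have hexp₁ : α * Δ / 2 ^ (n - 1) - ε ≤ α * (δ - η) := by
    rw [mul_div_assoc, ← hδ]; nlinarith
  have hexp₂ : α * Δ / 2 ^ (n - 1) - ε ≤ 1 / 2 ^ (n - 1) - 2 * η := by
    rw [mul_div_assoc, ← hδ]; linarith [mul_le_of_le_one_left hδ0.le hα1]
  obtain ⟨C₁, hC₁, hBset⟩ := exists_tendsto_twistedSawtooth_of_mem_Bset hn hη0 hΔ1 (by linarith)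
  obtain ⟨C₂, hC₂, hdiv⟩ :=
    exists_tendsto_twistedSawtooth_of_le_mul_rpow hn hne hη0 hΔ0 hΔ1 hηδ
  refine ⟨C₁ + 2 * C₂, by positivity, fun t ⟨ht0, ht1⟩ hcase ω => ?_⟩
  have hpow₁ := Real.rpow_le_rpow_of_exponent_ge ht0 ht1 hexp₁
  have hpow₂ := Real.rpow_le_rpow_of_exponent_ge ht0 ht1 hexp₂
  have hpow : 0 ≤ t ^ (α * Δ / 2 ^ (n - 1) - ε) := by positivity
  rcases hcase with hB | ⟨u, q, hq, hu, rfl, htq⟩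
  · obtain ⟨L, hL, hbound⟩ := hBset m α t ω hm hB
    exact ⟨L, hL, hbound.trans (by nlinarith)⟩
  · lift q to ℕ using by lia
    rw [Int.cast_natCast] at htq ht0 hpow₁ hpow₂ hpow ⊢
    obtain ⟨L, hL, hbound⟩ := hdiv m α u q ω hm hα0 hα1 (by exact_mod_cast hq) hu ht0 htq
    exact ⟨L, hL, hbound.trans (by nlinarith)⟩

/-! ### The ringing integral -/

lemma norm_integral_deriv_mul_le {q q' : ℝ → ℝ} {f : ℝ → ℂ} {a b C : ℝ} (hab : a ≤ b)
    (hq : ∀ y ∈ Set.Icc a b, HasDerivAt q (q' y) y) (hq' : ContinuousOn q' (Set.Icc a b))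
    (hq'_nonpos : ∀ y ∈ Set.Icc a b, q' y ≤ 0) (hf : ∀ y ∈ Set.Icc a b, ‖f y‖ ≤ C) :
    ‖∫ y in a..b, (q' y : ℂ) * f y‖ ≤ C * (q a - q b) := by
  rw [← Set.uIcc_of_le hab] at hq hq'
  rw [← neg_sub, ← intervalIntegral.integral_eq_sub_of_hasDerivAt hq hq'.intervalIntegrable,
    ← intervalIntegral.integral_neg, ← intervalIntegral.integral_const_mul]
  refine intervalIntegral.norm_integral_le_of_norm_le hab (Eventually.of_forall fun y hy => ?_)
    (hq'.neg.intervalIntegrable.const_mul _)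
  have hy' := Set.Ioc_subset_Icc_self hy
  rw [norm_mul, Complex.norm_real, Real.norm_eq_abs, abs_of_nonpos (hq'_nonpos y hy'), mul_comm]
  gcongr
  · exact neg_nonneg.mpr (hq'_nonpos y hy')
  · exact hf y hy'

lemma norm_integral_mul_deriv_mul_ee_le {φ φ' q q' : ℝ → ℝ} {a b : ℝ} (hab : a ≤ b)
    (hφ : ∀ y ∈ Set.Icc a b, HasDerivAt φ (φ' y) y) (hq : ∀ y ∈ Set.Icc a b, HasDerivAt q (q' y) y)
    (hφ' : ContinuousOn φ' (Set.Icc a b)) (hq' : ContinuousOn q' (Set.Icc a b))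
    (hq'_nonpos : ∀ y ∈ Set.Icc a b, q' y ≤ 0) (hqb : 0 ≤ q b) :
    ‖∫ y in a..b, ((q y * φ' y : ℝ) : ℂ) * ee (φ y)‖ ≤ q a / π := by
  set A : ℝ → ℂ := fun y => (2 * π * Complex.I)⁻¹ * ee (φ y)
  have hA : ∀ y, ‖A y‖ = (2 * π)⁻¹ := fun y => by
    simp [A, norm_ee, abs_of_pos Real.pi_pos]
  have hbdd : ‖∫ y in a..b, (q' y : ℂ) * A y‖ ≤ (2 * π)⁻¹ * (q a - q b) :=
    norm_integral_deriv_mul_le hab hq hq' hq'_nonpos fun y _ => (hA y).le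
  have hqa : q b ≤ q a := sub_nonneg.mp <| nonneg_of_mul_nonneg_right
    ((norm_nonneg _).trans hbdd) (by positivity)
  have hend : ∀ y, 0 ≤ q y → ‖(q y : ℂ) * A y‖ ≤ (2 * π)⁻¹ * q y := fun y hy => by
    rw [norm_mul, hA, Complex.norm_real, Real.norm_eq_abs, abs_of_nonneg hy, mul_comm]
  rw [← Set.uIcc_of_le hab] at hφ hq hφ' hq'
  have hee : ContinuousOn (fun y => ee (φ y)) (Set.uIcc a b) :=
    continuous_ee.comp_continuousOn fun y hy => (hφ y hy).continuousAt.continuousWithinAt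
  have hprim : ∀ y ∈ Set.uIcc a b, HasDerivAt A (φ' y * ee (φ y)) y := fun y hy =>
    (((hasDerivAt_ee (φ y)).scomp y (hφ y hy)).const_mul _).congr_deriv (by
      rw [Complex.real_smul]; field_simp)
  have hparts := intervalIntegral.integral_mul_deriv_eq_deriv_mul
    (fun y hy => (hq y hy).ofReal_comp) hprim
    (Complex.continuous_ofReal.comp_continuousOn hq').intervalIntegrable
    ((Complex.continuous_ofReal.comp_continuousOn hφ').mul hee).intervalIntegrable
  calc _ = ‖(q b : ℂ) * A b - (q a : ℂ) * A a - ∫ y in a..b, (q' y : ℂ) * A y‖ := by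
        rw [← hparts]; push_cast; simp only [mul_assoc]
    _ ≤ (2 * π)⁻¹ * q b + (2 * π)⁻¹ * q a + (2 * π)⁻¹ * (q a - q b) :=
        norm_sub_le_of_le (norm_sub_le_of_le (hend b hqb) (hend a (hqb.trans hqa))) hbdd
    _ = q a / π := by field_simp; ring

lemma pow_sub_one_add_nonneg {n : ℕ} (hn : 2 ≤ n) {s y : ℝ} (hy : 1 ≤ y) (hs : |s| ≤ y) :
    0 ≤ y ^ (n - 1) + s := by
  linarith [le_self_pow₀ hy (by lia : n - 1 ≠ 0), (abs_le.mp hs).1]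

lemma pow_le_mul_pow_add_mul {n : ℕ} (hn : 2 ≤ n) {s y : ℝ} (hy : 1 ≤ y) (hs : |s| ≤ y) :
    y ^ n ≤ n * y ^ n + s * y := by
  have hn2 : (2 : ℝ) ≤ n := by exact_mod_cast hn
  have hpow : y ^ n = y ^ (n - 1) * y := (pow_sub_one_mul (by lia) y).symm
  nlinarith [mul_nonneg (pow_sub_one_add_nonneg hn hy hs) (by linarith : 0 ≤ y),
    pow_nonneg (by linarith : 0 ≤ y) n]

lemma norm_integral_ee_pow_add_mul_div_le {n : ℕ} (hn : 2 ≤ n) {s Y R : ℝ} (hY : 1 ≤ Y)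
    (hs : |s| ≤ Y) (hYR : Y ≤ R) :
    ‖∫ y in Y..R, ee (y ^ n + s * y) / (y : ℂ)‖ ≤ (Y ^ n)⁻¹ / π := by
  have hn2 : (2 : ℝ) ≤ n := by exact_mod_cast hn
  have hpos : ∀ y, Y ≤ y → 0 < n * y ^ n + s * y := fun y hy =>
    (pow_pos (by linarith) n).trans_le
      (pow_le_mul_pow_add_mul hn (hY.trans hy) (hs.trans hy))
  have hphase : ∀ y : ℝ, HasDerivAt (fun y : ℝ => y ^ n + s * y) (n * y ^ (n - 1) + s) y :=
    fun y => by simpa using (hasDerivAt_pow n y).fun_add ((hasDerivAt_id y).const_mul s)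
  have hamp : ∀ y ∈ Set.Icc Y R, HasDerivAt (fun y : ℝ => (n * y ^ n + s * y)⁻¹)
      (-(n * (n * y ^ (n - 1)) + s) / (n * y ^ n + s * y) ^ 2) y := fun y hy => by
    simpa using (((hasDerivAt_pow n y).const_mul (n : ℝ)).fun_add
      ((hasDerivAt_id y).const_mul s)).fun_inv (hpos y hy.1).ne'
  have hanti : ∀ y ∈ Set.Icc Y R,
      -(n * (n * y ^ (n - 1)) + s) / (n * y ^ n + s * y) ^ 2 ≤ 0 := fun y hy => by
    refine div_nonpos_of_nonpos_of_nonneg (neg_nonpos.mpr ?_) (sq_nonneg _)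
    have hy1 : 0 ≤ y ^ (n - 1) := pow_nonneg (by linarith [hy.1]) _
    nlinarith [pow_sub_one_add_nonneg hn (hY.trans hy.1) (hs.trans hy.1),
      mul_nonneg (by linarith : (0 : ℝ) ≤ n) hy1]
  have hcancel : ∫ y in Y..R, ee (y ^ n + s * y) / (y : ℂ) = ∫ y in Y..R,
      (((n * y ^ n + s * y)⁻¹ * (n * y ^ (n - 1) + s) : ℝ) : ℂ) * ee (y ^ n + s * y) := by
    refine intervalIntegral.integral_congr fun y hy => ?_
    rw [Set.uIcc_of_le hYR] at hy
    have hy0 : y ≠ 0 := by linarith [hy.1]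
    have hquot : (n * y ^ n + s * y)⁻¹ * (n * y ^ (n - 1) + s) = y⁻¹ := by
      rw [inv_mul_eq_iff_eq_mul₀ (hpos y hy.1).ne', ← pow_sub_one_mul (by lia : n ≠ 0) y]
      field_simp
    simp only [hquot, Complex.ofReal_inv, div_eq_inv_mul]
  rw [hcancel]
  refine (norm_integral_mul_deriv_mul_ee_le hYR (fun y _ => hphase y) hamp (by fun_prop)
    (ContinuousOn.div (by fun_prop) (by fun_prop) fun y hy => pow_ne_zero 2 (hpos y hy.1).ne')
    hanti (inv_nonneg.mpr (hpos R hYR).le)).trans ?_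
  gcongr
  exact pow_le_mul_pow_add_mul hn hY hs

/-- The integrand of `Iint`, written with `Real.sinc` so that it is visibly continuous. -/
noncomputable def ringingIntegrand (n : ℕ) (s y : ℝ) : ℂ :=
  ee (y ^ n) * (2 * π * s * Real.sinc (2 * π * s * y) : ℝ)

lemma continuous_ringingIntegrand (n : ℕ) (s : ℝ) : Continuous (ringingIntegrand n s) := by
  have := continuous_ee
  have := Real.continuous_sinc
  unfold ringingIntegrand
  fun_prop

lemma ringingIntegrand_of_ne_zero (n : ℕ) (s : ℝ) {y : ℝ} (hy : y ≠ 0) :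
    ringingIntegrand n s y = ee (y ^ n) * (Real.sin (2 * π * s * y) : ℝ) / (y : ℂ) := by
  rw [ringingIntegrand, mul_div_assoc, ← Complex.ofReal_div]
  rcases eq_or_ne s 0 with rfl | hs
  · simp
  · have hπ := Real.pi_ne_zero
    rw [Real.sinc_of_ne_zero (by positivity)]
    congr 2
    field_simp

lemma Iint_eq_two_mul_integral {n : ℕ} (hn0 : n ≠ 0) (hne : Even n) (s R : ℝ) :
    Iint n s R = 2 * ∫ y in (0 : ℝ)..R, ringingIntegrand n s y := by
  have hsinc : Iint n s R = ∫ y in (-R)..R, ringingIntegrand n s y := by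
    refine intervalIntegral.integral_congr fun y _ => ?_
    split_ifs with hy
    · simp [ringingIntegrand, hy, hn0, ee_zero]
    · exact (ringingIntegrand_of_ne_zero n s hy).symm
  have heven : ∀ y, ringingIntegrand n s (-y) = ringingIntegrand n s y := fun y => by
    rw [ringingIntegrand, hne.neg_pow, mul_neg, Real.sinc_neg, ringingIntegrand]
  have hreflect : ∫ y in (-R)..0, ringingIntegrand n s y =
      ∫ y in (0 : ℝ)..R, ringingIntegrand n s y := by
    have h := intervalIntegral.integral_comp_neg (a := 0) (b := R) (ringingIntegrand n s)
    simp only [heven, neg_zero] at h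
    exact h.symm
  have hint := (continuous_ringingIntegrand n s).intervalIntegrable (μ := volume)
  rw [hsinc, ← intervalIntegral.integral_add_adjacent_intervals (hint (-R) 0) (hint 0 R),
    hreflect, two_mul]

lemma Iint_neg (n : ℕ) (s R : ℝ) : Iint n (-s) R = -Iint n s R := by
  rw [Iint, Iint, ← intervalIntegral.integral_neg]
  refine intervalIntegral.integral_congr fun y _ => ?_
  split_ifs
  · push_cast; ring
  · rw [mul_neg, neg_mul, Real.sin_neg]; push_cast; ring

lemma norm_Iint_sub_le {n : ℕ} (hn : 2 ≤ n) (hne : Even n) {s Y R : ℝ} (hY : 1 ≤ Y) (hs : |s| ≤ Y)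
    (hYR : Y ≤ R) : ‖Iint n s R - Iint n s Y‖ ≤ 2 * ((Y ^ n)⁻¹ / π) := by
  have hint := (continuous_ringingIntegrand n s).intervalIntegrable (μ := volume)
  have hint' : ∀ s : ℝ,
      IntervalIntegrable (fun y : ℝ => ee (y ^ n + s * y) / (y : ℂ)) volume Y R := by
    intro s
    refine ContinuousOn.intervalIntegrable (ContinuousOn.div ?_ (by fun_prop) fun y hy => ?_)
    · exact (continuous_ee.comp (by fun_prop)).continuousOn
    · rw [Set.uIcc_of_le hYR] at hy
      exact_mod_cast (by linarith [hy.1] : y ≠ 0)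
  have hsplit : ∫ y in Y..R, ringingIntegrand n s y = (2 * Complex.I)⁻¹ *
      ((∫ y in Y..R, ee (y ^ n + s * y) / (y : ℂ)) -
        ∫ y in Y..R, ee (y ^ n + -s * y) / (y : ℂ)) := by
    rw [← intervalIntegral.integral_sub (hint' _) (hint' _), ← intervalIntegral.integral_const_mul]
    refine intervalIntegral.integral_congr fun y hy => ?_
    rw [Set.uIcc_of_le hYR] at hy
    simp only [ringingIntegrand_of_ne_zero n s (by linarith [hy.1] : y ≠ 0), mul_assoc 2 π s,
      mul_assoc 2 (π * s) y, mul_assoc π s y, ee_add, neg_mul]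
    rw [← mul_assoc, ofReal_sin_eq_ee_sub]
    ring
  rw [Iint_eq_two_mul_integral (by lia) hne, Iint_eq_two_mul_integral (by lia) hne, ← mul_sub,
    intervalIntegral.integral_interval_sub_left (hint _ _) (hint _ _), hsplit, ← mul_assoc,
    norm_mul, show ‖(2 * (2 * Complex.I)⁻¹ : ℂ)‖ = 1 by simp, one_mul, two_mul]
  exact norm_sub_le_of_le (norm_integral_ee_pow_add_mul_div_le hn hY hs hYR)
    (norm_integral_ee_pow_add_mul_div_le hn hY (by rwa [abs_neg]) hYR)

lemma exists_tendsto_Iint {n : ℕ} (hn : 2 ≤ n) (hne : Even n) (s : ℝ) :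
    ∃ Is, Tendsto (fun R => ((1 / (2 * π) : ℝ) : ℂ) * Iint n s R) atTop (nhds Is) ∧
      ∀ Y, 1 ≤ Y → |s| ≤ Y → ‖Is - ((1 / (2 * π) : ℝ) : ℂ) * Iint n s Y‖ ≤ (Y ^ n)⁻¹ := by
  have hdecay : Tendsto (fun Y : ℝ => (Y ^ n)⁻¹) atTop (nhds 0) :=
    (tendsto_pow_atTop (by lia)).inv_tendsto_atTop
  obtain ⟨Is, hIs, hbound⟩ := exists_tendsto_of_norm_sub_le hdecay (N := max 1 |s|)
    (f := fun R => ((1 / (2 * π) : ℝ) : ℂ) * Iint n s R) fun Y R hY hYR => by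
      have hπ := Real.pi_gt_three
      have hY1 : 1 ≤ Y := (le_max_left _ _).trans hY
      rw [← mul_sub, norm_mul, Complex.norm_real, Real.norm_eq_abs, abs_of_pos (by positivity)]
      calc _ ≤ 1 / (2 * π) * (2 * ((Y ^ n)⁻¹ / π)) := by
            gcongr; exact norm_Iint_sub_le hn hne hY1 ((le_max_right _ _).trans hY) hYR
        _ = (π ^ 2)⁻¹ * (Y ^ n)⁻¹ := by field_simp
        _ ≤ 1 * (Y ^ n)⁻¹ := by gcongr; exact inv_le_one_of_one_le₀ (by nlinarith)
        _ = _ := one_mul _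
  exact ⟨Is, hIs, fun Y hY hs => hbound Y (max_le hY hs)⟩

/-! ### The Kuzmin–Landau method -/

lemma mul_sub_le_sub_and_sub_le_mul_sub {φ φ' : ℝ → ℝ} {x y : ℝ} (hxy : x ≤ y)
    (hφ : ∀ z ∈ Set.Icc x y, HasDerivAt φ (φ' z) z) (hmono : MonotoneOn φ' (Set.Icc x y)) :
    φ' x * (y - x) ≤ φ y - φ x ∧ φ y - φ x ≤ φ' y * (y - x) := by
  rcases hxy.eq_or_lt with rfl | hlt
  · simp
  obtain ⟨c, hc, hslope⟩ := exists_hasDerivAt_eq_slope φ φ' hlt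
    (fun z hz => (hφ z hz).continuousAt.continuousWithinAt)
    (fun z hz => hφ z (Set.Ioo_subset_Icc_self hz))
  have hc' := Set.Ioo_subset_Icc_self hc
  rw [eq_div_iff (sub_pos.mpr hlt).ne'] at hslope
  rw [← hslope]
  constructor <;> gcongr
  · exact hmono (Set.left_mem_Icc.mpr hxy) hc' hc'.1
  · exact hmono hc' (Set.right_mem_Icc.mpr hxy) hc'.2

lemma norm_sum_Ico_ee_sub_mul_le {φ : ℕ → ℝ} {g : ℝ → ℂ} {D : Set ℝ} {L : ℝ} {M N : ℕ}
    (hMN : M ≤ N) (hD : ∀ k ∈ Icc M N, φ (k + 1) - φ k ∈ D)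
    (hmono : ∀ k ∈ Ico M N, φ (k + 1) - φ k ≤ φ (k + 2) - φ (k + 1))
    (hg : ∀ x ∈ D, ∀ y ∈ D, ‖g x - g y‖ ≤ L * |x - y|) :
    ‖∑ k ∈ Ico M N, (ee (φ (k + 1)) - ee (φ k)) * g (φ (k + 1) - φ k)‖ ≤
      2 * (‖g (φ (N + 1) - φ N)‖ + L * ((φ (N + 1) - φ N) - (φ (M + 1) - φ M))) := by
  refine (norm_sum_Ico_mul_le_of_norm_sum_le (w := fun k => g (φ (k + 1) - φ k)) hMN
    (B := 2) fun j hMj _ => ?_).trans ?_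
  · rw [sum_Ico_sub (fun k => ee (φ k)) hMj]
    calc _ ≤ ‖ee (φ j)‖ + ‖ee (φ M)‖ := norm_sub_le _ _
      _ = 2 := by rw [norm_ee, norm_ee]; norm_num
  · gcongr
    rw [← sum_Ico_sub (fun k => φ (k + 1) - φ k) hMN, mul_sum]
    refine sum_le_sum fun k hk => ?_
    have hk' := mem_Ico.mp hk
    refine (hg _ (hD _ (mem_Icc.mpr (by lia))) _ (hD _ (mem_Icc.mpr (by lia)))).trans_eq ?_
    rw [abs_of_nonneg (sub_nonneg.mpr (hmono k hk))]

section InvEeSubOne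

variable {l x y : ℝ} (hl : 0 < l) (hx : x ∈ Set.Icc l (1 - l)) (hy : y ∈ Set.Icc l (1 - l))

include hl hx

lemma four_mul_le_norm_ee_sub_one : 4 * l ≤ ‖ee x - 1‖ := by
  rw [norm_ee_sub_one]
  linarith [two_mul_le_abs_sin_pi_mul hl.le hx.1 (by linarith [hx.2])]

lemma ee_sub_one_ne_zero : ee x - 1 ≠ 0 :=
  norm_pos_iff.mp (lt_of_lt_of_le (by positivity) (four_mul_le_norm_ee_sub_one hl hx))

include hy in
lemma norm_inv_ee_sub_one_sub_le :
    ‖(ee x - 1)⁻¹ - (ee y - 1)⁻¹‖ ≤ π / (8 * l ^ 2) * |x - y| := by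
  rw [inv_sub_inv (ee_sub_one_ne_zero hl hx) (ee_sub_one_ne_zero hl hy), sub_sub_sub_cancel_right,
    norm_div, norm_mul, norm_sub_rev]
  calc _ ≤ 2 * π * |x - y| / (4 * l * (4 * l)) := by
        gcongr
        exacts [norm_ee_sub_ee_le x y, four_mul_le_norm_ee_sub_one hl hx,
          four_mul_le_norm_ee_sub_one hl hy]
    _ = _ := by field_simp; ring

end InvEeSubOne

section MonotoneDerivative

variable {φ φ' : ℝ → ℝ} {M N : ℕ}
  (hφ : ∀ y ∈ Set.Icc (M : ℝ) (N + 1), HasDerivAt φ (φ' y) y)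
  (hmono : MonotoneOn φ' (Set.Icc (M : ℝ) (N + 1)))

include hφ hmono

lemma sub_mem_Icc_of_monotoneOn_deriv {k : ℕ} (hMk : M ≤ k) (hkN : k ≤ N) :
    φ (k + 1) - φ k ∈ Set.Icc (φ' k) (φ' (k + 1)) := by
  have hsub : Set.Icc (k : ℝ) (k + 1) ⊆ Set.Icc (M : ℝ) (N + 1) :=
    Set.Icc_subset_Icc (by exact_mod_cast hMk) (by gcongr)
  have h := mul_sub_le_sub_and_sub_le_mul_sub (by linarith : (k : ℝ) ≤ k + 1)
    (fun z hz => hφ z (hsub hz)) (hmono.mono hsub)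
  simpa using h

lemma norm_sum_Ico_ee_sub_mul_le_of_monotoneOn_deriv (hMN : M ≤ N) {g : ℝ → ℂ} {a b B L : ℝ}
    (hL : 0 ≤ L) (hφ' : ∀ y ∈ Set.Icc (M : ℝ) (N + 1), φ' y ∈ Set.Icc a b)
    (hgB : ∀ x ∈ Set.Icc a b, ‖g x‖ ≤ B)
    (hg : ∀ x ∈ Set.Icc a b, ∀ y ∈ Set.Icc a b, ‖g x - g y‖ ≤ L * |x - y|) :
    ‖∑ k ∈ Ico M N, (ee (φ (k + 1)) - ee (φ k)) * g (φ (k + 1) - φ k)‖ ≤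
      2 * (B + L * (b - a)) := by
  have hslope := fun k hMk hkN => sub_mem_Icc_of_monotoneOn_deriv hφ hmono (k := k) hMk hkN
  have hD : ∀ k : ℕ, M ≤ k → k ≤ N → φ (k + 1) - φ k ∈ Set.Icc a b := fun k hMk hkN => by
    have hk : (M : ℝ) ≤ k ∧ (k : ℝ) ≤ N := ⟨by exact_mod_cast hMk, by exact_mod_cast hkN⟩
    exact ⟨(hφ' k ⟨hk.1, by linarith⟩).1.trans (hslope k hMk hkN).1,
      (hslope k hMk hkN).2.trans (hφ' (k + 1) ⟨by linarith, by linarith⟩).2⟩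
  have hsum := norm_sum_Ico_ee_sub_mul_le (φ := fun k => φ k) (g := g) (D := Set.Icc a b) (L := L)
    hMN (fun k hk => by simpa using hD k (mem_Icc.mp hk).1 (mem_Icc.mp hk).2)
    (fun k hk => ?_) hg
  · push_cast at hsum
    refine hsum.trans ?_
    gcongr
    · exact hgB _ (hD N hMN le_rfl)
    · exact (hD N hMN le_rfl).2
    · exact (hD M le_rfl hMN).1
  · obtain ⟨hMk, hkN⟩ := mem_Ico.mp hk
    have hnext := (hslope (k + 1) (by lia) (by lia)).1
    push_cast at hnext ⊢
    rw [show (k : ℝ) + 2 = k + 1 + 1 by ring]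
    exact (hslope k hMk hkN.le).2.trans hnext

theorem norm_sum_Ico_ee_le_of_deriv_mem_Icc (hMN : M ≤ N) {l : ℝ} (hl : 0 < l)
    (hφ' : ∀ y ∈ Set.Icc (M : ℝ) (N + 1), φ' y ∈ Set.Icc l (1 - l)) :
    ‖∑ k ∈ Ico M N, ee (φ k)‖ ≤ 1 / l ^ 2 := by
  have hMN' : (M : ℝ) ≤ N := by exact_mod_cast hMN
  have hl2 : l ≤ 1 - l :=
    (hφ' M ⟨le_rfl, by linarith⟩).1.trans (hφ' M ⟨le_rfl, by linarith⟩).2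
  have hsum := norm_sum_Ico_ee_sub_mul_le_of_monotoneOn_deriv hφ hmono hMN
    (g := fun x => (ee x - 1)⁻¹) (B := 1 / (4 * l)) (by positivity) hφ'
    (fun x hx => by
      rw [norm_inv, ← one_div]; gcongr; exact four_mul_le_norm_ee_sub_one hl hx)
    (fun x hx y hy => norm_inv_ee_sub_one_sub_le hl hx hy)
  have hterm : ∀ k ∈ Ico M N,
      (ee (φ (k + 1)) - ee (φ k)) * (ee (φ (k + 1) - φ k) - 1)⁻¹ = ee (φ k) := fun k hk => by
    obtain ⟨hMk, hkN⟩ := mem_Ico.mp hk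
    have hk : (M : ℝ) ≤ k ∧ (k : ℝ) ≤ N := ⟨by exact_mod_cast hMk, by exact_mod_cast hkN.le⟩
    have hslope := sub_mem_Icc_of_monotoneOn_deriv hφ hmono hMk hkN.le
    rw [mul_inv_eq_iff_eq_mul₀ (ee_sub_one_ne_zero hl ⟨(hφ' k ⟨hk.1, by linarith⟩).1.trans hslope.1,
      hslope.2.trans (hφ' (k + 1) ⟨by linarith, by linarith⟩).2⟩), mul_sub, ← ee_add]
    ring_nf
  rw [sum_congr rfl hterm] at hsum
  refine hsum.trans ?_
  rw [← sub_nonneg]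
  have hπ := Real.pi_lt_four
  have hπ' := Real.pi_gt_three
  have : 1 / l ^ 2 - 2 * (1 / (4 * l) + π / (8 * l ^ 2) * (1 - l - l)) =
      (1 - π / 4 + l * (π - 1) / 2) / l ^ 2 := by
    field_simp; ring
  rw [this]
  have : 0 ≤ l * (π - 1) := by nlinarith
  exact div_nonneg (by linarith) (by positivity)

end MonotoneDerivative

/-! ### Comparing an exponential sum with the corresponding integral -/

/-- The moment `∫ ρ(w) e(δ w) dw` over the unit interval. -/
noncomputable def unitMoment (ρ : ℝ → ℝ) (δ : ℝ) : ℂ := ∫ w in (0 : ℝ)..1, (ρ w : ℂ) * ee (δ * w)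

section UnitMoment

variable {ρ : ℝ → ℝ} (hρ1 : ∀ w ∈ Set.Icc (0 : ℝ) 1, |ρ w| ≤ 1)

include hρ1

lemma norm_unitMoment_le_one (δ : ℝ) : ‖unitMoment ρ δ‖ ≤ 1 := by
  have h := intervalIntegral.norm_integral_le_of_norm_le_const (a := 0) (b := 1) (C := 1)
    (f := fun w => (ρ w : ℂ) * ee (δ * w)) fun w hw => by
      rw [Set.uIoc_of_le zero_le_one] at hw
      rw [norm_mul, norm_ee, mul_one, Complex.norm_real]
      exact hρ1 w (Set.Ioc_subset_Icc_self hw)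
  simpa [unitMoment] using h

lemma norm_unitMoment_sub_le (hρ : Continuous ρ) (x y : ℝ) :
    ‖unitMoment ρ x - unitMoment ρ y‖ ≤ 2 * π * |x - y| := by
  have hint : ∀ δ : ℝ,
      IntervalIntegrable (fun w => (ρ w : ℂ) * ee (δ * w)) volume 0 1 := fun δ => by
    have := continuous_ee
    exact (by fun_prop : Continuous fun w => (ρ w : ℂ) * ee (δ * w)).intervalIntegrable _ _
  rw [unitMoment, unitMoment, ← intervalIntegral.integral_sub (hint x) (hint y)]
  refine (intervalIntegral.norm_integral_le_of_norm_le_const (C := 2 * π * |x - y|)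
    fun w hw => ?_).trans_eq (by simp)
  rw [Set.uIoc_of_le zero_le_one] at hw
  rw [← mul_sub, norm_mul, Complex.norm_real]
  calc _ ≤ 1 * (2 * π * |x * w - y * w|) :=
        mul_le_mul (hρ1 w (Set.Ioc_subset_Icc_self hw)) (norm_ee_sub_ee_le _ _) (norm_nonneg _)
          zero_le_one
    _ = 2 * π * |x - y| * w := by rw [← sub_mul, abs_mul, abs_of_pos hw.1]; ring
    _ ≤ 2 * π * |x - y| := mul_le_of_le_one_right (by positivity) hw.2

end UnitMoment

lemma hasDerivAt_ee_mul (δ w : ℝ) :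
    HasDerivAt (fun w => ee (δ * w)) (2 * π * Complex.I * δ * ee (δ * w)) w :=
  ((hasDerivAt_ee (δ * w)).scomp w ((hasDerivAt_id w).const_mul δ)).congr_deriv (by
    simp; ring)

lemma two_pi_I_mul_unitMoment_one (δ : ℝ) :
    2 * π * Complex.I * δ * unitMoment 1 δ = ee δ - 1 := by
  have hcont : Continuous fun w => 2 * π * Complex.I * δ * ee (δ * w) := by
    have := continuous_ee
    fun_prop
  have h := intervalIntegral.integral_eq_sub_of_hasDerivAt (a := 0) (b := 1)
    (fun w _ => hasDerivAt_ee_mul δ w) (hcont.intervalIntegrable _ _)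
  rw [intervalIntegral.integral_const_mul, mul_one, mul_zero, ee_zero] at h
  simpa [unitMoment] using h

lemma two_pi_I_mul_unitMoment_one_sub (δ : ℝ) :
    2 * π * Complex.I * δ * unitMoment (fun w => 1 - w) δ = unitMoment 1 δ - 1 := by
  have := continuous_ee
  have hcont : Continuous fun w => 2 * π * Complex.I * δ * ee (δ * w) := by fun_prop
  have h := intervalIntegral.integral_mul_deriv_eq_deriv_mul (a := 0) (b := 1)
    (fun w _ => ((hasDerivAt_id w).const_sub 1).ofReal_comp) (fun w _ => hasDerivAt_ee_mul δ w)
    (continuous_const.intervalIntegrable _ _) (hcont.intervalIntegrable _ _)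
  simp only [mul_left_comm _ (2 * π * Complex.I * δ), intervalIntegral.integral_const_mul] at h
  simpa [unitMoment, ee_zero, sub_eq_add_neg, add_comm] using h

lemma abs_one_sub_le_one {w : ℝ} (hw : w ∈ Set.Icc (0 : ℝ) 1) : |1 - w| ≤ 1 :=
  abs_le.mpr ⟨by linarith [hw.2], by linarith [hw.1]⟩

lemma half_le_norm_unitMoment_one {δ : ℝ} (hδ : |δ| ≤ 1 / 16) : 1 / 2 ≤ ‖unitMoment 1 δ‖ := by
  have hclose : ‖unitMoment 1 δ - 1‖ ≤ 2 * π * |δ| * 1 := by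
    rw [← two_pi_I_mul_unitMoment_one_sub, norm_mul]
    gcongr
    · simp [abs_of_pos Real.pi_pos]
    · exact norm_unitMoment_le_one (fun _ => abs_one_sub_le_one) δ
  have htri := norm_sub_norm_le (1 : ℂ) (unitMoment 1 δ)
  rw [norm_one, norm_sub_rev] at htri
  nlinarith [Real.pi_lt_four, Real.pi_pos]

/-- The factor by which an exponential sum over unit steps of phase `δ` has to be corrected to
become an integral: `unitMoment 1 δ - 1 = (ee δ - 1) * stepCorrection δ` for small `δ`. -/
noncomputable def stepCorrection (δ : ℝ) : ℂ := unitMoment (fun w => 1 - w) δ / unitMoment 1 δ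

lemma ee_sub_one_mul_stepCorrection {δ : ℝ} (hδ : |δ| ≤ 1 / 16) :
    (ee δ - 1) * stepCorrection δ = unitMoment 1 δ - 1 := by
  have hne : unitMoment 1 δ ≠ 0 :=
    norm_pos_iff.mp (lt_of_lt_of_le (by norm_num) (half_le_norm_unitMoment_one hδ))
  rw [← two_pi_I_mul_unitMoment_one, ← two_pi_I_mul_unitMoment_one_sub, stepCorrection]
  field_simp

lemma norm_stepCorrection_le_two {δ : ℝ} (hδ : |δ| ≤ 1 / 16) : ‖stepCorrection δ‖ ≤ 2 := by
  rw [stepCorrection, norm_div]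
  calc _ ≤ 1 / (1 / 2 : ℝ) := by
        gcongr
        · exact norm_unitMoment_le_one (fun _ => abs_one_sub_le_one) δ
        · exact half_le_norm_unitMoment_one hδ
    _ = 2 := by norm_num

lemma norm_stepCorrection_sub_le {x y : ℝ} (hx : |x| ≤ 1 / 16) (hy : |y| ≤ 1 / 16) :
    ‖stepCorrection x - stepCorrection y‖ ≤ 12 * π * |x - y| := by
  have hlow := half_le_norm_unitMoment_one hx
  have hne : unitMoment 1 x ≠ 0 := norm_pos_iff.mp (lt_of_lt_of_le (by norm_num) hlow)
  have hne' : unitMoment 1 y ≠ 0 :=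
    norm_pos_iff.mp (lt_of_lt_of_le (by norm_num) (half_le_norm_unitMoment_one hy))
  have hsplit : stepCorrection x - stepCorrection y =
      ((unitMoment (fun w => 1 - w) x - unitMoment (fun w => 1 - w) y) -
        stepCorrection y * (unitMoment 1 x - unitMoment 1 y)) / unitMoment 1 x := by
    rw [stepCorrection, stepCorrection]; field_simp; ring
  rw [hsplit, norm_div, div_le_iff₀ (norm_pos_iff.mpr hne)]
  calc _ ≤ 2 * π * |x - y| + 2 * (2 * π * |x - y|) := by
        refine norm_sub_le_of_le (norm_unitMoment_sub_le (fun _ => abs_one_sub_le_one)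
          (by fun_prop) x y) ?_
        rw [norm_mul]
        gcongr
        · exact norm_stepCorrection_le_two hy
        · exact norm_unitMoment_sub_le (by simp) continuous_one x y
    _ = 12 * π * |x - y| * (1 / 2) := by ring
    _ ≤ _ := by gcongr

lemma norm_integral_ee_sub_mul_unitMoment_le {φ φ' : ℝ → ℝ} {a : ℝ}
    (hφ : ∀ y ∈ Set.Icc a (a + 1), HasDerivAt φ (φ' y) y)
    (hmono : MonotoneOn φ' (Set.Icc a (a + 1))) :
    ‖(∫ y in a..a + 1, ee (φ y)) - ee (φ a) * unitMoment 1 (φ (a + 1) - φ a)‖ ≤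
      2 * π * (φ' (a + 1) - φ' a) := by
  have hcee := continuous_ee
  have hcont : ContinuousOn (fun w => ee (φ (a + w))) (Set.uIcc 0 1) := by
    refine hcee.comp_continuousOn (ContinuousOn.comp (t := Set.Icc a (a + 1))
      (fun y hy => (hφ y hy).continuousAt.continuousWithinAt) (by fun_prop) fun w hw => ?_)
    rw [Set.uIcc_of_le zero_le_one] at hw
    exact ⟨by linarith [hw.1], by linarith [hw.2]⟩
  have hchord : Continuous fun w => ee (φ a + (φ (a + 1) - φ a) * w) := by fun_prop
  have hdiff : (∫ y in a..a + 1, ee (φ y)) - ee (φ a) * unitMoment 1 (φ (a + 1) - φ a) =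
      ∫ w in (0 : ℝ)..1, (ee (φ (a + w)) - ee (φ a + (φ (a + 1) - φ a) * w)) := by
    rw [intervalIntegral.integral_sub hcont.intervalIntegrable (hchord.intervalIntegrable _ _),
      intervalIntegral.integral_comp_add_left fun y => ee (φ y)]
    simp [unitMoment, ee_add]
  rw [hdiff]
  refine (intervalIntegral.norm_integral_le_of_norm_le_const
    (C := 2 * π * (φ' (a + 1) - φ' a)) fun w hw => ?_).trans_eq (by simp)
  rw [Set.uIoc_of_le zero_le_one] at hw
  have hw0 := hw.1.le
  refine (norm_ee_sub_ee_le _ _).trans ?_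
  gcongr
  have hsub : Set.Icc a (a + w) ⊆ Set.Icc a (a + 1) := Set.Icc_subset_Icc_right (by linarith [hw.2])
  have hshort := mul_sub_le_sub_and_sub_le_mul_sub (by linarith : a ≤ a + w)
    (fun z hz => hφ z (hsub hz)) (hmono.mono hsub)
  have hlong := mul_sub_le_sub_and_sub_le_mul_sub (by linarith : a ≤ a + 1) hφ hmono
  have hle : φ' (a + w) ≤ φ' (a + 1) :=
    hmono ⟨by linarith, by linarith [hw.2]⟩ ⟨by linarith, le_rfl⟩ (by linarith [hw.2])
  rw [add_sub_cancel_left] at hshort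
  rw [add_sub_cancel_left, mul_one, mul_one] at hlong
  have hscale := mul_le_mul_of_nonneg_right hlong.1 hw0
  have hscale' := mul_le_mul_of_nonneg_right hlong.2 hw0
  have hnonneg : 0 ≤ φ' (a + 1) - φ' a := by linarith
  rw [abs_le]
  constructor <;>
    nlinarith [mul_le_of_le_one_right hnonneg hw.2, mul_le_mul_of_nonneg_right hle hw0]

lemma norm_integral_ee_sub_sum_Ico_le {φ φ' : ℝ → ℝ} {M N : ℕ} (hMN : M ≤ N)
    (hφ : ∀ y ∈ Set.Icc (M : ℝ) N, HasDerivAt φ (φ' y) y)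
    (hmono : MonotoneOn φ' (Set.Icc (M : ℝ) N)) :
    ‖(∫ y in M..N, ee (φ y)) - ∑ k ∈ Ico M N, ee (φ k) * unitMoment 1 (φ (k + 1) - φ k)‖ ≤
      2 * π * (φ' N - φ' M) := by
  have hsub : ∀ k ∈ Ico M N, Set.Icc (k : ℝ) (k + 1) ⊆ Set.Icc (M : ℝ) N := fun k hk =>
    Set.Icc_subset_Icc (by exact_mod_cast (mem_Ico.mp hk).1) (by exact_mod_cast (mem_Ico.mp hk).2)
  have hint : ∑ k ∈ Ico M N, ∫ y in (k : ℝ)..k + 1, ee (φ y) = ∫ y in M..N, ee (φ y) := by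
    have h := intervalIntegral.sum_integral_adjacent_intervals_Ico (f := fun y => ee (φ y))
      (μ := volume) (a := fun k : ℕ => (k : ℝ)) hMN fun k hk =>
        ContinuousOn.intervalIntegrable (continuous_ee.comp_continuousOn fun y hy => by
          rw [Nat.cast_succ, Set.uIcc_of_le (by linarith)] at hy
          exact (hφ y (hsub k (by simpa using hk) hy)).continuousAt.continuousWithinAt)
    exact_mod_cast h
  rw [← hint, ← sum_sub_distrib, ← sum_Ico_sub (fun k : ℕ => φ' k) hMN, mul_sum]
  refine norm_sum_le_of_le _ fun k hk => ?_
  have h := norm_integral_ee_sub_mul_unitMoment_le (fun y hy => hφ y (hsub k hk hy))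
    (hmono.mono (hsub k hk))
  exact_mod_cast h

section MonotoneDerivative

variable {φ φ' : ℝ → ℝ} {M N : ℕ} (hMN : M ≤ N)
  (hφ : ∀ y ∈ Set.Icc (M : ℝ) (N + 1), HasDerivAt φ (φ' y) y)
  (hmono : MonotoneOn φ' (Set.Icc (M : ℝ) (N + 1)))
  (hφ' : ∀ y ∈ Set.Icc (M : ℝ) (N + 1), |φ' y| ≤ 1 / 16)

include hMN hφ hmono hφ'

lemma norm_sum_Ico_ee_mul_unitMoment_sub_one_le :
    ‖∑ k ∈ Ico M N, ee (φ k) * (unitMoment 1 (φ (k + 1) - φ k) - 1)‖ ≤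
      2 * (2 + 12 * π * (1 / 16 - -(1 / 16))) := by
  refine le_trans (le_of_eq ?_) (norm_sum_Ico_ee_sub_mul_le_of_monotoneOn_deriv hφ hmono hMN
    (by positivity) (fun y hy => abs_le.mp (hφ' y hy))
    (fun x hx => norm_stepCorrection_le_two (abs_le.mpr hx))
    (fun x hx y hy => norm_stepCorrection_sub_le (abs_le.mpr hx) (abs_le.mpr hy)))
  refine congrArg norm (sum_congr rfl fun k hk => ?_)
  obtain ⟨hMk, hkN⟩ := mem_Ico.mp hk
  have hk : (M : ℝ) ≤ k ∧ (k : ℝ) ≤ N := ⟨by exact_mod_cast hMk, by exact_mod_cast hkN.le⟩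
  have hslope := sub_mem_Icc_of_monotoneOn_deriv hφ hmono hMk hkN.le
  have hleft := abs_le.mp (hφ' k ⟨hk.1, by linarith⟩)
  have hright := abs_le.mp (hφ' (k + 1) ⟨by linarith, by linarith⟩)
  have hstep : ee (φ (k + 1)) = ee (φ k) * ee (φ (k + 1) - φ k) := by
    rw [← ee_add, add_sub_cancel]
  rw [hstep, ← ee_sub_one_mul_stepCorrection
    (abs_le.mpr ⟨hleft.1.trans hslope.1, hslope.2.trans hright.2⟩)]
  ring

theorem norm_sum_Ico_ee_sub_integral_le :
    ‖∑ k ∈ Ico M N, ee (φ k) - ∫ y in M..N, ee (φ y)‖ ≤ 15 := by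
  have hMN' : (M : ℝ) ≤ N := by exact_mod_cast hMN
  have hsub : Set.Icc (M : ℝ) N ⊆ Set.Icc (M : ℝ) (N + 1) :=
    Set.Icc_subset_Icc_right (by linarith)
  have hchords := norm_sum_Ico_ee_mul_unitMoment_sub_one_le hMN hφ hmono hφ'
  have hcurves := norm_integral_ee_sub_sum_Ico_le hMN (fun y hy => hφ y (hsub hy))
    (hmono.mono hsub)
  have hsplit : ∑ k ∈ Ico M N, ee (φ k) - ∫ y in M..N, ee (φ y) =
      -(∑ k ∈ Ico M N, ee (φ k) * (unitMoment 1 (φ (k + 1) - φ k) - 1)) -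
      ((∫ y in M..N, ee (φ y)) -
        ∑ k ∈ Ico M N, ee (φ k) * unitMoment 1 (φ (k + 1) - φ k)) := by
    simp only [mul_sub, mul_one, sum_sub_distrib]; ring
  rw [hsplit]
  refine (norm_sub_le_of_le ((norm_neg _).trans_le hchords) hcurves).trans ?_
  have hleft := abs_le.mp (hφ' M ⟨le_rfl, by linarith⟩)
  have hright := abs_le.mp (hφ' N ⟨hMN', by linarith⟩)
  nlinarith [Real.pi_lt_d2, Real.pi_pos]

end MonotoneDerivative

/-! ### The jump at zero -/

lemma integral_ee_mul (β y : ℝ) :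
    ∫ v in (-β)..β, ee (v * y) = (2 * β * Real.sinc (2 * π * β * y) : ℝ) := by
  rcases eq_or_ne y 0 with rfl | hy
  · simp [ee_zero, two_mul]
  have hscale := intervalIntegral.integral_comp_mul_right (a := -β) (b := β)
    (fun x : ℝ => Complex.exp (x * Complex.I)) (c := 2 * π * y)
    (mul_ne_zero Real.two_pi_pos.ne' hy)
  rw [neg_mul, integral_exp_mul_I_eq_sinc, Complex.real_smul] at hscale
  have hexp : ∀ v, ee (v * y) = Complex.exp ((v * (2 * π * y) : ℝ) * Complex.I) := fun v => by
    rw [ee_eq_exp_mul_I]; ring_nf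
  have hyc : (y : ℂ) ≠ 0 := Complex.ofReal_ne_zero.mpr hy
  simp only [hexp, hscale, mul_comm β (2 * π * y), mul_right_comm (2 * π) y β]
  push_cast
  field_simp

lemma two_mul_mul_sinc_of_ne_zero (β : ℝ) {y : ℝ} (hy : y ≠ 0) :
    2 * β * Real.sinc (2 * π * β * y) = Real.sin (2 * π * β * y) / (π * y) := by
  rcases eq_or_ne β 0 with rfl | hβ
  · simp
  · have hπ := Real.pi_ne_zero
    rw [Real.sinc_of_ne_zero (by positivity)]
    field_simp

lemma integral_sum_range_ee {n : ℕ} (hn : n ≠ 0) (t β : ℝ) {N : ℕ} (hN : 1 ≤ N) :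
    ∫ v in (-β)..β, ∑ k ∈ range N, ee (t * (k : ℝ) ^ n + v * k) =
      twistedSawtooth n t β N + (2 * β : ℝ) := by
  have := continuous_ee
  rw [intervalIntegral.integral_finsetSum fun k _ =>
    Continuous.intervalIntegrable (by fun_prop) _ _, twistedSawtooth]
  simp only [ee_add, intervalIntegral.integral_const_mul, integral_ee_mul]
  rw [← Nat.sub_add_cancel hN, sum_range_succ', sum_range_succ']
  congr 1
  · simp only [two_mul_mul_sinc_of_ne_zero β (Nat.cast_ne_zero.mpr (Nat.succ_ne_zero _)),
      CharP.cast_eq_zero, mul_zero, Real.sin_zero, zero_div, Complex.ofReal_zero, add_zero]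
  · simp [hn, ee_zero]

lemma integral_integral_ee {n : ℕ} (hn : n ≠ 0) (hne : Even n) {t τ : ℝ} (hτt : τ ^ n = t)
    (s N : ℝ) :
    ∫ v in (-(s * τ))..(s * τ), ∫ y in (0 : ℝ)..N, ee (t * y ^ n + v * y) =
      ((1 / (2 * π) : ℝ) : ℂ) * Iint n s (N * τ) := by
  have := continuous_ee
  have hcont : Continuous (Function.uncurry fun v y : ℝ => ee (t * y ^ n + v * y)) := by
    simp only [Function.uncurry_def]; fun_prop
  have hsubst := intervalIntegral.smul_integral_comp_mul_right (a := 0) (b := N)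
    (ringingIntegrand n s) τ
  rw [zero_mul] at hsubst
  rw [intervalIntegral_intervalIntegral_swap ((hcont.continuousOn.integrableOn_compact
    (isCompact_uIcc.prod isCompact_uIcc)).mono_set
    (Set.prod_mono Set.uIoc_subset_uIcc Set.uIoc_subset_uIcc)),
    Iint_eq_two_mul_integral hn hne, ← hsubst, Complex.real_smul]
  simp only [ee_add, intervalIntegral.integral_const_mul, integral_ee_mul]
  simp only [← intervalIntegral.integral_const_mul]
  refine intervalIntegral.integral_congr fun y _ => ?_
  simp only [ringingIntegrand, mul_pow, hτt]
  rw [show 2 * π * s * (y * τ) = 2 * π * (s * τ) * y by ring, mul_comm (y ^ n)]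
  push_cast
  field_simp

lemma hasDerivAt_mul_pow_add_mul (n : ℕ) (t v y : ℝ) :
    HasDerivAt (fun y : ℝ => t * y ^ n + v * y) (t * n * y ^ (n - 1) + v) y := by
  simpa [mul_assoc] using
    ((hasDerivAt_pow n y).const_mul t).fun_add ((hasDerivAt_id y).const_mul v)

lemma monotoneOn_mul_pow_add (n : ℕ) {t : ℝ} (ht : 0 ≤ t) (v : ℝ) :
    MonotoneOn (fun y : ℝ => t * n * y ^ (n - 1) + v) (Set.Ici 0) := by
  intro x hx y _ hxy
  have hx0 : 0 ≤ x := hx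
  simp only
  gcongr

lemma mul_pow_mem_Icc {n N : ℕ} {t y c : ℝ} (ht : 0 ≤ t) (hy : y ∈ Set.Icc (0 : ℝ) (N + 1))
    (hslope : t * n * ((N : ℝ) + 1) ^ (n - 1) ≤ c) : t * n * y ^ (n - 1) ∈ Set.Icc 0 c := by
  obtain ⟨hy0, hyN⟩ := hy
  exact ⟨by positivity, le_trans (by gcongr) hslope⟩

lemma norm_sum_range_ee_sub_integral_le {n : ℕ} {t v : ℝ} {N : ℕ} (ht : 0 ≤ t)
    (hslope : t * n * ((N : ℝ) + 1) ^ (n - 1) ≤ 1 / 32) (hv : |v| ≤ 1 / 32) :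
    ‖∑ k ∈ range N, ee (t * (k : ℝ) ^ n + v * k) -
      ∫ y in (0 : ℝ)..N, ee (t * y ^ n + v * y)‖ ≤ 15 := by
  have hφ' : ∀ y ∈ Set.Icc ((0 : ℕ) : ℝ) (N + 1), |t * n * y ^ (n - 1) + v| ≤ 1 / 16 := by
    intro y hy
    rw [Nat.cast_zero] at hy
    obtain ⟨hlo, hhi⟩ := mul_pow_mem_Icc ht hy hslope
    exact (abs_add_le _ _).trans (by rw [abs_of_nonneg hlo]; linarith)
  simpa only [range_eq_Ico, Nat.cast_zero] using
    norm_sum_Ico_ee_sub_integral_le N.zero_le (fun y _ => hasDerivAt_mul_pow_add_mul n t v y)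
      ((monotoneOn_mul_pow_add n ht v).mono fun y hy => by simpa using hy.1) hφ'

theorem norm_twistedSawtooth_sub_Iint_le {n : ℕ} (hn : n ≠ 0) (hne : Even n) {t τ s : ℝ} {N : ℕ}
    (ht : 0 ≤ t) (hτt : τ ^ n = t) (hN : 1 ≤ N)
    (hslope : t * n * ((N : ℝ) + 1) ^ (n - 1) ≤ 1 / 32) (hs : |s * τ| ≤ 1 / 32) :
    ‖twistedSawtooth n t (s * τ) N - ((1 / (2 * π) : ℝ) : ℂ) * Iint n s (N * τ)‖ ≤
      32 * |s * τ| := by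
  have := continuous_ee
  have hdiff : twistedSawtooth n t (s * τ) N + (2 * (s * τ) : ℝ) -
      ((1 / (2 * π) : ℝ) : ℂ) * Iint n s (N * τ) =
      ∫ v in (-(s * τ))..(s * τ), (∑ k ∈ range N, ee (t * (k : ℝ) ^ n + v * k) -
        ∫ y in (0 : ℝ)..N, ee (t * y ^ n + v * y)) := by
    rw [intervalIntegral.integral_sub, integral_sum_range_ee hn t _ hN,
      integral_integral_ee hn hne hτt]
    · exact Continuous.intervalIntegrable (by fun_prop) _ _
    · refine Continuous.intervalIntegrable ?_ _ _
      exact intervalIntegral.continuous_parametric_intervalIntegral_of_continuous' (by fun_prop) _ _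
  have hbound := intervalIntegral.norm_integral_le_of_norm_le_const (a := -(s * τ)) (b := s * τ)
    fun v hv => norm_sum_range_ee_sub_integral_le ht hslope (v := v) <| by
      obtain ⟨hlo, hhi⟩ := abs_le.mp hs
      rcases Set.mem_uIoc.mp hv with h | h <;> exact abs_le.mpr ⟨by linarith, by linarith⟩
  have habs : |2 * (s * τ)| = 2 * |s * τ| := by rw [abs_mul, abs_two]
  rw [sub_neg_eq_add, ← two_mul, habs, ← hdiff] at hbound
  calc _ = ‖(twistedSawtooth n t (s * τ) N + (2 * (s * τ) : ℝ) -
        ((1 / (2 * π) : ℝ) : ℂ) * Iint n s (N * τ)) - (2 * (s * τ) : ℝ)‖ := by ring_nf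
    _ ≤ 15 * (2 * |s * τ|) + 2 * |s * τ| := norm_sub_le_of_le hbound
        (by rw [Complex.norm_real, Real.norm_eq_abs, habs])
    _ = _ := by ring

/-! ### Away from the jump -/

/-- Partial sums of the Fourier series of the sawtooth `1 / 2 - θ` on `(0, 1)`. The index `0`
contributes nothing, by the convention `x / 0 = 0`. -/
noncomputable def sawtoothSum (θ : ℝ) (K : ℕ) : ℝ :=
  ∑ k ∈ range K, Real.sin (2 * π * θ * k) / (π * k)

lemma sawtoothSum_one_half (K : ℕ) : sawtoothSum (1 / 2) K = 0 := by
  refine sum_eq_zero fun k _ => ?_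
  rw [show 2 * π * (1 / 2) * k = k * π by ring, Real.sin_nat_mul_pi, zero_div]

lemma sawtoothSum_one_sub (θ : ℝ) (K : ℕ) : sawtoothSum (1 - θ) K = -sawtoothSum θ K := by
  rw [sawtoothSum, sawtoothSum, ← sum_neg_distrib]
  refine sum_congr rfl fun k _ => ?_
  rw [show 2 * π * (1 - θ) * k = k * (2 * π) - 2 * π * θ * k by ring,
    Real.sin_nat_mul_two_pi_sub, neg_div]

lemma sin_mul_one_add_sum_cos (x : ℝ) (K : ℕ) :
    Real.sin (π * x) * (1 + ∑ k ∈ range K, 2 * Real.cos (2 * π * x * (k + 1))) =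
      Real.sin ((2 * K + 1) * π * x) := by
  induction K with
  | zero => simp
  | succ K ih =>
    rw [sum_range_succ, ← add_assoc, mul_add, ih, mul_left_comm, ← mul_assoc,
      Real.two_mul_sin_mul_cos, show π * x - 2 * π * x * (K + 1) = -((2 * K + 1) * π * x) by ring,
      Real.sin_neg]
    push_cast
    ring_nf

lemma hasDerivAt_sawtoothSum_add (K : ℕ) (x : ℝ) :
    HasDerivAt (fun θ => sawtoothSum θ (K + 1) + θ)
      (1 + ∑ k ∈ range K, 2 * Real.cos (2 * π * x * (k + 1))) x := by
  have hterm : ∀ k ∈ range K, HasDerivAt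
      (fun θ : ℝ => Real.sin (2 * π * θ * (k + 1 : ℕ)) / (π * (k + 1 : ℕ)))
      (2 * Real.cos (2 * π * x * (k + 1))) x := fun k _ => by
    have hlin : HasDerivAt (fun θ : ℝ => 2 * π * θ * (k + 1 : ℕ)) (2 * π * (k + 1 : ℕ)) x := by
      simpa using ((hasDerivAt_id x).const_mul (2 * π)).mul_const ((k + 1 : ℕ) : ℝ)
    refine (hlin.sin.div_const _).congr_deriv ?_
    push_cast
    field_simp
  have hfun : (fun θ => sawtoothSum θ (K + 1) + θ) = fun θ =>
      (∑ k ∈ range K, Real.sin (2 * π * θ * (k + 1 : ℕ)) / (π * (k + 1 : ℕ))) + θ := by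
    funext θ
    rw [sawtoothSum, sum_range_succ']
    simp
  rw [hfun, add_comm]
  exact (HasDerivAt.fun_sum hterm).fun_add (hasDerivAt_id x)

lemma sin_pi_mul_pos {x : ℝ} (h0 : 0 < x) (h1 : x < 1) : 0 < Real.sin (π * x) :=
  Real.sin_pos_of_pos_of_lt_pi (mul_pos Real.pi_pos h0) (mul_lt_of_lt_one_right Real.pi_pos h1)

lemma norm_integral_inv_sin_mul_ee_le {θ c : ℝ} (h0 : 0 < θ) (h : θ ≤ 1 / 2) (hc : 0 < c) :
    ‖∫ x in θ..1 / 2, ((Real.sin (π * x))⁻¹ : ℝ) * ee (c * x)‖ ≤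
      (c * Real.sin (π * θ))⁻¹ / π := by
  have hsin : ∀ x ∈ Set.Icc θ (1 / 2), Real.sin (π * x) ≠ 0 := fun x hx =>
    (sin_pi_mul_pos (h0.trans_le hx.1) (by linarith [hx.2])).ne'
  have hq : ∀ x ∈ Set.Icc θ (1 / 2), HasDerivAt (fun x => (c * Real.sin (π * x))⁻¹)
      (-(c * (Real.cos (π * x) * π)) / (c * Real.sin (π * x)) ^ 2) x := fun x hx => by
    have hlin : HasDerivAt (fun x => π * x) π x := by simpa using (hasDerivAt_id x).const_mul π
    exact (hlin.sin.const_mul c).fun_inv (mul_ne_zero hc.ne' (hsin x hx))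
  have hlin : ∀ x ∈ Set.Icc θ (1 / 2), HasDerivAt (fun x => c * x) c x := fun x _ => by
    simpa using (hasDerivAt_id x).const_mul c
  have hbound := norm_integral_mul_deriv_mul_ee_le h hlin hq continuousOn_const
    (ContinuousOn.div (by fun_prop) (by fun_prop) fun x hx =>
      pow_ne_zero 2 (mul_ne_zero hc.ne' (hsin x hx)))
    (fun x hx => div_nonpos_of_nonpos_of_nonneg (neg_nonpos.mpr (by
      have := Real.cos_nonneg_of_mem_Icc (x := π * x)
        ⟨by nlinarith [hx.1, Real.pi_pos], by nlinarith [hx.2, Real.pi_pos]⟩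
      positivity)) (sq_nonneg _))
    (inv_nonneg.mpr (mul_nonneg hc.le (sin_pi_mul_pos (by norm_num) (by norm_num)).le))
  simpa only [mul_inv_rev, inv_mul_cancel_right₀ hc.ne'] using hbound

lemma sawtoothSum_sub_eq_integral {θ : ℝ} (h0 : 0 < θ) (h : θ ≤ 1 / 2) (K : ℕ) :
    sawtoothSum θ (K + 1) - (1 / 2 - θ) =
      -∫ x in θ..1 / 2, (Real.sin (π * x))⁻¹ * Real.sin ((2 * K + 1) * π * x) := by
  have hftc := intervalIntegral.integral_eq_sub_of_hasDerivAt (a := θ) (b := 1 / 2)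
    (fun x _ => hasDerivAt_sawtoothSum_add K x)
    (Continuous.intervalIntegrable (by fun_prop) _ _)
  have hkernel : ∫ x in θ..1 / 2, (Real.sin (π * x))⁻¹ * Real.sin ((2 * K + 1) * π * x) =
      ∫ x in θ..1 / 2, 1 + ∑ k ∈ range K, 2 * Real.cos (2 * π * x * (k + 1)) := by
    refine intervalIntegral.integral_congr fun x hx => ?_
    rw [Set.uIcc_of_le h] at hx
    rw [← sin_mul_one_add_sum_cos, inv_mul_cancel_left₀
      (sin_pi_mul_pos (h0.trans_le hx.1) (by linarith [hx.2])).ne']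
  rw [hkernel, hftc, sawtoothSum_one_half]
  ring

lemma abs_sawtoothSum_sub_le_of_le_half {θ : ℝ} (h0 : 0 < θ) (h : θ ≤ 1 / 2) (K : ℕ) :
    |sawtoothSum θ (K + 1) - (1 / 2 - θ)| ≤ 1 / (θ * (K + 1)) := by
  have him : ∫ x in θ..1 / 2, (Real.sin (π * x))⁻¹ * Real.sin ((2 * K + 1) * π * x) =
      (∫ x in θ..1 / 2, ((Real.sin (π * x))⁻¹ : ℝ) * ee ((2 * K + 1) / 2 * x)).im := by
    have hcont : ContinuousOn (fun x : ℝ =>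
        (((Real.sin (π * x))⁻¹ : ℝ) : ℂ) * ee ((2 * K + 1) / 2 * x)) (Set.uIcc θ (1 / 2)) := by
      refine (Complex.continuous_ofReal.comp_continuousOn
        (ContinuousOn.inv₀ (by fun_prop) fun x hx => ?_)).mul
          (continuous_ee.comp (by fun_prop)).continuousOn
      rw [Set.uIcc_of_le h] at hx
      exact (sin_pi_mul_pos (h0.trans_le hx.1) (by linarith [hx.2])).ne'
    refine Eq.trans ?_ (Complex.imCLM.intervalIntegral_comp_comm hcont.intervalIntegrable)
    refine intervalIntegral.integral_congr fun x _ => ?_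
    simp only [Complex.imCLM_apply, Complex.im_ofReal_mul, im_ee]
    ring_nf
  have hsin : 2 * θ ≤ Real.sin (π * θ) := by
    have := two_mul_le_abs_sin_pi_mul h0.le le_rfl (by linarith)
    rwa [abs_of_pos (sin_pi_mul_pos h0 (by linarith))] at this
  rw [sawtoothSum_sub_eq_integral h0 h, abs_neg, him]
  refine (Complex.abs_im_le_norm _).trans
    ((norm_integral_inv_sin_mul_ee_le h0 h (by positivity)).trans ?_)
  calc _ ≤ ((2 * K + 1) / 2 * (2 * θ))⁻¹ / π := by gcongr
    _ = (π * (2 * K + 1) * θ)⁻¹ := by field_simp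
    _ ≤ (1 * (K + 1) * θ)⁻¹ := by
      gcongr
      · linarith [Real.pi_gt_three]
      · linarith [(Nat.cast_nonneg K : (0 : ℝ) ≤ K)]
    _ = _ := by rw [one_mul, one_div, mul_comm]

lemma abs_sawtoothSum_sub_le {l θ : ℝ} (hl : 0 < l) (hθ : θ ∈ Set.Icc l (1 - l)) (K : ℕ) :
    |sawtoothSum θ (K + 1) - (1 / 2 - θ)| ≤ 1 / (l * (K + 1)) := by
  obtain ⟨hlθ, hθl⟩ := hθ
  rcases le_total θ (1 / 2) with h | h
  · exact (abs_sawtoothSum_sub_le_of_le_half (hl.trans_le hlθ) h K).trans (by gcongr)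
  · have hrefl := abs_sawtoothSum_sub_le_of_le_half (θ := 1 - θ) (by linarith) (by linarith) K
    rw [sawtoothSum_one_sub, ← abs_neg] at hrefl
    calc _ = |-(-sawtoothSum θ (K + 1) - (1 / 2 - (1 - θ)))| := by ring_nf
      _ ≤ 1 / ((1 - θ) * (K + 1)) := hrefl
      _ ≤ _ := by gcongr; linarith

lemma norm_sum_Ico_ee_mul_pow_add_le {n M N : ℕ} {t θ l : ℝ} (ht : 0 ≤ t) (hl : 0 < l)
    (hθ : θ ∈ Set.Icc l (1 - l)) (hMN : M ≤ N)
    (hslope : t * n * ((N : ℝ) + 1) ^ (n - 1) ≤ l / 2) :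
    ‖∑ k ∈ Ico M N, ee (t * (k : ℝ) ^ n + θ * k)‖ ≤ 4 / l ^ 2 := by
  have hnonneg : Set.Icc (M : ℝ) (N + 1) ⊆ Set.Icc 0 (N + 1) :=
    Set.Icc_subset_Icc_left M.cast_nonneg
  have hφ' : ∀ y ∈ Set.Icc (M : ℝ) (N + 1),
      t * n * y ^ (n - 1) + θ ∈ Set.Icc (l / 2) (1 - l / 2) := fun y hy => by
    obtain ⟨hlo, hhi⟩ := mul_pow_mem_Icc ht (hnonneg hy) hslope
    exact ⟨by linarith [hθ.1], by linarith [hθ.2]⟩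
  refine (norm_sum_Ico_ee_le_of_deriv_mem_Icc (fun y _ => hasDerivAt_mul_pow_add_mul n t θ y)
    ((monotoneOn_mul_pow_add n ht θ).mono fun y hy => (hnonneg hy).1) hMN
    (half_pos hl) hφ').trans_eq ?_
  field_simp
  norm_num

lemma norm_twistedSawtooth_sub_le_of_slope_le {n M N : ℕ} {t θ l : ℝ} (ht : 0 ≤ t) (hl : 0 < l)
    (hθ : θ ∈ Set.Icc l (1 - l)) (hM : 1 ≤ M) (hMN : M ≤ N)
    (hslope : t * n * ((N : ℝ) + 1) ^ (n - 1) ≤ l / 2) :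
    ‖twistedSawtooth n t θ N - twistedSawtooth n t θ M‖ ≤ 4 / l ^ 2 / M := by
  have hblock : ∀ θ' ∈ Set.Icc l (1 - l),
      ‖∑ k ∈ Ico M N, ee (t * (k : ℝ) ^ n + θ' * k) * (k : ℂ)⁻¹‖ ≤ 4 / l ^ 2 / M :=
    fun θ' hθ' => norm_sum_Ico_mul_inv_le_of_norm_sum_le hM hMN fun j hMj hjN =>
      norm_sum_Ico_ee_mul_pow_add_le ht hl hθ' hMj (le_trans (by gcongr) hslope)
  have hperiod : ∀ k : ℕ, ee (t * (k : ℝ) ^ n + -θ * k) = ee (t * (k : ℝ) ^ n + (1 - θ) * k) := by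
    intro k
    rw [show t * (k : ℝ) ^ n + (1 - θ) * k = t * (k : ℝ) ^ n + -θ * k + (k : ℤ) by
      push_cast; ring, ee_add _ ((k : ℤ) : ℝ), ee_intCast, mul_one]
  rw [twistedSawtooth_sub n t θ hMN]
  simp only [ee_mul_ofReal_sin_div, hperiod]
  rw [← mul_sum, sum_sub_distrib, norm_mul]
  calc _ ≤ 1 / 2 * (4 / l ^ 2 / M + 4 / l ^ 2 / M) := by
        gcongr
        · exact norm_inv_two_pi_mul_I_le
        · exact norm_sub_le_of_le (hblock θ hθ)
            (hblock (1 - θ) ⟨by linarith [hθ.2], by linarith [hθ.1]⟩)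
    _ = _ := by ring

lemma twistedSawtooth_sub_eq {n : ℕ} (hn : n ≠ 0) (t θ : ℝ) (M : ℕ) (c : ℝ) :
    twistedSawtooth n t θ M - c = ((sawtoothSum θ M - c : ℝ) : ℂ) * ee (t * (M : ℝ) ^ n) -
      ∑ k ∈ range M, ((sawtoothSum θ (k + 1) - c : ℝ) : ℂ) *
        (ee (t * ((k + 1 : ℕ) : ℝ) ^ n) - ee (t * (k : ℝ) ^ n)) := by
  have habel := sum_Ico_mul_eq_sub
    (fun k : ℕ => ((Real.sin (2 * π * θ * k) / (π * k) : ℝ) : ℂ))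
    (fun k : ℕ => ee (t * (k : ℝ) ^ n)) M.zero_le
  have htelescope := sum_range_sub (fun k : ℕ => ee (t * (k : ℝ) ^ n)) M
  simp only [← range_eq_Ico, ← Complex.ofReal_sum] at habel
  simp only [twistedSawtooth, mul_comm (ee _), habel, sawtoothSum, Complex.ofReal_sub, sub_mul,
    sum_sub_distrib, ← mul_sum, htelescope, Nat.cast_zero, zero_pow hn, mul_zero, ee_zero]
  ring

lemma norm_ee_mul_pow_succ_sub_le {n : ℕ} {t : ℝ} (ht : 0 ≤ t) (k : ℕ) :
    ‖ee (t * ((k + 1 : ℕ) : ℝ) ^ n) - ee (t * (k : ℝ) ^ n)‖ ≤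
      2 * π * (t * (n * ((k : ℝ) + 1) ^ (n - 1))) := by
  refine (norm_ee_sub_ee_le _ _).trans ?_
  have hpow := abs_pow_sub_pow_le (((k + 1 : ℕ) : ℝ)) k n
  have habs : |(k : ℝ) + 1| = k + 1 := abs_of_nonneg (by positivity)
  rw [max_eq_left (by push_cast; rw [habs, Nat.abs_cast]; linarith)] at hpow
  rw [← mul_sub, abs_mul, abs_of_nonneg ht]
  gcongr
  simpa [habs] using hpow

lemma norm_twistedSawtooth_sub_one_half_sub_le {n M : ℕ} (hn : 2 ≤ n) {t θ l : ℝ} (ht : 0 ≤ t)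
    (hl : 0 < l) (hθ : θ ∈ Set.Icc l (1 - l)) (hM : 1 ≤ M) :
    ‖twistedSawtooth n t θ M - (1 / 2 - θ : ℝ)‖ ≤
      1 / l / M + 2 * π * n / l * (t * (M : ℝ) ^ (n - 1)) := by
  have : (0 : ℝ) < M := by exact_mod_cast hM
  have hboundary : ‖((sawtoothSum θ M - (1 / 2 - θ) : ℝ) : ℂ) * ee (t * (M : ℝ) ^ n)‖ ≤
      1 / l / M := by
    rw [norm_mul, norm_ee, mul_one, Complex.norm_real, Real.norm_eq_abs, div_div]
    simpa [Nat.sub_add_cancel hM, hM] using abs_sawtoothSum_sub_le hl hθ (M - 1)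
  have hterm : ∀ k ∈ range M, ‖((sawtoothSum θ (k + 1) - (1 / 2 - θ) : ℝ) : ℂ) *
      (ee (t * ((k + 1 : ℕ) : ℝ) ^ n) - ee (t * (k : ℝ) ^ n))‖ ≤
      2 * π * n / l * (t * (M : ℝ) ^ (n - 2)) := by
    intro k hk
    have hkM : (k : ℝ) + 1 ≤ M := by exact_mod_cast mem_range.mp hk
    rw [norm_mul, Complex.norm_real, Real.norm_eq_abs]
    calc _ ≤ 1 / (l * (k + 1)) * (2 * π * (t * (n * ((k : ℝ) + 1) ^ (n - 1)))) := by
          gcongr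
          · exact abs_sawtoothSum_sub_le hl hθ k
          · exact norm_ee_mul_pow_succ_sub_le ht k
      _ = 2 * π * n / l * (t * ((k : ℝ) + 1) ^ (n - 2)) := by
          rw [show n - 1 = n - 2 + 1 by lia, pow_succ]; field_simp
      _ ≤ _ := by gcongr
  rw [twistedSawtooth_sub_eq (by lia)]
  refine norm_sub_le_of_le hboundary ((norm_sum_le_of_le _ hterm).trans_eq ?_)
  rw [sum_const, card_range, nsmul_eq_mul, show n - 1 = n - 2 + 1 by lia, pow_succ]
  ring

theorem norm_twistedSawtooth_sub_le_mul {n N : ℕ} (hn : 2 ≤ n) {t τ θ l : ℝ} (hτ : 0 < τ)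
    (hτ1 : τ ≤ 1) (hτt : τ ^ n = t) (hl : 0 < l) (hθ : θ ∈ Set.Icc l (1 - l))
    (hslope : t * n * ((N : ℝ) + 1) ^ (n - 1) ≤ l / 2) (hN : 1 / τ ≤ N) :
    ‖twistedSawtooth n t θ N - (1 / 2 - θ : ℝ)‖ ≤
      (4 / l ^ 2 + 1 / l + 2 * π * n / l * 2 ^ (n - 1)) * τ := by
  have ht : 0 ≤ t := by rw [← hτt]; positivity
  set M := ⌈1 / τ⌉₊
  have hM : 1 / τ ≤ M := Nat.le_ceil _
  have hτinv : 1 ≤ 1 / τ := (one_le_div hτ).mpr hτ1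
  have hM1 : 1 ≤ M := by exact_mod_cast hτinv.trans hM
  have hM2 : (M : ℝ) ≤ 2 / τ := by
    have := Nat.ceil_lt_add_one (zero_le_one.trans hτinv)
    rw [show 2 / τ = 1 / τ + 1 / τ by ring]
    linarith
  have hinv : (M : ℝ)⁻¹ ≤ τ := inv_le_of_inv_le₀ hτ (by rwa [← one_div])
  have hpow : t * (M : ℝ) ^ (n - 1) ≤ 2 ^ (n - 1) * τ := by
    calc _ ≤ τ ^ n * (2 / τ) ^ (n - 1) := by rw [hτt]; gcongr
      _ = 2 ^ (n - 1) * τ := by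
        rw [← pow_sub_one_mul (by lia : n ≠ 0) τ, div_pow]; field_simp
  have htail := norm_twistedSawtooth_sub_le_of_slope_le ht hl hθ hM1 (Nat.ceil_le.mpr hN) hslope
  have hhead := norm_twistedSawtooth_sub_one_half_sub_le hn ht hl hθ hM1
  calc _ ≤ _ := norm_sub_le_norm_sub_add_norm_sub _ (twistedSawtooth n t θ M) _
    _ ≤ 4 / l ^ 2 * (M : ℝ)⁻¹ + (1 / l * (M : ℝ)⁻¹ +
        2 * π * n / l * (t * (M : ℝ) ^ (n - 1))) := add_le_add htail hhead
    _ ≤ 4 / l ^ 2 * τ + (1 / l * τ + 2 * π * n / l * (2 ^ (n - 1) * τ)) := by gcongr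
    _ = _ := by ring

/-! ### The ringing profile -/

lemma ee_mul_pow_add_mul_add_neg {n : ℕ} (hne : Even n) (t x k : ℝ) :
    ee (t * k ^ n + x * k) + ee (t * (-k) ^ n + x * -k) =
      ee (t * k ^ n) * (2 * Real.cos (2 * π * (x * k)) : ℝ) := by
  rw [hne.neg_pow, mul_neg, ee_add, ee_add, ee_neg, ← mul_add, Complex.add_conj, re_ee]

lemma sin_mul_two_cos_eq_sub (γ β k : ℝ) {σ : ℝ} (hσ : σ = 1 ∨ σ = -1) :
    Real.sin (2 * π * γ * k) * (2 * Real.cos (2 * π * ((σ * γ + β) * k))) =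
      Real.sin (2 * π * (2 * γ + σ * β) * k) - Real.sin (2 * π * (σ * β) * k) := by
  have hprod := Real.two_mul_sin_mul_cos (2 * π * γ * k) (2 * π * ((σ * γ + β) * k))
  rw [mul_left_comm, ← mul_assoc, hprod, sub_eq_add_neg _ (Real.sin (2 * π * (σ * β) * k)),
    ← Real.sin_neg]
  rcases hσ with rfl | rfl
  · rw [add_comm]; congr 2 <;> ring
  · congr 2 <;> ring

lemma Upartial_eq_add_twistedSawtooth_sub {n : ℕ} (hne : Even n) (γ t β : ℝ) {σ : ℝ}
    (hσ : σ = 1 ∨ σ = -1) (K : ℕ) :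
    Upartial n γ t (σ * γ + β) K = (2 * γ : ℝ) +
      (twistedSawtooth n t (2 * γ + σ * β) (K + 1) - twistedSawtooth n t (σ * β) (K + 1)) := by
  unfold Upartial
  congr 1
  induction K with
  | zero => simp [twistedSawtooth, filter_singleton]
  | succ K ih =>
    have hset : (Icc (-((K + 1 : ℕ) : ℤ)) ((K + 1 : ℕ) : ℤ)).filter (· ≠ 0) =
        insert ((K + 1 : ℕ) : ℤ)
          (insert (-((K + 1 : ℕ) : ℤ)) ((Icc (-(K : ℤ)) (K : ℤ)).filter (· ≠ 0))) := by
      ext x; simp only [mem_filter, mem_Icc, mem_insert]; lia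
    have hcoeff : ∀ k : ℝ, Real.sin (2 * π * γ * -k) / (π * -k) =
        Real.sin (2 * π * γ * k) / (π * k) := fun k => by
      rw [mul_neg, mul_neg, Real.sin_neg, neg_div_neg_eq]
    rw [hset, sum_insert (by simp; lia), sum_insert (by simp), ih,
      twistedSawtooth_succ n t _ (K + 1), twistedSawtooth_succ n t _ (K + 1), ← add_assoc,
      add_sub_add_comm, add_comm (_ - _)]
    simp only [Int.cast_neg, Int.cast_natCast]
    rw [hcoeff, ← mul_add, ee_mul_pow_add_mul_add_neg hne, mul_left_comm, ← Complex.ofReal_mul,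
      ← mul_div_right_comm, sin_mul_two_cos_eq_sub γ β _ hσ, sub_div, Complex.ofReal_sub, mul_sub]

lemma Iint_sign_mul {n : ℕ} (s R : ℝ) {σ : ℝ} (hσ : σ = 1 ∨ σ = -1) :
    Iint n (σ * s) R = σ * Iint n s R := by
  rcases hσ with rfl | rfl
  · simp
  · simp [Iint_neg]

lemma eventually_mul_rpow_le {κ b : ℝ} (c : ℝ) (hκ : 0 < κ) (hb : 0 < b) :
    ∀ᶠ t in nhdsWithin (0 : ℝ) (Set.Ioi 0), c * t ^ κ ≤ b := by
  have htendsto : Tendsto (fun t : ℝ => c * t ^ κ) (nhds 0) (nhds 0) := by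
    simpa [Real.zero_rpow hκ.ne'] using
      ((Real.continuous_rpow_const hκ.le).const_mul c).tendsto 0
  exact (htendsto.mono_left nhdsWithin_le_nhds).eventually_le_const hb

lemma mul_natCeil_rpow_add_one_pow_le {n : ℕ} (hn : 1 ≤ n) {m t α : ℝ} (hm : 0 ≤ m)
    (ht : t ∈ Set.Ioc 0 1) (hα : 0 ≤ α) :
    t * n * ((⌈m * t ^ (-α)⌉₊ : ℝ) + 1) ^ (n - 1) ≤
      n * (m + 2) ^ (n - 1) * t ^ (1 - α * (n - 1)) := by
  obtain ⟨ht0, ht1⟩ := ht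
  have hbase : 1 ≤ t ^ (-α) :=
    Real.one_le_rpow_of_pos_of_le_one_of_nonpos ht0 ht1 (neg_nonpos.mpr hα)
  have hceil : (⌈m * t ^ (-α)⌉₊ : ℝ) + 1 ≤ (m + 2) * t ^ (-α) := by
    have := Nat.ceil_lt_add_one (show 0 ≤ m * t ^ (-α) by positivity)
    linarith
  calc _ ≤ t * n * ((m + 2) * t ^ (-α)) ^ (n - 1) := by gcongr
    _ = n * (m + 2) ^ (n - 1) * (t ^ (1 : ℝ) * (t ^ (-α)) ^ (n - 1)) := by
      rw [mul_pow, Real.rpow_one]; ring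
    _ = _ := by
      rw [← Real.rpow_mul_natCast ht0.le, ← Real.rpow_add ht0, Nat.cast_sub hn]
      ring_nf

lemma rpow_neg_sub_le_natCeil_mul {m t : ℝ} (α κ : ℝ) (hm : 1 ≤ m) (ht : 0 < t) :
    t ^ (-(α - κ)) ≤ ⌈m * t ^ (-α)⌉₊ * t ^ κ := by
  calc t ^ (-(α - κ)) = 1 * t ^ (-α) * t ^ κ := by
        rw [one_mul, ← Real.rpow_add ht]; congr 1; ring
    _ ≤ m * t ^ (-α) * t ^ κ := by gcongr
    _ ≤ _ := by gcongr; exact Nat.le_ceil _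

lemma inv_pow_le_rpow_of_rpow_neg_le {n : ℕ} (hn : n ≠ 0) {t α Y : ℝ} (ht : 0 < t)
    (hY : t ^ (-(α - (n : ℝ)⁻¹)) ≤ Y) : (Y ^ n)⁻¹ ≤ t ^ (α * n - 1) := by
  calc (Y ^ n)⁻¹ ≤ ((t ^ (-(α - (n : ℝ)⁻¹))) ^ n)⁻¹ := by gcongr
    _ = _ := by
      rw [← Real.rpow_mul_natCast ht.le, ← Real.rpow_neg ht.le]
      congr 1
      field_simp

lemma rpow_inv_le_rpow_div_two_pow_sub {n : ℕ} (hn : n ≠ 0) {t κ ε : ℝ} (ht : t ∈ Set.Ioc 0 1)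
    (hκ : κ ≤ 1) (hε : 0 ≤ ε) : t ^ ((n : ℝ)⁻¹) ≤ t ^ (κ / 2 ^ (n - 1) - ε) := by
  refine Real.rpow_le_rpow_of_exponent_ge ht.1 ht.2 ?_
  have hpow : (n : ℝ) ≤ 2 ^ (n - 1) := by
    have : n ≤ 2 ^ (n - 1) := by
      have := Nat.lt_two_pow_self (n := n - 1)
      lia
    exact_mod_cast this
  calc κ / 2 ^ (n - 1) - ε ≤ 1 / 2 ^ (n - 1) - 0 := by gcongr
    _ ≤ (n : ℝ)⁻¹ := by rw [sub_zero, ← one_div]; gcongr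

lemma norm_twistedSawtooth_sub_twistedSawtooth_sub_le {n N : ℕ} (hn : 2 ≤ n) (hne : Even n)
    {t τ γ l s : ℝ} (hτ : 0 < τ) (hτ1 : τ ≤ 1) (hτt : τ ^ n = t) (hl : 0 < l) (hlγ : l ≤ γ)
    (hγl : l ≤ 1 / 2 - γ) (hslope : t * n * ((N : ℝ) + 1) ^ (n - 1) ≤ min (1 / 32) (l / 2))
    (hs : |s * τ| ≤ min (1 / 32) l) (hN : 1 / τ ≤ N) :
    ‖(2 * γ : ℝ) + (twistedSawtooth n t (2 * γ + s * τ) N - twistedSawtooth n t (s * τ) N) -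
      (1 / 2 - ((1 / (2 * π) : ℝ) : ℂ) * Iint n s (N * τ))‖ ≤
      (4 / l ^ 2 + 1 / l + 2 * π * n / l * 2 ^ (n - 1)) * τ + 33 * |s * τ| := by
  obtain ⟨hs32, hsl⟩ := le_min_iff.mp hs
  obtain ⟨hslope32, hslopel⟩ := le_min_iff.mp hslope
  obtain ⟨hneg, hpos⟩ := abs_le.mp hsl
  have ht : 0 ≤ t := by rw [← hτt]; positivity
  have hN1 : 1 ≤ N := by exact_mod_cast ((one_le_div hτ).mpr hτ1).trans hN
  have hfar := norm_twistedSawtooth_sub_le_mul (θ := 2 * γ + s * τ) hn hτ hτ1 hτt hl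
    ⟨by linarith, by linarith⟩ hslopel hN
  have hnear := norm_twistedSawtooth_sub_Iint_le (by lia) hne ht hτt hN1 hslope32 hs32
  have hshift : ‖((s * τ : ℝ) : ℂ)‖ = |s * τ| := Complex.norm_real _
  calc _ = ‖(twistedSawtooth n t (2 * γ + s * τ) N - (1 / 2 - (2 * γ + s * τ) : ℝ)) -
        (twistedSawtooth n t (s * τ) N - ((1 / (2 * π) : ℝ) : ℂ) * Iint n s (N * τ)) -
        ((s * τ : ℝ) : ℂ)‖ := by push_cast; ring_nf
    _ ≤ _ + 32 * |s * τ| + |s * τ| :=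
      norm_sub_le_of_le (norm_sub_le_of_le hfar hnear) hshift.le
    _ = _ := by ring

theorem exists_tendsto_Upartial_norm_sub_ringing_le {n N : ℕ} (hn : 2 ≤ n) (hne : Even n)
    {t τ γ l s σ δ : ℝ} (hτ : 0 < τ) (hτ1 : τ ≤ 1) (hτt : τ ^ n = t) (hl : 0 < l) (hlγ : l ≤ γ)
    (hγl : l ≤ 1 / 2 - γ) (hslope : t * n * ((N : ℝ) + 1) ^ (n - 1) ≤ min (1 / 32) (l / 2))
    (hs : |s * τ| ≤ min (1 / 32) l) (hN : 1 / τ ≤ N) (hsN : |s| ≤ N * τ) (hσ : σ = 1 ∨ σ = -1)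
    (htail : ∀ ω, ∃ V, Tendsto (twistedSawtooth n t ω) atTop (nhds V) ∧
      ‖V - twistedSawtooth n t ω N‖ ≤ δ) :
    ∃ Is L : ℂ, Tendsto (fun R => ((1 / (2 * π) : ℝ) : ℂ) * Iint n s R) atTop (nhds Is) ∧
      Tendsto (Upartial n γ t (σ * γ + s * τ)) atTop (nhds L) ∧
      ‖L - (1 / 2 - σ * Is)‖ ≤ 2 * δ +
        ((4 / l ^ 2 + 1 / l + 2 * π * n / l * 2 ^ (n - 1)) * τ + 33 * |s * τ|) +
        ((N * τ) ^ n)⁻¹ := by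
  have hσ1 : |σ| = 1 := by rcases hσ with rfl | rfl <;> simp
  have hσs : |σ * s * τ| = |s * τ| := by rw [mul_assoc, abs_mul σ, hσ1, one_mul]
  obtain ⟨Is, hIs, hIs_tail⟩ := exists_tendsto_Iint hn hne s
  obtain ⟨V, hV, hV_tail⟩ := htail (2 * γ + σ * s * τ)
  obtain ⟨W, hW, hW_tail⟩ := htail (σ * s * τ)
  refine ⟨Is, (2 * γ : ℝ) + (V - W), hIs, ?_, ?_⟩
  · have hshift := ((hV.sub hW).comp (tendsto_add_atTop_nat 1)).const_add ((2 * γ : ℝ) : ℂ)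
    refine hshift.congr fun K => ?_
    rw [Upartial_eq_add_twistedSawtooth_sub hne γ t (s * τ) hσ, ← mul_assoc]
    rfl
  · have hJ : ‖(σ : ℂ) * Is - ((1 / (2 * π) : ℝ) : ℂ) * Iint n (σ * s) (N * τ)‖ ≤
        ((N * τ) ^ n)⁻¹ := by
      rw [Iint_sign_mul s _ hσ, mul_left_comm, ← mul_sub, norm_mul, Complex.norm_real,
        Real.norm_eq_abs, hσ1, one_mul]
      exact hIs_tail _ ((div_le_iff₀ hτ).mp hN) hsN
    have hpartial := norm_twistedSawtooth_sub_twistedSawtooth_sub_le hn hne (s := σ * s) hτ hτ1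
      hτt hl hlγ hγl hslope (hσs.trans_le hs) hN
    rw [hσs] at hpartial
    refine le_trans (le_of_eq ?_) ((norm_add_le_of_le (norm_add_le_of_le
      (norm_sub_le_of_le hV_tail hW_tail) hpartial) hJ).trans_eq (by ring))
    ring_nf

theorem exists_tendsto_Upartial_norm_sub_ringing_le_rpow {n : ℕ} (hn : 2 ≤ n) (hne : Even n)
    {t m α κ ε γ l s S σ C₀ : ℝ} (ht : t ∈ Set.Ioc 0 1) (hm : 1 ≤ m) (hκ : κ ≤ 1) (hε : 0 ≤ ε)
    (hl : 0 < l) (hlγ : l ≤ γ) (hγl : l ≤ 1 / 2 - γ)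
    (hslope : t * n * ((⌈m * t ^ (-α)⌉₊ : ℝ) + 1) ^ (n - 1) ≤ min (1 / 32) (l / 2))
    (hSτ : S * t ^ (n : ℝ)⁻¹ ≤ min (1 / 32) l)
    (hY : max 1 S ≤ ⌈m * t ^ (-α)⌉₊ * t ^ (n : ℝ)⁻¹) (hs : |s| ≤ S) (hσ : σ = 1 ∨ σ = -1)
    (hC₀ : 0 ≤ C₀) (htail : ∀ ω, ∃ V, Tendsto (twistedSawtooth n t ω) atTop (nhds V) ∧
      ‖V - twistedSawtooth n t ω ⌈m * t ^ (-α)⌉₊‖ ≤ C₀ * t ^ (κ / 2 ^ (n - 1) - ε)) :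
    ∃ Is L : ℂ, Tendsto (fun R => ((1 / (2 * π) : ℝ) : ℂ) * Iint n s R) atTop (nhds Is) ∧
      Tendsto (Upartial n γ t (σ * γ + s * t ^ (n : ℝ)⁻¹)) atTop (nhds L) ∧
      ‖L - (1 / 2 - σ * Is)‖ ≤
        (2 * C₀ + (4 / l ^ 2 + 1 / l + 2 * π * n / l * 2 ^ (n - 1) + 33 * S) + 1) *
          (t ^ (κ / 2 ^ (n - 1) - ε) + t ^ (α * n - 1)) := by
  have hτ : 0 < t ^ (n : ℝ)⁻¹ := Real.rpow_pos_of_pos ht.1 _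
  have hτ1 : t ^ (n : ℝ)⁻¹ ≤ 1 := Real.rpow_le_one ht.1.le ht.2 (by positivity)
  have hτE := rpow_inv_le_rpow_div_two_pow_sub (n := n) (by lia) ht hκ hε
  have hsτ : |s * t ^ (n : ℝ)⁻¹| ≤ S * t ^ (n : ℝ)⁻¹ := by
    rw [abs_mul, abs_of_pos hτ]; gcongr
  obtain ⟨Is, L, hIs, hL, hbound⟩ := exists_tendsto_Upartial_norm_sub_ringing_le hn hne hτ hτ1
    (Real.rpow_inv_natCast_pow ht.1.le (by lia)) hl hlγ hγl hslope (hsτ.trans hSτ)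
    ((div_le_iff₀ hτ).mpr ((le_max_left _ _).trans hY)) (hs.trans ((le_max_right _ _).trans hY))
    hσ htail
  have hYn := inv_pow_le_rpow_of_rpow_neg_le (n := n) (by lia) ht.1
    (rpow_neg_sub_le_natCeil_mul α _ hm ht.1)
  have hS : 0 ≤ S := (abs_nonneg s).trans hs
  refine ⟨Is, L, hIs, hL, hbound.trans ?_⟩
  set B := 4 / l ^ 2 + 1 / l + 2 * π * n / l * 2 ^ (n - 1)
  set E := t ^ (κ / 2 ^ (n - 1) - ε)
  have hE : 0 ≤ E := hτ.le.trans hτE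
  have hF : 0 ≤ t ^ (α * n - 1) := Real.rpow_nonneg ht.1.le _
  calc _ ≤ 2 * (C₀ * E) + (B * E + 33 * (S * E)) + t ^ (α * n - 1) := by
        gcongr
        exact hsτ.trans (by gcongr)
    _ = (2 * C₀ + (B + 33 * S)) * E + t ^ (α * n - 1) := by ring
    _ ≤ (2 * C₀ + (B + 33 * S)) * (E + t ^ (α * n - 1)) + (E + t ^ (α * n - 1)) := by
        gcongr
        · exact le_add_of_nonneg_right hF
        · exact le_add_of_nonneg_left hE
    _ = _ := by ring

lemma eventually_mul_natCeil_rpow_add_one_pow_le {n : ℕ} (hn : 2 ≤ n) {m α b : ℝ} (hm : 0 ≤ m)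
    (hα : 0 ≤ α) (hαn : α < ((n : ℝ) - 1)⁻¹) (hb : 0 < b) :
    ∀ᶠ t in nhdsWithin (0 : ℝ) (Set.Ioi 0),
      t * n * ((⌈m * t ^ (-α)⌉₊ : ℝ) + 1) ^ (n - 1) ≤ b := by
  have hn1 : (0 : ℝ) < n - 1 := by
    have : (2 : ℝ) ≤ n := by exact_mod_cast hn
    linarith
  have hexp : 0 < 1 - α * (n - 1) := by
    rw [← one_div, lt_div_iff₀ hn1] at hαn
    linarith
  filter_upwards [Ioc_mem_nhdsGT one_pos,
    eventually_mul_rpow_le (n * (m + 2) ^ (n - 1)) hexp hb] with t ht hsmall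
  exact (mul_natCeil_rpow_add_one_pow_le (by lia) hm ht hα).trans hsmall

lemma eventually_le_natCeil_mul_rpow {m α κ : ℝ} (S : ℝ) (hm : 1 ≤ m) (hκα : κ < α) :
    ∀ᶠ t in nhdsWithin (0 : ℝ) (Set.Ioi 0), S ≤ ⌈m * t ^ (-α)⌉₊ * t ^ κ := by
  filter_upwards [self_mem_nhdsWithin, eventually_mul_rpow_le S (sub_pos.mpr hκα) one_pos]
    with t ht hsmall
  rw [Set.mem_Ioi] at ht
  refine le_trans ?_ (rpow_neg_sub_le_natCeil_mul α κ hm ht)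
  rwa [Real.rpow_neg ht.le, ← one_div, le_div_iff₀ (by positivity)]

theorem stmt12_general (n : ℕ) (hn : 2 ≤ n) (hne : Even n) (Δ : ℝ) (hΔ0 : 0 < Δ) (hΔ1 : Δ ≤ 1)
    (γ : ℝ) (hγ : γ ∈ Set.Ioo (0 : ℝ) (1 / 2)) (m : ℤ) (hm : 1 ≤ m) (α : ℝ)
    (hα1 : (n : ℝ)⁻¹ < α) (hα2 : α < ((n : ℝ) - 1)⁻¹) (ε : ℝ) (hε : 0 < ε) (S : ℝ) (hS : 0 < S) :
    ∃ C > (0 : ℝ), ∃ t₁ > (0 : ℝ), ∀ t ∈ Set.Ioc (0 : ℝ) t₁,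
      (t ∈ Bset n Δ m α ∨ ∃ u q : ℤ, 1 ≤ q ∧ Int.gcd u q = 1 ∧ t = (u : ℝ) / (q : ℝ) ∧
        t ≤ (m : ℝ) * (q : ℝ) ^ (-(1 / (α * ((n : ℝ) - Δ))))) →
      ∀ s ∈ Set.Icc (-S) S, ∀ σ : ℝ, (σ = 1 ∨ σ = -1) →
        ∃ Is L : ℂ,
          Tendsto (fun R : ℝ => Complex.ofReal (1 / (2 * π)) * Iint n s R) atTop (nhds Is) ∧
          Tendsto (Upartial n γ t (σ * γ + s * t ^ ((n : ℝ)⁻¹))) atTop (nhds L) ∧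
          ‖L - (1 / 2 - Complex.ofReal σ * Is)‖ ≤
            C * (t ^ (α * Δ / 2 ^ (n - 1) - ε) + t ^ (α * n - 1)) := by
  have hm1 : (1 : ℝ) ≤ m := by exact_mod_cast hm
  have hn2 : (2 : ℝ) ≤ n := by exact_mod_cast hn
  have hn0 : 0 < (n : ℝ)⁻¹ := by positivity
  have hα0 : 0 < α := hn0.trans hα1
  have hαle : α ≤ 1 := hα2.le.trans (inv_le_one_of_one_le₀ (by linarith))
  obtain ⟨l, hl, hlγ, hγl⟩ : ∃ l > 0, l ≤ γ ∧ l ≤ 1 / 2 - γ :=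
    ⟨min γ (1 / 2 - γ), lt_min hγ.1 (sub_pos.mpr hγ.2), min_le_left _ _, min_le_right _ _⟩
  obtain ⟨C₀, hC₀, htail⟩ :=
    exists_tendsto_twistedSawtooth_norm_sub_le hn hne hΔ0 hΔ1 hm hα0 hαle hε
  obtain ⟨t₁, ht₁, hsmall⟩ := mem_nhdsGT_iff_exists_Ioc_subset.mp
    (inter_mem (Ioc_mem_nhdsGT one_pos) ((eventually_mul_natCeil_rpow_add_one_pow_le hn
      (zero_le_one.trans hm1) hα0.le hα2 (b := min (1 / 32) (l / 2)) (by positivity)).and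
      ((eventually_mul_rpow_le S hn0 (b := min (1 / 32) l) (by positivity)).and
        (eventually_le_natCeil_mul_rpow (max 1 S) hm1 hα1))))
  refine ⟨2 * C₀ + (4 / l ^ 2 + 1 / l + 2 * π * n / l * 2 ^ (n - 1) + 33 * S) + 1, by positivity,
    t₁, ht₁, fun t ht hcase s hs σ hσ => ?_⟩
  obtain ⟨ht01, hslope, hSτ, hY⟩ := hsmall ht
  exact exists_tendsto_Upartial_norm_sub_ringing_le_rpow hn hne ht01 hm1
    (mul_le_one₀ hαle hΔ0.le hΔ1) hε.le hl hlγ hγl hslope hSτ hY (abs_le.mpr hs) hσ hC₀.le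
    (htail t ht01 hcase)

/-- `n` even: the ringing profile. With `I(s) = (1/2π)·lim_{R→∞}∫_{−R}^R
e(y^n)sin(2πsy)dy/y`, for admissible `t → 0⁺` and `s ∈ [−S,S]`, `σ = ±1`,
`U(t, σγ + s·t^{1/n}) = 1/2 − σ·I(s) + O(t^{αΔ/2^{n−1}−ε} + t^{αn−1})`. -/
theorem stmt12 (n : ℕ) (hn : 2 ≤ n) (hne : Even n) (Δ : ℝ) (hΔ0 : 0 < Δ) (hΔ1 : Δ < 1)
    (hΔ2 : n = 2 → Δ < 1 / 2) (γ : ℝ) (hγ : γ ∈ Set.Ioo (0 : ℝ) (1 / 2))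
    (m : ℤ) (hm : 2 ≤ m) (α : ℝ) (hα1 : ((n : ℝ) - Δ)⁻¹ < α) (hα2 : α < ((n : ℝ) - 1)⁻¹)
    (ε : ℝ) (hε : 0 < ε) (S : ℝ) (hS : 0 < S) :
    ∃ C > (0 : ℝ), ∃ t₁ > (0 : ℝ), ∀ t ∈ Set.Ioc (0 : ℝ) t₁,
      ((Irrational t ∧ t ∈ Bset n Δ m α) ∨
        (∃ u q : ℤ, 1 ≤ q ∧ Int.gcd u q = 1 ∧ t = (u : ℝ) / (q : ℝ) ∧
          t ≤ (m : ℝ) * (q : ℝ) ^ (-(1 / (α * ((n : ℝ) - Δ)))))) →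
      ∀ s ∈ Set.Icc (-S) S, ∀ σ : ℝ, (σ = 1 ∨ σ = -1) →
        ∃ Is L : ℂ,
          Tendsto (fun R : ℝ => Complex.ofReal (1 / (2 * Real.pi)) * Iint n s R)
            atTop (nhds Is) ∧
          Tendsto (fun K : ℕ => Upartial n γ t (σ * γ + s * t ^ ((n : ℝ)⁻¹)) K)
            atTop (nhds L) ∧
          ‖L - (1 / 2 - Complex.ofReal σ * Is)‖ ≤
            C * (t ^ (α * Δ / 2 ^ (n - 1) - ε) + t ^ (α * n - 1)) := by
  have hΔn : Δ < n := hΔ1.trans_le (by exact_mod_cast one_le_two.trans hn)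
  obtain ⟨C, hC, t₁, ht₁, hmain⟩ := stmt12_general n hn hne Δ hΔ0 hΔ1.le γ hγ m (by lia) α
    ((inv_anti₀ (sub_pos.mpr hΔn) (sub_le_self _ hΔ0.le)).trans_lt hα1) hα2 ε hε S hS
  exact ⟨C, hC, t₁, ht₁, fun t ht hcase => hmain t ht (hcase.imp_left And.right)⟩
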